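/- Let Φ be an irreducible, reduced, crystallographic, simply-laced root system spanning an N-dimensional real inner product space V, with the inner product (·|·) normalized so that (α|α) = 2 for every α ∈ Φ. Let M be a Coxeter element of the Weyl group of Φ (the product, in some order, of the reflections in the simple roots of a base of Φ, each occurring exactly once), let h be the order of M (the Coxeter number), and let η = exp(2πi/h). Then Σ_{α∈Φ} Π_{k=1}^{h−1} (1 − η^k)^{(α | M^k α)} = N·h·(h+1)/12, where the exponents (α | M^k α) are integers and integer powers of the nonzero complex numbers 1 − η^k are taken in ℂ. -/

import Mathlib

/-!
The sum `∑ α ∈ Φ, ∏ k, (1 - η ^ k) ^ (α | M ^ k α)` depends only on the Gram matrix of the roots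
and on the conjugacy class of `M`, so it can be evaluated type by type once the Dynkin diagram is
known.

*Reduction to a normal form.*  The simple roots form a connected graph (`⟪δ, γ⟫ = -1` being an
edge), and positivity of the inner product, tested on explicit integer combinations, leaves only
the graphs `Aₙ`, `Dₙ`, `E₆`, `E₇`, `E₈`: a path, or a path with one further vertex attached
(`IsRootBase.classification`).  Since the graph is a forest, any two orderings of the simple roots
are related by swaps of adjacent orthogonal letters and by cyclic rotations
(`IsForestWord.coxEq`).  Swaps do not change the Coxeter element, and rotations conjugate it by a
simple reflection, which permutes `Φ`; hence one ordering suffices (`CoxEq.kwSum_iff`).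

*Reduction to orbit representatives.*  Let `M` be the product along a word `δ₁ ⋯ δ_N`, with
`M ^ H = 1`.  A Coxeter element has no nonzero fixed vector, so the heights in an `M`-orbit of
roots sum to zero and every orbit passes from a negative root `γ` to a positive root `M γ`.  The
sign then changes at one simple reflection of the word, so `M γ` is one of the roots
`β_i = s₁ ⋯ s_{i-1} δ_i`.  When the inner products `⟪β_i, M ^ k β_j⟫` take the value `2` only for
`i = j` and `k = 0` modulo `H`, the roots are exactly the `M ^ k β_i` with `k < H`, each once, the
order of `M` is `H`, and the sum is `H` times the sum over the `β_i`
(`IsRootBase.exists_orbit`, `IsRootBase.kwSum_of_gram`).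

*Evaluation.*  In types `A` and `D` the roots and the action of `M` on them are written down for
all ranks, and the products become sums such as `∑ j, 1 / (1 - ζ ^ j)`, which have closed forms.
In types `E₆`, `E₇`, `E₈` the integers `⟪β_i, M ^ k β_i⟫` come from a finite computation in
coordinates (`checkAll`); pairing the factors at `k` and `H - k` turns every product into a
rational function of `c = η + η⁻¹`, which is reduced modulo the minimal polynomial of `c`.
-/

open Finset RealInnerProductSpace

variable {V : Type*} [NormedAddCommGroup V] [InnerProductSpace ℝ V]

/-- The reflection in a root `δ` of squared length `2`:
`x ↦ x - ⟪x, δ⟫ • δ` (for `⟪δ, δ⟫ = 2` this is the orthogonal reflection in `δ`). -/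
noncomputable def rootReflection (δ : V) : V →ₗ[ℝ] V where
  toFun x := x - ⟪x, δ⟫ • δ
  map_add' x y := by
    simp only [inner_add_left, add_smul]
    abel
  map_smul' t x := by
    simp only [real_inner_smul_left, RingHom.id_apply, smul_sub, smul_smul]

set_option linter.unusedSectionVars false

/-! ### Reflections, the base and its Dynkin graph -/

/-- A finite simply-laced irreducible root system `Φ` (all roots of squared length `2`) together
with a base `Δ`. -/
structure IsRootBase [DecidableEq V] (Φ Δ : Finset V) : Prop where
  norm : ∀ α ∈ Φ, ⟪α, α⟫ = (2 : ℝ)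
  crys : ∀ α ∈ Φ, ∀ β ∈ Φ, ∃ n : ℤ, ⟪α, β⟫ = (n : ℝ)
  refl : ∀ α ∈ Φ, ∀ β ∈ Φ, rootReflection α β ∈ Φ
  irr : ∀ Φ₁ Φ₂ : Finset V, Φ₁ ∪ Φ₂ = Φ →
      (∀ α ∈ Φ₁, ∀ β ∈ Φ₂, ⟪α, β⟫ = (0 : ℝ)) → Φ₁ = ∅ ∨ Φ₂ = ∅
  sub : Δ ⊆ Φ
  ind : LinearIndependent ℝ (fun x : (Δ : Set V) => (x : V))
  span : Submodule.span ℝ (Δ : Set V) = ⊤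
  base : ∀ α ∈ Φ, ∃ c : V → ℤ,
      α = ∑ δ ∈ Δ, (c δ : ℝ) • δ ∧ ((∀ δ ∈ Δ, 0 ≤ c δ) ∨ (∀ δ ∈ Δ, c δ ≤ 0))

lemma rootReflection_apply (δ x : V) : rootReflection δ x = x - ⟪x, δ⟫ • δ := rfl

lemma rootReflection_inner {δ : V} (hδ : ⟪δ, δ⟫ = (2 : ℝ)) (x y : V) :
    ⟪rootReflection δ x, rootReflection δ y⟫ = ⟪x, y⟫ := by
  simp only [rootReflection_apply, inner_sub_left, inner_sub_right, real_inner_smul_left,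
    real_inner_smul_right, hδ, real_inner_comm y δ]
  ring

lemma rootReflection_invol {δ : V} (hδ : ⟪δ, δ⟫ = (2 : ℝ)) (x : V) :
    rootReflection δ (rootReflection δ x) = x := by
  simp only [rootReflection_apply, inner_sub_left, real_inner_smul_left, hδ]
  module

lemma rootReflection_mul_self {δ : V} (hδ : ⟪δ, δ⟫ = (2 : ℝ)) :
    rootReflection δ * rootReflection δ = (1 : V →ₗ[ℝ] V) :=
  LinearMap.ext fun x => rootReflection_invol hδ x

lemma rootReflection_comm {a b : V} (hab : ⟪a, b⟫ = (0 : ℝ)) :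
    rootReflection a * rootReflection b = (rootReflection b * rootReflection a : V →ₗ[ℝ] V) := by
  ext x
  have hba : ⟪b, a⟫ = (0 : ℝ) := by rw [real_inner_comm]; exact hab
  simp only [Module.End.mul_apply, rootReflection_apply, inner_sub_left, real_inner_smul_left,
    hab, hba]
  module

/-- A linearly independent finite set admits, for arbitrary prescribed values, a vector whose
inner products with its elements are these values. -/
lemma exists_dual [FiniteDimensional ℝ V] {Δ : Finset V}
    (hind : LinearIndependent ℝ (fun x : (Δ : Set V) => (x : V))) (f : V → ℝ) :
    ∃ x : V, ∀ δ ∈ Δ, ⟪x, δ⟫ = f δ := by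
  obtain ⟨g, hg⟩ : ∃ g : V →ₗ[ℝ] ℝ, ∀ δ ∈ Δ, g δ = f δ := by
    have hind' : LinearIndepOn ℝ id (Δ : Set V) := hind
    refine ⟨(Module.Basis.extend hind').constr ℝ (fun y => f y), fun δ hδ => ?_⟩
    have h1 := (Module.Basis.extend hind').constr_basis ℝ
      (fun y => f y) ⟨δ, Module.Basis.subset_extend hind' hδ⟩
    rwa [Module.Basis.extend_apply_self] at h1
  have : CompleteSpace V := FiniteDimensional.complete ℝ V
  refine ⟨(InnerProductSpace.toDual ℝ V).symm (LinearMap.toContinuousLinearMap g), fun δ hδ => ?_⟩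
  rw [InnerProductSpace.toDual_symm_apply]
  exact hg δ hδ

namespace IsRootBase

variable [DecidableEq V] {Φ Δ : Finset V}

lemma norm_Δ (R : IsRootBase Φ Δ) {δ : V} (hδ : δ ∈ Δ) : ⟪δ, δ⟫ = (2 : ℝ) := R.norm δ (R.sub hδ)

variable [FiniteDimensional ℝ V]

/-- The vectors dual to the base: `⟪w δ, ·⟫` reads off the coefficient at `δ`. -/
lemma exists_coweights (R : IsRootBase Φ Δ) :
    ∃ w : V → V, ∀ δ ∈ Δ, ∀ γ ∈ Δ, ⟪w δ, γ⟫ = if γ = δ then (1 : ℝ) else 0 := by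
  choose w hw using fun δ : V => exists_dual R.ind (fun γ => if γ = δ then (1 : ℝ) else 0)
  exact ⟨w, fun δ _ γ hγ => hw δ γ hγ⟩

lemma coef_sum {w : V → V} (hw : ∀ δ ∈ Δ, ∀ γ ∈ Δ, ⟪w δ, γ⟫ = if γ = δ then (1 : ℝ) else 0)
    (c : V → ℝ) {δ : V} (hδ : δ ∈ Δ) : ⟪w δ, ∑ γ ∈ Δ, c γ • γ⟫ = c δ := by
  rw [inner_sum, Finset.sum_eq_single δ]
  · rw [real_inner_smul_right, hw δ hδ δ hδ]; simp
  · intro b hb hne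
    rw [real_inner_smul_right, hw δ hδ b hb]; simp [hne]
  · exact fun h => absurd hδ h

/-- Distinct simple roots have inner product `0` or `-1`. -/
lemma inner_Δ (R : IsRootBase Φ Δ) {δ γ : V} (hδ : δ ∈ Δ) (hγ : γ ∈ Δ) (hne : δ ≠ γ) :
    ⟪δ, γ⟫ = (0 : ℝ) ∨ ⟪δ, γ⟫ = (-1 : ℝ) := by
  obtain ⟨w, hw⟩ := R.exists_coweights
  obtain ⟨n, hn⟩ := R.crys δ (R.sub hδ) γ (R.sub hγ)
  have h1 : n ≤ 0 := by
    obtain ⟨c, hc, hs⟩ := R.base _ (R.refl γ (R.sub hγ) δ (R.sub hδ))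
    have e1 := coef_sum hw (fun x => (c x : ℝ)) hδ
    have e2 := coef_sum hw (fun x => (c x : ℝ)) hγ
    rw [← hc, rootReflection_apply, inner_sub_right, real_inner_smul_right, hw _ hδ _ hδ,
      hw _ hδ _ hγ] at e1
    rw [← hc, rootReflection_apply, inner_sub_right, real_inner_smul_right, hw _ hγ _ hδ,
      hw _ hγ _ hγ, hn] at e2
    simp only [hne, hne.symm, if_true, if_false] at e1 e2
    have e1' : c δ = 1 := by
      have : ((c δ : ℤ) : ℝ) = 1 := by linarith
      exact_mod_cast this
    have e2' : c γ = -n := by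
      have : ((c γ : ℤ) : ℝ) = ((-n : ℤ) : ℝ) := by push_cast; linarith
      exact_mod_cast this
    rcases hs with hs | hs
    · have := hs γ hγ; omega
    · have := hs δ hδ; omega
  have h2 : -2 < n := by
    have hne0 : δ + γ ≠ 0 := by
      intro h0
      have : ⟪w δ, δ + γ⟫ = (1 : ℝ) := by
        rw [inner_add_right, hw _ hδ _ hδ, hw _ hδ _ hγ]; simp [hne.symm]
      rw [h0, inner_zero_right] at this
      norm_num at this
    have hp : (0 : ℝ) < ⟪δ + γ, δ + γ⟫ := real_inner_self_pos.2 hne0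
    rw [inner_add_left, inner_add_right, inner_add_right, R.norm_Δ hδ, R.norm_Δ hγ,
      real_inner_comm δ γ, hn] at hp
    have : (-2 : ℝ) < n := by linarith
    exact_mod_cast this
  have h3 : n = 0 ∨ n = -1 := by omega
  rcases h3 with h3 | h3
  · left; rw [hn, h3]; simp
  · right; rw [hn, h3]; simp

/-- The root lattice is even. -/
lemma even_norm (R : IsRootBase Φ Δ) (c : V → ℤ) (S : Finset V) (hS : S ⊆ Δ) :
    ∃ n : ℤ, ⟪∑ δ ∈ S, (c δ : ℝ) • δ, ∑ δ ∈ S, (c δ : ℝ) • δ⟫ = 2 * (n : ℝ) := by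
  induction S using Finset.induction_on with
  | empty => exact ⟨0, by simp⟩
  | insert a S ha ih =>
    obtain ⟨n, hn⟩ := ih (fun x hx => hS (mem_insert_of_mem hx))
    have haΔ : a ∈ Δ := hS (mem_insert_self a S)
    have : ∃ k : ℤ, ⟪a, ∑ δ ∈ S, (c δ : ℝ) • δ⟫ = (k : ℝ) := by
      have h1 : ∀ δ : V, ∃ k : ℤ, δ ∈ S → ⟪a, δ⟫ = (k : ℝ) := by
        intro δ
        by_cases hδ : δ ∈ S
        · obtain ⟨k, hk⟩ := R.crys a (R.sub haΔ) δ (R.sub (hS (mem_insert_of_mem hδ)))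
          exact ⟨k, fun _ => hk⟩
        · exact ⟨0, fun h => absurd h hδ⟩
      choose k hk using h1
      refine ⟨∑ δ ∈ S, c δ * k δ, ?_⟩
      rw [inner_sum]
      push_cast
      refine Finset.sum_congr rfl fun δ hδ => ?_
      rw [real_inner_smul_right, hk δ hδ]
    obtain ⟨k, hk⟩ := this
    refine ⟨c a * c a + c a * k + n, ?_⟩
    rw [Finset.sum_insert ha, inner_add_left, inner_add_right, inner_add_right, hn,
      real_inner_smul_left, real_inner_smul_left, real_inner_smul_right, real_inner_smul_right,
      R.norm_Δ haΔ, real_inner_comm a, hk]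
    push_cast
    ring

/-- The Dynkin graph of an irreducible root system is connected. -/
lemma connected (R : IsRootBase Φ Δ) (S : Finset V) (hS : S ⊆ Δ)
    (horth : ∀ a ∈ S, ∀ b ∈ Δ \ S, ⟪a, b⟫ = (0 : ℝ)) : S = ∅ ∨ S = Δ := by
  classical
  obtain ⟨w, hw⟩ := R.exists_coweights
  set T := Δ \ S with hT
  have hTΔ : T ⊆ Δ := sdiff_subset
  have hdisj : Disjoint S T := disjoint_sdiff
  have hST : S ∪ T = Δ := union_sdiff_of_subset hS
  have horth' : ∀ c d : V → ℝ, ⟪∑ δ ∈ S, c δ • δ, ∑ δ ∈ T, d δ • δ⟫ = (0 : ℝ) := by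
    intro c d
    rw [sum_inner]
    refine Finset.sum_eq_zero fun a ha => ?_
    rw [inner_sum]
    refine Finset.sum_eq_zero fun b hb => ?_
    rw [real_inner_smul_left, real_inner_smul_right, horth a ha b hb]; simp
  have hsplit : ∀ c : V → ℝ, ∑ δ ∈ Δ, c δ • δ = ∑ δ ∈ S, c δ • δ + ∑ δ ∈ T, c δ • δ := by
    intro c; rw [← hST, Finset.sum_union hdisj]
  -- `⟪w δ, α⟫` vanishes for `δ` outside the support of `α`
  have hcoef : ∀ α ∈ Φ, ∃ c : V → ℝ, α = ∑ δ ∈ S, c δ • δ + ∑ δ ∈ T, c δ • δ ∧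
      (∀ δ ∈ Δ, ⟪w δ, α⟫ = c δ) ∧ (∑ δ ∈ S, c δ • δ = 0 ∨ ∑ δ ∈ T, c δ • δ = 0) := by
    intro α hα
    obtain ⟨c, hc, -⟩ := R.base α hα
    refine ⟨fun δ => c δ, by rw [← hsplit]; exact hc, fun δ hδ => ?_, ?_⟩
    · conv_lhs => rw [hc]
      exact coef_sum hw (fun x => (c x : ℝ)) hδ
    · obtain ⟨n1, hn1⟩ := R.even_norm c S hS
      obtain ⟨n2, hn2⟩ := R.even_norm c T hTΔ
      have h2 := R.norm α hα
      rw [hc, hsplit, inner_add_left, inner_add_right, inner_add_right, hn1, hn2,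
        real_inner_comm (∑ δ ∈ S, (c δ : ℝ) • δ), horth' (fun δ => c δ) (fun δ => c δ)] at h2
      have p1 : (0 : ℝ) ≤ 2 * n1 := hn1 ▸ real_inner_self_nonneg
      have p2 : (0 : ℝ) ≤ 2 * n2 := hn2 ▸ real_inner_self_nonneg
      have p1' : 0 ≤ n1 := by
        have : (0 : ℝ) ≤ n1 := by linarith
        exact_mod_cast this
      have p2' : 0 ≤ n2 := by
        have : (0 : ℝ) ≤ n2 := by linarith
        exact_mod_cast this
      have h3 : n1 + n2 = 1 := by
        have : ((n1 + n2 : ℤ) : ℝ) = 1 := by push_cast; linarith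
        exact_mod_cast this
      rcases (by omega : n1 = 0 ∨ n2 = 0) with h | h
      · left; rw [← inner_self_eq_zero (𝕜 := ℝ), hn1, h]; simp
      · right; rw [← inner_self_eq_zero (𝕜 := ℝ), hn2, h]; simp
  have hw0 : ∀ (c : V → ℝ) (U : Finset V), U ⊆ Δ → ∀ δ ∈ Δ, δ ∉ U →
      ⟪w δ, ∑ γ ∈ U, c γ • γ⟫ = (0 : ℝ) := by
    intro c U hU δ hδ hδU
    rw [inner_sum]
    refine Finset.sum_eq_zero fun b hb => ?_
    rw [real_inner_smul_right, hw δ hδ b (hU hb), if_neg, mul_zero]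
    rintro rfl; exact hδU hb
  have key := R.irr (Φ.filter fun α => ∀ δ ∈ T, ⟪w δ, α⟫ = (0 : ℝ))
    (Φ.filter fun α => ∀ δ ∈ S, ⟪w δ, α⟫ = (0 : ℝ)) ?_ ?_
  · rcases key with key | key
    · left
      rw [Finset.eq_empty_iff_forall_notMem]
      intro δ hδ
      have : δ ∈ (Φ.filter fun α => ∀ δ ∈ T, ⟪w δ, α⟫ = (0 : ℝ)) := by
        refine mem_filter.2 ⟨R.sub (hS hδ), fun γ hγ => ?_⟩
        rw [hw γ (hTΔ hγ) δ (hS hδ), if_neg]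
        rintro rfl; exact (mem_sdiff.1 hγ).2 hδ
      rw [key] at this
      exact absurd this (notMem_empty _)
    · right
      have hTe : T = ∅ := by
        rw [Finset.eq_empty_iff_forall_notMem]
        intro δ hδ
        have : δ ∈ (Φ.filter fun α => ∀ δ ∈ S, ⟪w δ, α⟫ = (0 : ℝ)) := by
          refine mem_filter.2 ⟨R.sub (hTΔ hδ), fun γ hγ => ?_⟩
          rw [hw γ (hS hγ) δ (hTΔ hδ), if_neg]
          rintro rfl; exact (mem_sdiff.1 hδ).2 hγ
        rw [key] at this
        exact absurd this (notMem_empty _)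
      rw [← hST, hTe, union_empty]
  · ext α
    simp only [mem_union, mem_filter, ← and_or_left, and_iff_left_iff_imp]
    intro hα
    obtain ⟨c, hc, -, h0⟩ := hcoef α hα
    rcases h0 with h0 | h0
    · right; intro δ hδ
      rw [hc, h0, zero_add]
      exact hw0 c T hTΔ δ (hS hδ) fun h => (mem_sdiff.1 h).2 hδ
    · left; intro δ hδ
      rw [hc, h0, add_zero]
      exact hw0 c S hS δ (hTΔ hδ) (mem_sdiff.1 hδ).2
  · intro α hα β hβ
    obtain ⟨hα, hα0⟩ := mem_filter.1 hα
    obtain ⟨hβ, hβ0⟩ := mem_filter.1 hβ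
    obtain ⟨c, hc, hcw, -⟩ := hcoef α hα
    obtain ⟨d, hd, hdw, -⟩ := hcoef β hβ
    have e1 : ∑ δ ∈ T, c δ • δ = 0 :=
      Finset.sum_eq_zero fun δ hδ => by rw [← hcw δ (hTΔ hδ), hα0 δ hδ, zero_smul]
    have e2 : ∑ δ ∈ S, d δ • δ = 0 :=
      Finset.sum_eq_zero fun δ hδ => by rw [← hdw δ (hS hδ), hβ0 δ hδ, zero_smul]
    rw [hc, hd, e1, e2, add_zero, zero_add, horth']

/-- The sum of the fundamental coweights: a vector `x` with `⟪x, δ⟫ = 1` for all simple `δ`. -/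
lemma exists_rho (R : IsRootBase Φ Δ) : ∃ x : V, ∀ δ ∈ Δ, ⟪x, δ⟫ = (1 : ℝ) :=
  exists_dual R.ind fun _ => 1

/-- The height `⟪x, ·⟫` of a root does not vanish, and its sign decides that of all
coefficients. -/
lemma height_cases (R : IsRootBase Φ Δ) {x : V} (hx : ∀ δ ∈ Δ, ⟪x, δ⟫ = (1 : ℝ)) {α : V}
    (hα : α ∈ Φ) : ∃ c : V → ℤ, α = ∑ δ ∈ Δ, (c δ : ℝ) • δ ∧
      ((0 < ⟪x, α⟫ ∧ ∀ δ ∈ Δ, 0 ≤ c δ) ∨ (⟪x, α⟫ < 0 ∧ ∀ δ ∈ Δ, c δ ≤ 0)) := by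
  obtain ⟨c, hc, hs⟩ := R.base α hα
  refine ⟨c, hc, ?_⟩
  have hht : ⟪x, α⟫ = ((∑ δ ∈ Δ, c δ : ℤ) : ℝ) := by
    rw [hc, inner_sum]; push_cast
    exact Finset.sum_congr rfl fun δ hδ => by rw [real_inner_smul_right, hx δ hδ, mul_one]
  have hne : ¬ ∀ δ ∈ Δ, c δ = 0 := by
    intro h0
    have : α = 0 := by
      rw [hc]; exact Finset.sum_eq_zero fun δ hδ => by rw [h0 δ hδ]; simp
    have h2 := R.norm α hα
    rw [this, inner_zero_left] at h2
    norm_num at h2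
  rw [hht]
  rcases hs with hs | hs
  · left
    refine ⟨?_, hs⟩
    have : ∑ δ ∈ Δ, c δ ≠ 0 := fun h => hne ((Finset.sum_eq_zero_iff_of_nonneg hs).1 h)
    have h3 := Finset.sum_nonneg hs
    exact_mod_cast lt_of_le_of_ne h3 this.symm
  · right
    refine ⟨?_, hs⟩
    have : ∑ δ ∈ Δ, c δ ≠ 0 := fun h => hne ((Finset.sum_eq_zero_iff_of_nonpos hs).1 h)
    have h3 := Finset.sum_nonpos hs
    exact_mod_cast lt_of_le_of_ne h3 this

/-- A simple reflection changes the sign of no positive root other than its own. -/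
lemma eq_of_height_flip (R : IsRootBase Φ Δ) {x : V} (hx : ∀ δ ∈ Δ, ⟪x, δ⟫ = (1 : ℝ)) {α δ : V}
    (hα : α ∈ Φ) (hδ : δ ∈ Δ) (hp : 0 < ⟪x, α⟫) (hn : ⟪x, rootReflection δ α⟫ < 0) : α = δ := by
  obtain ⟨w, hw⟩ := R.exists_coweights
  obtain ⟨c, hc, hcs⟩ := R.height_cases hx hα
  obtain ⟨d, hd, hds⟩ := R.height_cases hx (R.refl δ (R.sub hδ) α hα)
  have hcs' : ∀ γ ∈ Δ, 0 ≤ c γ := by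
    rcases hcs with h | h
    · exact h.2
    · linarith [h.1]
  have hds' : ∀ γ ∈ Δ, d γ ≤ 0 := by
    rcases hds with h | h
    · linarith [h.1]
    · exact h.2
  have h0 : ∀ γ ∈ Δ, γ ≠ δ → c γ = 0 := by
    intro γ hγ hne
    have e1 := coef_sum hw (fun y => (c y : ℝ)) hγ
    have e2 := coef_sum hw (fun y => (d y : ℝ)) hγ
    rw [← hc] at e1
    rw [← hd, rootReflection_apply, inner_sub_right, real_inner_smul_right, hw γ hγ δ hδ,
      if_neg hne.symm, e1] at e2
    have : c γ = d γ := by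
      have : (c γ : ℝ) = d γ := by linarith
      exact_mod_cast this
    have h1 := hcs' γ hγ
    have h2 := hds' γ hγ
    omega
  have hα' : α = (c δ : ℝ) • δ := by
    rw [hc, Finset.sum_eq_single δ]
    · intro b hb hne; rw [h0 b hb hne]; simp
    · exact fun h => absurd hδ h
  have h2 := R.norm α hα
  rw [hα', real_inner_smul_left, real_inner_smul_right, R.norm_Δ hδ] at h2
  have h3 : c δ * c δ = 1 := by
    have : ((c δ * c δ : ℤ) : ℝ) = 1 := by push_cast; linarith
    exact_mod_cast this
  have h4 : c δ = 1 := by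
    have := hcs' δ hδ
    nlinarith
  rw [hα', h4]; simp

lemma prod_inner (R : IsRootBase Φ Δ) (l : List V) (hl : ∀ δ ∈ l, δ ∈ Δ) (x y : V) :
    ⟪(l.map rootReflection).prod x, (l.map rootReflection).prod y⟫ = ⟪x, y⟫ := by
  induction l with
  | nil => simp
  | cons a l ih =>
    simp only [List.map_cons, List.prod_cons, Module.End.mul_apply]
    rw [rootReflection_inner (R.norm_Δ (hl a List.mem_cons_self)),
      ih fun δ h => hl δ (List.mem_cons_of_mem a h)]

lemma prod_mem (R : IsRootBase Φ Δ) (l : List V) (hl : ∀ δ ∈ l, δ ∈ Δ) {x : V} (hx : x ∈ Φ) :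
    (l.map rootReflection).prod x ∈ Φ := by
  induction l with
  | nil => simpa using hx
  | cons a l ih =>
    simp only [List.map_cons, List.prod_cons, Module.End.mul_apply]
    exact R.refl a (R.sub (hl a List.mem_cons_self)) _
      (ih fun δ h => hl δ (List.mem_cons_of_mem a h))

end IsRootBase

/-! ### Classification of the Dynkin graphs -/

/-- `p 0, …, p (m - 1)` is an induced path in the Dynkin graph on `Δ`. -/
structure IsPath (Δ : Finset V) (p : ℕ → V) (m : ℕ) : Prop where
  mem : ∀ i < m, p i ∈ Δ
  inner : ∀ i < m, ∀ j < m,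
    ⟪p i, p j⟫ = if i = j then (2 : ℝ) else if i + 1 = j ∨ j + 1 = i then -1 else 0

/-- The Gram matrix of a path (indices `1, 2, …`) with one further vertex (index `0`) attached
to the path vertex of index `t + 1`. -/
def treeGram (t i j : ℕ) : ℤ :=
  if i = j then 2
  else if i = 0 then (if j = t + 1 then -1 else 0)
  else if j = 0 then (if i = t + 1 then -1 else 0)
  else if i + 1 = j ∨ j + 1 = i then -1 else 0

/-- The vertices of such a tree, in the indexing of `treeGram`. -/
def treeVec (v : V) (p : ℕ → V) (i : ℕ) : V := if i = 0 then v else p (i - 1)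

lemma inner_sum_gram (w w' : ℕ → V) (k k' : ℕ) (c c' : ℕ → ℤ) (G : ℕ → ℕ → ℤ)
    (hG : ∀ i < k, ∀ j < k', ⟪w i, w' j⟫ = (G i j : ℝ)) :
    ⟪∑ i ∈ range k, (c i : ℝ) • w i, ∑ j ∈ range k', (c' j : ℝ) • w' j⟫ =
      ((∑ i ∈ range k, ∑ j ∈ range k', c i * c' j * G i j : ℤ) : ℝ) := by
  rw [sum_inner]
  push_cast
  refine Finset.sum_congr rfl fun i hi => ?_
  rw [inner_sum]
  refine Finset.sum_congr rfl fun j hj => ?_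
  rw [real_inner_smul_left, real_inner_smul_right, hG i (mem_range.1 hi) j (mem_range.1 hj)]
  ring

namespace IsPath

variable {Δ : Finset V} {p : ℕ → V} {m : ℕ}

lemma injOn (hp : IsPath Δ p m) {i j : ℕ} (hi : i < m) (hj : j < m) (h : p i = p j) : i = j := by
  by_contra hne
  have h1 := hp.inner i hi j hj
  rw [← h, hp.inner i hi i hi, if_pos rfl, if_neg hne] at h1
  split_ifs at h1 <;> norm_num at h1

lemma reverse (hp : IsPath Δ p m) : IsPath Δ (fun i => p (m - 1 - i)) m where
  mem i hi := hp.mem _ (by omega)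
  inner i hi j hj := by
    rw [hp.inner _ (by omega) _ (by omega)]
    refine if_congr (by omega) rfl (if_congr (by omega) rfl rfl)

lemma shift (hp : IsPath Δ p m) (u k : ℕ) (h : u + k ≤ m) : IsPath Δ (fun i => p (u + i)) k where
  mem i hi := hp.mem _ (by omega)
  inner i hi j hj := by
    rw [hp.inner _ (by omega) _ (by omega)]
    refine if_congr (by omega) rfl (if_congr (by omega) rfl rfl)

lemma tree_inner (hp : IsPath Δ p m) {v : V} {t : ℕ} (hv2 : ⟪v, v⟫ = (2 : ℝ))
    (hv : ∀ i < m, ⟪v, p i⟫ = if i = t then (-1 : ℝ) else 0) :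
    ∀ i < m + 1, ∀ j < m + 1, ⟪treeVec v p i, treeVec v p j⟫ = (treeGram t i j : ℝ) := by
  intro i hi j hj
  rcases Nat.eq_zero_or_pos i with rfl | hi0
  · rcases Nat.eq_zero_or_pos j with rfl | hj0
    · simpa [treeVec, treeGram] using hv2
    · simp only [treeVec, treeGram, if_true, hj0.ne', hj0.ne, if_false]
      rw [hv _ (by omega)]
      by_cases h : j = t + 1
      · rw [if_pos (by omega), if_pos h]; simp
      · rw [if_neg (by omega), if_neg h]; simp
  · rcases Nat.eq_zero_or_pos j with rfl | hj0
    · simp only [treeVec, treeGram, if_true, hi0.ne', if_false]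
      rw [real_inner_comm, hv _ (by omega)]
      by_cases h : i = t + 1
      · rw [if_pos (by omega), if_pos h]; simp
      · rw [if_neg (by omega), if_neg h]; simp
    · simp only [treeVec, treeGram, hi0.ne', hj0.ne', if_false]
      rw [hp.inner _ (by omega) _ (by omega)]
      by_cases h : i = j
      · rw [if_pos (by omega), if_pos h]; simp
      · rw [if_neg (by omega), if_neg h]
        by_cases h' : i + 1 = j ∨ j + 1 = i
        · rw [if_pos (by omega), if_pos h']; simp
        · rw [if_neg (by omega), if_neg h']; simp

lemma cons (hp : IsPath Δ p m) {v : V} (hvΔ : v ∈ Δ) (hv2 : ⟪v, v⟫ = (2 : ℝ))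
    (hv : ∀ i < m, ⟪v, p i⟫ = if i = 0 then (-1 : ℝ) else 0) :
    IsPath Δ (treeVec v p) (m + 1) where
  mem i hi := by
    unfold treeVec; split_ifs with h
    · exact hvΔ
    · exact hp.mem _ (by omega)
  inner i hi j hj := by
    rw [hp.tree_inner hv2 hv i hi j hj]
    unfold treeGram
    split_ifs <;> first | omega | norm_num

lemma inner_sum_right (hp : IsPath Δ p m) {a b j : ℕ} (hab : a < b) (hbj : b ≤ j) (hj : j < m) :
    ⟪∑ i ∈ Ico a b, p i, p j⟫ = if j = b then (-1 : ℝ) else 0 := by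
  obtain ⟨b, rfl⟩ : ∃ b', b = b' + 1 := ⟨b - 1, by omega⟩
  rw [Finset.sum_Ico_succ_top (by omega), inner_add_left, sum_inner, Finset.sum_eq_zero, zero_add,
    hp.inner _ (by omega) _ hj, if_neg (by omega)]
  · exact if_congr (by omega) rfl rfl
  · intro i hi
    rw [mem_Ico] at hi
    rw [hp.inner _ (by omega) _ hj, if_neg (by omega), if_neg (by omega)]

lemma norm_sum (hp : IsPath Δ p m) {a b : ℕ} (hab : a < b) (hb : b ≤ m) :
    ⟪∑ i ∈ Ico a b, p i, ∑ i ∈ Ico a b, p i⟫ = (2 : ℝ) := by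
  induction b, hab using Nat.le_induction with
  | base => simpa using hp.inner a (by omega) a (by omega)
  | succ b hab ih =>
    rw [Finset.sum_Ico_succ_top (by omega), inner_add_left, inner_add_right, inner_add_right,
      ih (by omega), real_inner_comm (∑ i ∈ Ico a b, p i),
      hp.inner_sum_right hab le_rfl (by omega), if_pos rfl,
      hp.inner b (by omega) b (by omega), if_pos rfl]
    norm_num

lemma inner_sum_left (hp : IsPath Δ p m) {a b : ℕ} (hab : a + 1 < b) (hb : b ≤ m) :
    ⟪p a, ∑ i ∈ Ico (a + 1) b, p i⟫ = (-1 : ℝ) := by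
  have h1 := hp.norm_sum (a := a) (b := b) (by omega) hb
  rw [Finset.sum_eq_sum_Ico_succ_bot (by omega), inner_add_left, inner_add_right, inner_add_right,
    hp.norm_sum hab hb, hp.inner a (by omega) a (by omega), if_pos rfl,
    real_inner_comm (p a)] at h1
  linarith

variable [DecidableEq V] [FiniteDimensional ℝ V] {Φ : Finset V}

/-- A vector of positive height has positive squared length. -/
lemma pos_of_height {x y : V} (h : 0 < ⟪x, y⟫) : (0 : ℝ) < ⟪y, y⟫ := by
  rw [real_inner_self_pos]
  rintro rfl
  simp at h

/-- The Dynkin graph contains no cycle. -/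
lemma no_cycle (hp : IsPath Δ p m) (R : IsRootBase Φ Δ) {v : V} (hvΔ : v ∈ Δ)
    (hv : ∀ i < m, v ≠ p i) {t t' : ℕ} (ht : t < m) (ht' : t' < m) (hne : t ≠ t')
    (h1 : ⟪v, p t⟫ = (-1 : ℝ)) (h2 : ⟪v, p t'⟫ = (-1 : ℝ)) : False := by
  obtain ⟨x, hx⟩ := R.exists_rho
  have hpos : (0 : ℝ) < ⟪v + ∑ i ∈ Ico 0 m, p i, v + ∑ i ∈ Ico 0 m, p i⟫ := by
    refine pos_of_height (x := x) ?_
    rw [inner_add_right, hx v hvΔ, inner_sum,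
      Finset.sum_congr rfl fun i hi => hx (p i) (hp.mem i (mem_Ico.1 hi).2)]
    simp only [sum_const, Nat.card_Ico, nsmul_eq_mul]
    positivity
  have hle : ⟪v, ∑ i ∈ Ico 0 m, p i⟫ ≤ (-2 : ℝ) := by
    rw [inner_sum]
    have h3 : ∑ i ∈ Ico 0 m, ⟪v, p i⟫ ≤ ∑ i ∈ ({t, t'} : Finset ℕ), ⟪v, p i⟫ := by
      have := Finset.sum_le_sum_of_subset_of_nonneg (s := ({t, t'} : Finset ℕ)) (t := Ico 0 m)
        (f := fun i => -⟪v, p i⟫) ?_ ?_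
      · simpa using this
      · intro i hi
        simp only [mem_insert, mem_singleton] at hi
        rw [mem_Ico]; omega
      · intro i hi _
        have hi' := (mem_Ico.1 hi).2
        rcases R.inner_Δ hvΔ (hp.mem i hi') (hv i hi') with h | h <;> rw [h] <;> norm_num
    rw [Finset.sum_pair hne, h1, h2] at h3
    linarith
  rw [inner_add_left, inner_add_right, inner_add_right, hp.norm_sum (by omega) le_rfl,
    R.norm_Δ hvΔ, real_inner_comm v] at hpos
  linarith

/-- A vertex attached to a path is attached to exactly one of its vertices. -/
lemma inner_of_attached (hp : IsPath Δ p m) (R : IsRootBase Φ Δ) {v : V} (hvΔ : v ∈ Δ)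
    (hv : ∀ i < m, v ≠ p i) {t : ℕ} (ht : t < m) (h1 : ⟪v, p t⟫ = (-1 : ℝ)) :
    ∀ i < m, ⟪v, p i⟫ = if i = t then (-1 : ℝ) else 0 := by
  intro i hi
  split_ifs with h
  · rw [h, h1]
  · rcases R.inner_Δ hvΔ (hp.mem i hi) (hv i hi) with h' | h'
    · exact h'
    · exact (hp.no_cycle R hvΔ hv ht hi (Ne.symm h) h1 h').elim

/-- No two further vertices are attached to interior vertices of a path: this would be an affine
graph of type `D`. -/
lemma no_two_branches (hp : IsPath Δ p m) (R : IsRootBase Φ Δ) {v v' : V} (hvΔ : v ∈ Δ)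
    (hvΔ' : v' ∈ Δ) (hvv : v ≠ v') (hv : ∀ i < m, v ≠ p i) (hv' : ∀ i < m, v' ≠ p i) {t t' : ℕ}
    (ht0 : 0 < t) (htt : t ≤ t') (htm : t' + 1 < m) (h1 : ⟪v, p t⟫ = (-1 : ℝ))
    (h2 : ⟪v', p t'⟫ = (-1 : ℝ)) : False := by
  obtain ⟨x, hx⟩ := R.exists_rho
  have e1 := hp.inner_of_attached R hvΔ hv (by omega) h1
  have e2 := hp.inner_of_attached R hvΔ' hv' (by omega) h2
  obtain ⟨s, rfl⟩ : ∃ s, t = s + 1 := ⟨t - 1, by omega⟩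
  set P := ∑ i ∈ Ico (s + 1) (t' + 1), p i with hP
  have hPx : 0 ≤ ⟪x, P⟫ := by
    rw [hP, inner_sum]
    refine Finset.sum_nonneg fun i hi => ?_
    rw [hx _ (hp.mem i (by rw [mem_Ico] at hi; omega))]; norm_num
  have hPP : ⟪P, P⟫ = (2 : ℝ) := hp.norm_sum (by omega) (by omega)
  have ha : ⟪p s, P⟫ = (-1 : ℝ) := hp.inner_sum_left (by omega) (by omega)
  have hb : ⟪P, p (t' + 1)⟫ = (-1 : ℝ) := by
    rw [hP, hp.inner_sum_right (by omega) le_rfl (by omega), if_pos rfl]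
  have hc : ⟪v, P⟫ = (-1 : ℝ) := by
    rw [hP, inner_sum, Finset.sum_eq_single (s + 1), h1]
    · intro i hi hne
      rw [mem_Ico] at hi
      rw [e1 i (by omega), if_neg hne]
    · intro h; exact absurd (mem_Ico.2 ⟨le_rfl, by omega⟩) h
  have hd : ⟪v', P⟫ = (-1 : ℝ) := by
    rw [hP, inner_sum, Finset.sum_eq_single t', h2]
    · intro i hi hne
      rw [mem_Ico] at hi
      rw [e2 i (by omega), if_neg hne]
    · intro h; exact absurd (mem_Ico.2 ⟨by omega, by omega⟩) h
  have hab : ⟪p s, p (t' + 1)⟫ = (0 : ℝ) := by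
    rw [hp.inner _ (by omega) _ (by omega), if_neg (by omega), if_neg (by omega)]
  have haa : ⟪p s, p s⟫ = (2 : ℝ) := R.norm_Δ (hp.mem _ (by omega))
  have hbb : ⟪p (t' + 1), p (t' + 1)⟫ = (2 : ℝ) := R.norm_Δ (hp.mem _ (by omega))
  have hva : ⟪v, p s⟫ = (0 : ℝ) := by rw [e1 _ (by omega), if_neg (by omega)]
  have hvb : ⟪v, p (t' + 1)⟫ = (0 : ℝ) := by rw [e1 _ (by omega), if_neg (by omega)]
  have hva' : ⟪v', p s⟫ = (0 : ℝ) := by rw [e2 _ (by omega), if_neg (by omega)]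
  have hvb' : ⟪v', p (t' + 1)⟫ = (0 : ℝ) := by rw [e2 _ (by omega), if_neg (by omega)]
  have hvv' : ⟪v, v'⟫ ≤ (0 : ℝ) := by
    rcases R.inner_Δ hvΔ hvΔ' hvv with h | h <;> rw [h] <;> norm_num
  have hpos : (0 : ℝ) < ⟪p s + p (t' + 1) + v + v' + (2 : ℝ) • P,
      p s + p (t' + 1) + v + v' + (2 : ℝ) • P⟫ := by
    refine pos_of_height (x := x) ?_
    simp only [inner_add_right, real_inner_smul_right, hx _ hvΔ, hx _ hvΔ',
      hx _ (hp.mem s (by omega)), hx _ (hp.mem (t' + 1) (by omega))]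
    linarith
  simp only [inner_add_left, inner_add_right, real_inner_smul_left, real_inner_smul_right,
    real_inner_comm (p s) P, real_inner_comm P (p (t' + 1)), real_inner_comm v P,
    real_inner_comm v' P, real_inner_comm (p s) (p (t' + 1)), real_inner_comm v (p s),
    real_inner_comm v' (p s), real_inner_comm v (p (t' + 1)), real_inner_comm v' (p (t' + 1)),
    real_inner_comm v v', hPP, ha, hb, hc, hd, hab, haa, hbb, hva, hvb, hva', hvb',
    R.norm_Δ hvΔ, R.norm_Δ hvΔ'] at hpos
  linarith

lemma height_tree (hp : IsPath Δ p m) {x v : V} (hx : ∀ δ ∈ Δ, ⟪x, δ⟫ = (1 : ℝ)) (hvΔ : v ∈ Δ)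
    (c : ℕ → ℤ) : ⟪x, ∑ i ∈ range (m + 1), (c i : ℝ) • treeVec v p i⟫ =
      ((∑ i ∈ range (m + 1), c i : ℤ) : ℝ) := by
  rw [inner_sum]
  push_cast
  refine Finset.sum_congr rfl fun i hi => ?_
  rw [mem_range] at hi
  rw [real_inner_smul_right, hx, mul_one]
  unfold treeVec; split_ifs with h
  · exact hvΔ
  · exact hp.mem _ (by omega)

/-- A tree with an isotropic nonnegative vector does not occur. -/
lemma no_tree (hp : IsPath Δ p m) (R : IsRootBase Φ Δ) {v : V} (hvΔ : v ∈ Δ) {t : ℕ}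
    (hv : ∀ i < m, ⟪v, p i⟫ = if i = t then (-1 : ℝ) else 0) (c : ℕ → ℤ)
    (hc : 0 < ∑ i ∈ range (m + 1), c i)
    (h0 : ∑ i ∈ range (m + 1), ∑ j ∈ range (m + 1), c i * c j * treeGram t i j = 0) : False := by
  obtain ⟨x, hx⟩ := R.exists_rho
  have h1 := inner_sum_gram _ _ _ _ c c _ (hp.tree_inner (R.norm_Δ hvΔ) hv)
  rw [h0] at h1
  have h2 := pos_of_height (x := x) (y := ∑ i ∈ range (m + 1), (c i : ℝ) • treeVec v p i)
    (by rw [hp.height_tree hx hvΔ c]; exact_mod_cast hc)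
  rw [h1] at h2
  simp at h2

/-- The affine graph of type `E₆` does not occur. -/
lemma no_affine_E6 (hp : IsPath Δ p m) (R : IsRootBase Φ Δ) {v b : V} (hvΔ : v ∈ Δ) (hbΔ : b ∈ Δ)
    (hm : m = 5) (hv : ∀ i < m, ⟪v, p i⟫ = if i = 2 then (-1 : ℝ) else 0)
    (hb : ∀ i < m, ⟪b, p i⟫ = (0 : ℝ)) (hbv : ⟪b, v⟫ = (-1 : ℝ)) : False := by
  obtain ⟨x, hx⟩ := R.exists_rho
  subst hm
  set c : ℕ → ℤ := fun i => [2, 1, 2, 3, 2, 1].getD i 0 with hc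
  have h1 := inner_sum_gram _ _ _ _ c c _ (hp.tree_inner (R.norm_Δ hvΔ) hv)
  rw [show (∑ i ∈ range (5 + 1), ∑ j ∈ range (5 + 1), c i * c j * treeGram 2 i j) = 2 by
    decide] at h1
  have h3 := hp.height_tree hx hvΔ c
  rw [show (∑ i ∈ range (5 + 1), c i) = 11 by decide] at h3
  set Y := ∑ i ∈ range (5 + 1), (c i : ℝ) • treeVec v p i with hY
  have h2 : ⟪b, Y⟫ = (-2 : ℝ) := by
    rw [hY, inner_sum, Finset.sum_range_succ', Finset.sum_eq_zero]
    · simp [hc, treeVec, real_inner_smul_right, hbv]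
    · intro i hi
      rw [mem_range] at hi
      rw [real_inner_smul_right, treeVec, if_neg (by omega), Nat.add_sub_cancel, hb i hi, mul_zero]
  have h4 := pos_of_height (x := x) (y := Y + b) (by
    rw [inner_add_right, h3, hx b hbΔ]; norm_num)
  rw [inner_add_left, inner_add_right, inner_add_right, h1, real_inner_comm b, h2,
    R.norm_Δ hbΔ] at h4
  norm_num at h4

lemma attached_pos (hp : IsPath Δ p m) (hmax : ∀ q k, IsPath Δ q k → k ≤ m) (R : IsRootBase Φ Δ)
    {v : V} (hvΔ : v ∈ Δ) (hv : ∀ i < m, v ≠ p i) {t : ℕ} (ht : t < m)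
    (h1 : ⟪v, p t⟫ = (-1 : ℝ)) : 0 < t := by
  rw [Nat.pos_iff_ne_zero]
  rintro rfl
  have := hmax _ _ (hp.cons hvΔ (R.norm_Δ hvΔ) (hp.inner_of_attached R hvΔ hv ht h1))
  omega

lemma attached_interior (hp : IsPath Δ p m) (hmax : ∀ q k, IsPath Δ q k → k ≤ m)
    (R : IsRootBase Φ Δ) {v : V} (hvΔ : v ∈ Δ) (hv : ∀ i < m, v ≠ p i) {t : ℕ} (ht : t < m)
    (h1 : ⟪v, p t⟫ = (-1 : ℝ)) : 0 < t ∧ t + 1 < m := by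
  refine ⟨hp.attached_pos hmax R hvΔ hv ht h1, ?_⟩
  have := hp.reverse.attached_pos hmax R hvΔ (fun i hi => hv _ (by omega)) (t := m - 1 - t)
    (by omega) (by rwa [show m - 1 - (m - 1 - t) = t by omega])
  omega

/-- The Dynkin graph, once a longest path and a vertex attached to it in its first half are
chosen. -/
lemma branch_cases (hp : IsPath Δ p m) (hmax : ∀ q k, IsPath Δ q k → k ≤ m)
    (R : IsRootBase Φ Δ) {v : V} (hvΔ : v ∈ Δ) (hv : ∀ i < m, v ≠ p i) {t : ℕ} (ht : t < m)
    (h1 : ⟪v, p t⟫ = (-1 : ℝ)) (htm : 2 * t + 1 ≤ m) :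
    Δ = insert v ((range m).image p) ∧ (∀ i < m, ⟪v, p i⟫ = if i = t then (-1 : ℝ) else 0) ∧
      ((t = 1 ∧ 3 ≤ m) ∨ (t = 2 ∧ (m = 5 ∨ m = 6 ∨ m = 7))) := by
  have e1 := hp.inner_of_attached R hvΔ hv ht h1
  obtain ⟨ht0, htm'⟩ := hp.attached_interior hmax R hvΔ hv ht h1
  refine ⟨?_, e1, ?_⟩
  · by_contra hne
    have hsub : insert v ((range m).image p) ⊆ Δ := by
      intro y hy
      rcases mem_insert.1 hy with rfl | hy
      · exact hvΔ
      · obtain ⟨i, hi, rfl⟩ := mem_image.1 hy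
        exact hp.mem i (mem_range.1 hi)
    have hconn := mt (R.connected _ hsub) (by
      rintro (h | h)
      · exact (insert_ne_empty _ _) h
      · exact hne h.symm)
    push Not at hconn
    obtain ⟨a, ha, b, hb, hab⟩ := hconn
    obtain ⟨hbΔ, hbS⟩ := mem_sdiff.1 hb
    have hbv : b ≠ v := fun h => hbS (h ▸ mem_insert_self _ _)
    have hbp : ∀ i < m, b ≠ p i := fun i hi h =>
      hbS (mem_insert_of_mem (mem_image.2 ⟨i, mem_range.2 hi, h.symm⟩))
    have hpath : ∀ i < m, ⟪b, p i⟫ = (0 : ℝ) := by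
      intro i hi
      rcases R.inner_Δ hbΔ (hp.mem i hi) (hbp i hi) with h | h
      · exact h
      · exfalso
        obtain ⟨hi0, him⟩ := hp.attached_interior hmax R hbΔ hbp hi h
        rcases le_total t i with hti | hti
        · exact hp.no_two_branches R hvΔ hbΔ hbv.symm hv hbp ht0 hti him h1 h
        · exact hp.no_two_branches R hbΔ hvΔ hbv hbp hv hi0 hti htm' h h1
    have hbv' : ⟪b, v⟫ = (-1 : ℝ) := by
      rcases mem_insert.1 ha with rfl | ha
      · rcases R.inner_Δ hbΔ hvΔ hbv with h | h
        · rw [real_inner_comm] at h; exact absurd h hab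
        · exact h
      · obtain ⟨i, hi, rfl⟩ := mem_image.1 ha
        rw [real_inner_comm, hpath i (mem_range.1 hi)] at hab
        exact absurd rfl hab
    rcases (by omega : t = 1 ∨ 2 ≤ t) with rfl | ht2
    · -- `b, v, p 1, p 2, …` is a longer path
      have q1 := hp.shift 1 (m - 1) (by omega)
      have q2 := q1.cons hvΔ (R.norm_Δ hvΔ) (by
        intro i hi
        rw [e1 _ (by omega)]
        exact if_congr (by omega) rfl rfl)
      have q3 := q2.cons hbΔ (R.norm_Δ hbΔ) (by
        intro i hi
        unfold treeVec
        split_ifs with h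
        · exact hbv'
        · exact hpath _ (by omega))
      have := hmax _ _ q3
      omega
    · refine (hp.shift (t - 2) 5 (by omega)).no_affine_E6 R hvΔ hbΔ rfl ?_ ?_ hbv'
      · intro i hi
        rw [e1 _ (by omega)]
        exact if_congr (by omega) rfl rfl
      · intro i hi
        exact hpath _ (by omega)
  · by_contra hcon
    rcases (by omega : 3 ≤ t ∨ (t = 2 ∧ 8 ≤ m)) with h3 | ⟨rfl, h8⟩
    · refine (hp.shift (t - 3) 7 (by omega)).no_tree R hvΔ (t := 3) ?_
        (fun i => [2, 1, 2, 3, 4, 3, 2, 1].getD i 0) (by decide) (by decide)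
      intro i hi
      rw [e1 _ (by omega)]
      exact if_congr (by omega) rfl rfl
    · refine (hp.shift 0 8 (by omega)).no_tree R hvΔ (t := 2) ?_
        (fun i => [3, 2, 4, 6, 5, 4, 3, 2, 1].getD i 0) (by decide) (by decide)
      intro i hi
      rw [e1 _ (by omega)]
      exact if_congr (by omega) rfl rfl

end IsPath

/-- Classification: the Dynkin graph is a path, or a path with one further vertex attached to its
second vertex, or a path of `5`, `6` or `7` vertices with a further vertex attached to its third
vertex. -/
theorem IsRootBase.classification [DecidableEq V] [FiniteDimensional ℝ V] {Φ Δ : Finset V}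
    (R : IsRootBase Φ Δ) (hne : Δ.Nonempty) :
    ∃ (p : ℕ → V) (m : ℕ), 0 < m ∧ IsPath Δ p m ∧ (Δ = (range m).image p ∨
      ∃ (v : V) (t : ℕ), v ∈ Δ ∧ (∀ i < m, v ≠ p i) ∧ Δ = insert v ((range m).image p) ∧
        (∀ i < m, ⟪v, p i⟫ = if i = t then (-1 : ℝ) else 0) ∧
        ((t = 1 ∧ 3 ≤ m) ∨ (t = 2 ∧ (m = 5 ∨ m = 6 ∨ m = 7)))) := by
  classical
  have hbd : ∀ q k, IsPath Δ q k → k ≤ Δ.card := by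
    intro q k hq
    have h1 : ((range k).image q).card = k := by
      rw [Finset.card_image_of_injOn, card_range]
      intro i hi j hj h
      simp only [coe_range, Set.mem_Iio] at hi hj
      exact hq.injOn hi hj h
    rw [← h1]
    refine card_le_card fun y hy => ?_
    obtain ⟨i, hi, rfl⟩ := mem_image.1 hy
    exact hq.mem i (mem_range.1 hi)
  obtain ⟨δ, hδ⟩ := hne
  have h1path : IsPath Δ (fun _ => δ) 1 :=
    ⟨fun i hi => hδ, fun i hi j hj => by rw [if_pos (by omega), R.norm_Δ hδ]⟩
  set m := Nat.findGreatest (fun k => ∃ q, IsPath Δ q k) Δ.card with hm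
  obtain ⟨p, hp⟩ : ∃ q, IsPath Δ q m :=
    Nat.findGreatest_spec (P := fun k => ∃ q, IsPath Δ q k) (hbd _ _ h1path) ⟨_, h1path⟩
  have hmax : ∀ q k, IsPath Δ q k → k ≤ m := fun q k hq =>
    Nat.le_findGreatest (hbd _ _ hq) ⟨q, hq⟩
  have hm0 : 0 < m := hmax _ _ h1path
  by_cases hΔ : Δ = (range m).image p
  · exact ⟨p, m, hm0, hp, Or.inl hΔ⟩
  have hsub : (range m).image p ⊆ Δ := by
    intro y hy
    obtain ⟨i, hi, rfl⟩ := mem_image.1 hy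
    exact hp.mem i (mem_range.1 hi)
  have hconn := mt (R.connected _ hsub) (by
    rintro (h | h)
    · have : p 0 ∈ (range m).image p := mem_image_of_mem p (mem_range.2 hm0)
      rw [h] at this
      exact absurd this (notMem_empty _)
    · exact hΔ h.symm)
  push Not at hconn
  obtain ⟨a, ha, v, hb, hab⟩ := hconn
  obtain ⟨hvΔ, hvS⟩ := mem_sdiff.1 hb
  obtain ⟨t, ht, rfl⟩ := mem_image.1 ha
  rw [mem_range] at ht
  have hv : ∀ i < m, v ≠ p i := fun i hi h =>
    hvS (mem_image.2 ⟨i, mem_range.2 hi, h.symm⟩)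
  have h1 : ⟪v, p t⟫ = (-1 : ℝ) := by
    rcases R.inner_Δ hvΔ (hp.mem t ht) (hv t ht) with h | h
    · rw [real_inner_comm] at h; exact absurd h hab
    · exact h
  by_cases htm : 2 * t + 1 ≤ m
  · obtain ⟨c1, c2, c3⟩ := hp.branch_cases hmax R hvΔ hv ht h1 htm
    exact ⟨p, m, hm0, hp, Or.inr ⟨v, t, hvΔ, hv, c1, c2, c3⟩⟩
  · have hv' : ∀ i < m, v ≠ p (m - 1 - i) := fun i hi => hv _ (by omega)
    obtain ⟨c1, c2, c3⟩ := hp.reverse.branch_cases hmax R hvΔ hv' (t := m - 1 - t) (by omega)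
      (by rwa [show m - 1 - (m - 1 - t) = t by omega]) (by omega)
    exact ⟨_, m, hm0, hp.reverse, Or.inr ⟨v, m - 1 - t, hvΔ, hv', c1, c2, c3⟩⟩

/-! ### Independence of the order of the simple reflections -/

/-- The equivalence of words generated by commuting two orthogonal leading letters and by cyclic
rotation; equivalent words in simple roots have conjugate products of reflections. -/
inductive CoxEq : List V → List V → Prop
  | refl (l) : CoxEq l l
  | symm {l l'} : CoxEq l l' → CoxEq l' l
  | trans {l l' l''} : CoxEq l l' → CoxEq l' l'' → CoxEq l l''
  | swap (a b l) : ⟪a, b⟫ = (0 : ℝ) → CoxEq (a :: b :: l) (b :: a :: l)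
  | rot (a l) : CoxEq (a :: l) (l ++ [a])

namespace CoxEq

lemma perm {l l' : List V} (h : CoxEq l l') : l.Perm l' := by
  induction h with
  | refl l => exact .refl l
  | symm _ ih => exact ih.symm
  | trans _ _ ih1 ih2 => exact ih1.trans ih2
  | swap a b l _ => exact .swap b a l
  | rot a l => exact (List.perm_append_singleton a l).symm

lemma rotate (l l' : List V) : CoxEq (l ++ l') (l' ++ l) := by
  induction l generalizing l' with
  | nil => simpa using refl l'
  | cons a l ih =>
    have h1 := rot a (l ++ l')
    have h2 := ih (l' ++ [a])
    simp only [List.append_assoc, List.cons_append, List.nil_append] at h1 h2 ⊢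
    exact h1.trans h2

lemma swap_mid {a b : V} (hab : ⟪a, b⟫ = (0 : ℝ)) (l l' : List V) :
    CoxEq (l ++ a :: b :: l') (l ++ b :: a :: l') :=
  (rotate l (a :: b :: l')).trans (((swap a b (l' ++ l) hab)).trans (rotate (b :: a :: l') l))

/-- A letter moves past a word of letters orthogonal to it. -/
lemma move {v : V} (t l : List V) (ht : ∀ x ∈ t, ⟪v, x⟫ = (0 : ℝ)) (l₀ : List V) :
    CoxEq (l₀ ++ v :: (t ++ l)) (l₀ ++ (t ++ v :: l)) := by
  induction t generalizing l₀ with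
  | nil => exact refl _
  | cons a t ih =>
    have h1 := swap_mid (ht a List.mem_cons_self) l₀ (t ++ l)
    have h2 := ih (fun x hx => ht x (List.mem_cons_of_mem a hx)) (l₀ ++ [a])
    simp only [List.append_assoc, List.cons_append, List.nil_append] at h1 h2 ⊢
    exact h1.trans h2

/-- An equivalence of words lifts after prefixing a letter that is orthogonal to all letters
but at most one. -/
lemma cons_of_leaf {v u : V} {q q' : List V} (h : CoxEq q q') (hq : q.Nodup)
    (hv : ∀ x ∈ q, x ≠ u → ⟪v, x⟫ = (0 : ℝ)) : CoxEq (v :: q) (v :: q') := by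
  induction h with
  | refl l => exact refl _
  | symm h ih =>
    exact (ih (h.perm.nodup_iff.2 hq) fun x hx => hv x (h.perm.mem_iff.1 hx)).symm
  | trans h1 _ ih1 ih2 =>
    exact (ih1 hq hv).trans
      (ih2 (h1.perm.nodup_iff.1 hq) fun x hx => hv x (h1.perm.mem_iff.2 hx))
  | swap a b l hab => exact swap_mid hab [v] l
  | rot a t =>
    have ha := (List.nodup_cons.1 hq).1
    by_cases hau : a = u
    · have ht : ∀ x ∈ t, ⟪v, x⟫ = (0 : ℝ) := fun x hx =>
        hv x (List.mem_cons_of_mem a hx) (by rintro rfl; exact ha (hau ▸ hx))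
      -- `v a t ~ a t v ~ a v t ~ v t a`
      have h1 := rot v (a :: t)
      have h2 := (move (v := v) t [] ht [a]).symm
      have h3 := rot a (v :: t)
      simp only [List.cons_append, List.nil_append, List.append_nil] at h1 h2 h3
      exact h1.trans (h2.trans h3)
    · exact (swap v a t (hv a List.mem_cons_self hau)).trans (rot a (v :: t))

end CoxEq

/-- Every letter is orthogonal to all but at most one of the later letters. -/
def IsForestWord : List V → Prop
  | [] => True
  | v :: r => (∃ u, ∀ x ∈ r, x ≠ u → ⟪v, x⟫ = (0 : ℝ)) ∧ IsForestWord r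

lemma IsForestWord.coxEq {r : List V} (hr : IsForestWord r) (hnd : r.Nodup) {l : List V}
    (hl : l.Perm r) : CoxEq l r := by
  induction r generalizing l with
  | nil => rw [hl.eq_nil]; exact .refl _
  | cons v r ih =>
    obtain ⟨⟨u, hu⟩, hr⟩ := hr
    obtain ⟨l1, l2, rfl⟩ := List.append_of_mem (hl.symm.subset List.mem_cons_self)
    have hp : (l2 ++ l1).Perm r := by
      have h1 : (v :: (l2 ++ l1)).Perm (v :: r) :=
        (List.perm_append_comm (l₁ := v :: l2) (l₂ := l1)).trans hl
      exact h1.cons_inv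
    have hnd' := (List.nodup_cons.1 hnd).2
    have h2 := (ih hr hnd' hp).cons_of_leaf (v := v) (u := u) (hp.nodup_iff.2 hnd')
      fun x hx => hu x (hp.mem_iff.1 hx)
    exact (CoxEq.rotate l1 (v :: l2)).trans h2

/-- The asserted identity for a transformation `M` of the root system `Φ`. -/
def KWSum (Φ : Finset V) (N : ℕ) (M : V →ₗ[ℝ] V) : Prop :=
  ∀ n : V → ℕ → ℤ, (∀ α ∈ Φ, ∀ k : ℕ, (n α k : ℝ) = ⟪α, (M ^ k) α⟫) →
    ∑ α ∈ Φ, ∏ k ∈ Finset.Icc 1 (orderOf M - 1),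
      ((1 : ℂ) - Complex.exp (2 * Real.pi * Complex.I / orderOf M) ^ k) ^ (n α k)
      = (N : ℂ) * orderOf M * (orderOf M + 1) / 12

section

variable [DecidableEq V] [FiniteDimensional ℝ V] {Φ Δ : Finset V}

lemma KWSum.conj (R : IsRootBase Φ Δ) {N : ℕ} {δ : V} (hδ : δ ∈ Δ) {M M' : V →ₗ[ℝ] V}
    (hM : M' = rootReflection δ * M * rootReflection δ) (h : KWSum Φ N M) : KWSum Φ N M' := by
  set s := rootReflection δ with hs
  have hss : s * s = 1 := rootReflection_mul_self (R.norm_Δ hδ)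
  have hssx : ∀ x, s (s x) = x := rootReflection_invol (R.norm_Δ hδ)
  have hpow : ∀ k, M' ^ k = s * M ^ k * s := by
    intro k
    induction k with
    | zero => simp [hss]
    | succ k ih =>
      rw [pow_succ, ih, hM, pow_succ]
      calc s * M ^ k * s * (s * M * s) = s * M ^ k * (s * s) * M * s := by simp only [mul_assoc]
        _ = _ := by rw [hss, mul_one]; simp only [mul_assoc]
  have hord : orderOf M' = orderOf M := by
    rw [orderOf_eq_orderOf_iff]
    intro k
    rw [hpow]
    constructor
    · intro h1
      calc M ^ k = (s * s) * M ^ k * (s * s) := by rw [hss, one_mul, mul_one]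
        _ = s * (s * M ^ k * s) * s := by simp only [mul_assoc]
        _ = 1 := by rw [h1, mul_one, hss]
    · intro h1; rw [h1, mul_one, hss]
  intro n hn
  rw [hord, ← h (fun α k => n (s α) k)]
  · refine Finset.sum_nbij' (fun α => s α) (fun α => s α) (fun α hα => R.refl δ (R.sub hδ) α hα)
      (fun α hα => R.refl δ (R.sub hδ) α hα) (fun α _ => hssx α) (fun α _ => hssx α) ?_
    intro α _
    rw [hssx]
  · intro α hα k
    rw [hn _ (R.refl δ (R.sub hδ) α hα) k, hpow]
    simp only [Module.End.mul_apply]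
    rw [hssx, rootReflection_inner (R.norm_Δ hδ)]

lemma CoxEq.kwSum_iff (R : IsRootBase Φ Δ) {N : ℕ} {l l' : List V} (h : CoxEq l l')
    (hl : ∀ x ∈ l, x ∈ Δ) :
    KWSum Φ N (l.map rootReflection).prod ↔ KWSum Φ N (l'.map rootReflection).prod := by
  induction h with
  | refl l => exact Iff.rfl
  | symm h ih => exact (ih fun x hx => hl x (h.perm.mem_iff.1 hx)).symm
  | trans h1 _ ih1 ih2 => exact (ih1 hl).trans (ih2 fun x hx => hl x (h1.perm.mem_iff.2 hx))
  | swap a b l hab =>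
    simp only [List.map_cons, List.prod_cons, ← mul_assoc]
    rw [rootReflection_comm hab]
  | rot a l =>
    have ha : a ∈ Δ := hl a List.mem_cons_self
    have hss := rootReflection_mul_self (R.norm_Δ ha)
    simp only [List.map_cons, List.prod_cons, List.map_append, List.prod_append, List.map_nil,
      List.prod_nil, mul_one]
    constructor
    · refine KWSum.conj R ha ?_
      rw [← mul_assoc, hss, one_mul]
    · refine KWSum.conj R ha ?_
      rw [mul_assoc, mul_assoc, hss, mul_one]

/-! ### Orbits of a Coxeter element -/

/-- Since `1` is not an eigenvalue of a Coxeter element, every orbit sum vanishes. -/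
lemma IsRootBase.eq_zero_of_fixed (R : IsRootBase Φ Δ) (l : List V) (hnd : l.Nodup)
    (hl : ∀ x ∈ l, x ∈ Δ) {x : V} (hx : (l.map rootReflection).prod x = x) :
    ∀ δ ∈ l, ⟪x, δ⟫ = (0 : ℝ) := by
  obtain ⟨w, hw⟩ := R.exists_coweights
  -- the product of reflections changes no coefficient outside its letters
  have hcoef : ∀ r : List V, (∀ y ∈ r, y ∈ Δ) → ∀ δ ∈ Δ, δ ∉ r → ∀ y,
      ⟪w δ, (r.map rootReflection).prod y⟫ = ⟪w δ, y⟫ := by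
    intro r
    induction r with
    | nil => intro _ δ _ _ y; simp
    | cons a r ih =>
      intro hr δ hδ hδr y
      simp only [List.mem_cons, not_or] at hδr
      simp only [List.map_cons, List.prod_cons, Module.End.mul_apply, rootReflection_apply,
        inner_sub_right, real_inner_smul_right]
      rw [ih (fun y hy => hr y (List.mem_cons_of_mem a hy)) δ hδ hδr.2,
        hw δ hδ a (hr a List.mem_cons_self), if_neg (Ne.symm hδr.1)]
      ring
  induction l with
  | nil => simp
  | cons a l ih =>
    have haΔ := hl a List.mem_cons_self
    obtain ⟨hal, hnd'⟩ := List.nodup_cons.1 hnd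
    have hl' : ∀ y ∈ l, y ∈ Δ := fun y hy => hl y (List.mem_cons_of_mem a hy)
    simp only [List.map_cons, List.prod_cons, Module.End.mul_apply] at hx
    have h1 : (l.map rootReflection).prod x = x - ⟪x, a⟫ • a := by
      rw [← rootReflection_apply]
      conv_rhs => rw [← hx]
      rw [rootReflection_invol (R.norm_Δ haΔ)]
    have h2 := hcoef l hl' a haΔ hal x
    rw [h1, inner_sub_right, real_inner_smul_right, hw a haΔ a haΔ, if_pos rfl, mul_one] at h2
    have h3 : ⟪x, a⟫ = (0 : ℝ) := by linarith
    rw [h3, zero_smul, sub_zero] at h1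
    intro δ hδ
    rcases List.mem_cons.1 hδ with rfl | hδ
    · exact h3
    · exact ih hnd' hl' h1 δ hδ

/-- A negative root turned positive by a product `s₁ ⋯ s_N` of simple reflections is sent to one
of the roots `s₁ ⋯ s_{i-1} δᵢ`. -/
lemma IsRootBase.exists_split (R : IsRootBase Φ Δ) {x : V} (hx : ∀ δ ∈ Δ, ⟪x, δ⟫ = (1 : ℝ))
    (l : List V) (hl : ∀ y ∈ l, y ∈ Δ) {γ : V} (hγ : γ ∈ Φ) (hn : ⟪x, γ⟫ < 0)
    (hp : 0 < ⟪x, (l.map rootReflection).prod γ⟫) :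
    ∃ l1 δ l2, l = l1 ++ δ :: l2 ∧
      (l.map rootReflection).prod γ = (l1.map rootReflection).prod δ := by
  induction l with
  | nil => simp at hp; linarith
  | cons a l ih =>
    have haΔ := hl a List.mem_cons_self
    have hl' : ∀ y ∈ l, y ∈ Δ := fun y hy => hl y (List.mem_cons_of_mem a hy)
    have hmem := R.prod_mem l hl' hγ
    simp only [List.map_cons, List.prod_cons, Module.End.mul_apply] at hp ⊢
    obtain ⟨c, hc0, hc⟩ := R.height_cases hx hmem
    rcases hc with ⟨hc, -⟩ | ⟨hc, -⟩
    · obtain ⟨l1, δ, l2, rfl, h2⟩ := ih hl' hc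
      refine ⟨a :: l1, δ, l2, rfl, ?_⟩
      rw [h2]; simp
    · refine ⟨[], a, l, rfl, ?_⟩
      rw [R.eq_of_height_flip hx (R.refl a (R.sub haΔ) _ hmem) haΔ hp
        (by rwa [rootReflection_invol (R.norm_Δ haΔ)])]
      simp

/-- Every root lies in the orbit of some `s₁ ⋯ s_{i-1} δᵢ` under the Coxeter element
`M = s₁ ⋯ s_N`. -/
lemma IsRootBase.exists_orbit (R : IsRootBase Φ Δ) (l : List V) (hnd : l.Nodup)
    (hl : ∀ y, y ∈ l ↔ y ∈ Δ) {M : V →ₗ[ℝ] V} (hM : M = (l.map rootReflection).prod) {H : ℕ}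
    (hH : 0 < H) (hMH : M ^ H = 1) {α : V} (hα : α ∈ Φ) :
    ∃ l1 δ l2, l = l1 ++ δ :: l2 ∧
      ∃ k < H, α = (M ^ k) ((l1.map rootReflection).prod δ) := by
  obtain ⟨x, hx⟩ := R.exists_rho
  have hl' : ∀ y ∈ l, y ∈ Δ := fun y hy => (hl y).1 hy
  have hM2 : ∀ γ ∈ Φ, M γ ∈ Φ := by rw [hM]; exact fun γ h => R.prod_mem l hl' h
  have hmem : ∀ k, (M ^ k) α ∈ Φ := by
    intro k
    induction k with
    | zero => simpa using hα
    | succ k ih =>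
      rw [pow_succ', Module.End.mul_apply]
      exact hM2 _ ih
  have hsum : ∑ k ∈ range H, (M ^ k) α = 0 := by
    set y := ∑ k ∈ range H, (M ^ k) α with hy
    have hfix : M y = y := by
      have h1 : M y + (M ^ 0) α = y + (M ^ H) α := by
        rw [hy, map_sum, ← Finset.sum_range_succ (fun k => (M ^ k) α), Finset.sum_range_succ']
        congr 1
        refine Finset.sum_congr rfl fun k _ => ?_
        rw [pow_succ', Module.End.mul_apply]
      rw [hMH, pow_zero] at h1
      exact add_right_cancel h1
    have hy0 := R.eq_zero_of_fixed l hnd hl' (hM ▸ hfix)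
    have hyspan : ∀ z ∈ Submodule.span ℝ (Δ : Set V), ⟪y, z⟫ = (0 : ℝ) := by
      intro z hz
      induction hz using Submodule.span_induction with
      | mem z hz => exact hy0 z ((hl z).2 hz)
      | zero => simp
      | add a b _ _ ha hb => rw [inner_add_right, ha, hb, add_zero]
      | smul c a _ ha => rw [real_inner_smul_right, ha, mul_zero]
    rw [← inner_self_eq_zero (𝕜 := ℝ)]
    exact hyspan y (by rw [R.span]; trivial)
  have hsum' : ∑ k ∈ range H, ⟪x, (M ^ k) α⟫ = (0 : ℝ) := by
    rw [← inner_sum, hsum, inner_zero_right]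
  have hsign : ∀ k, 0 < ⟪x, (M ^ k) α⟫ ∨ ⟪x, (M ^ k) α⟫ < 0 := by
    intro k
    obtain ⟨c, hc0, h | h⟩ := R.height_cases hx (hmem k)
    · exact Or.inl h.1
    · exact Or.inr h.1
  have hne : (range H).Nonempty := ⟨0, mem_range.2 hH⟩
  have hexn : ∃ a < H, ⟪x, (M ^ a) α⟫ < 0 := by
    by_contra hcon
    push Not at hcon
    have := Finset.sum_pos (s := range H) (f := fun k => ⟪x, (M ^ k) α⟫) (fun k hk =>
      (hsign k).resolve_right (not_lt.2 (hcon k (mem_range.1 hk)))) hne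
    rw [hsum'] at this
    exact lt_irrefl _ this
  have hexp : ∃ b < H, 0 < ⟪x, (M ^ b) α⟫ := by
    by_contra hcon
    push Not at hcon
    have := Finset.sum_neg (s := range H) (f := fun k => ⟪x, (M ^ k) α⟫) (fun k hk =>
      (hsign k).resolve_left (not_lt.2 (hcon k (mem_range.1 hk)))) hne
    rw [hsum'] at this
    exact lt_irrefl _ this
  obtain ⟨a, haH, ha⟩ := hexn
  obtain ⟨b, hbH, hb⟩ := hexp
  obtain ⟨k, hk1, hk2⟩ : ∃ k, ⟪x, (M ^ k) α⟫ < 0 ∧ 0 < ⟪x, (M ^ (k + 1)) α⟫ := by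
    by_contra hcon
    push Not at hcon
    have h1 : ∀ j, a ≤ j → ⟪x, (M ^ j) α⟫ < 0 := by
      intro j hj
      induction j, hj using Nat.le_induction with
      | base => exact ha
      | succ j _ ih => exact (hsign (j + 1)).resolve_left (not_lt.2 (hcon j ih))
    have h2 := h1 (b + H) (by omega)
    rw [pow_add, hMH, mul_one] at h2
    linarith
  have hMx : ∀ y, M y = (l.map rootReflection).prod y := fun y => by rw [hM]
  rw [pow_succ', Module.End.mul_apply, hMx] at hk2
  obtain ⟨l1, δ, l2, h1, h2⟩ := R.exists_split hx l hl' (hmem k) hk1 hk2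
  have hmod : ∀ a, M ^ (a % H) = M ^ a := by
    intro a
    conv_rhs => rw [← Nat.div_add_mod a H, pow_add, pow_mul, hMH, one_pow, one_mul]
  refine ⟨l1, δ, l2, h1, (H * (k + 1) - (k + 1)) % H, Nat.mod_lt _ hH, ?_⟩
  have hle : k + 1 ≤ H * (k + 1) := Nat.le_mul_of_pos_left _ hH
  rw [← h2, ← hMx, ← Module.End.mul_apply M, ← pow_succ', ← Module.End.mul_apply,
    hmod, ← pow_add, Nat.sub_add_cancel hle, pow_mul, hMH, one_pow, Module.End.one_apply]

/-- Reduction of the identity to the Gram numbers `⟪β i, M ^ k (β j)⟫` of the orbit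
representatives `s₁ ⋯ s_{i-1} δᵢ`. -/
lemma IsRootBase.kwSum_of_gram (R : IsRootBase Φ Δ) (l : List V) (hnd : l.Nodup)
    (hl : ∀ y, y ∈ l ↔ y ∈ Δ) {M : V →ₗ[ℝ] V} (hM : M = (l.map rootReflection).prod) {H N : ℕ}
    (hH : 0 < H) (hN : 0 < N) (hMH : M ^ H = 1) (β : ℕ → V)
    (hβ : ∀ l1 δ l2, l = l1 ++ δ :: l2 → ∃ i < N, (l1.map rootReflection).prod δ = β i)
    (hβΦ : ∀ i < N, β i ∈ Φ) (G : ℕ → ℕ → ℕ → ℤ)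
    (hG : ∀ i < N, ∀ j < N, ∀ k < H, ⟪β i, (M ^ k) (β j)⟫ = (G i j k : ℝ))
    (hG2 : ∀ i < N, ∀ j < N, ∀ k < H, G i j k = 2 → i = j ∧ k = 0)
    (hsum : ∑ i ∈ range N, ∏ k ∈ Finset.Icc 1 (H - 1),
      ((1 : ℂ) - Complex.exp (2 * Real.pi * Complex.I / H) ^ k) ^ (G i i k)
      = (N : ℂ) * (H + 1) / 12) : KWSum Φ N M := by
  have hl' : ∀ y ∈ l, y ∈ Δ := fun y hy => (hl y).1 hy
  have hM1 : ∀ x y, ⟪M x, M y⟫ = (⟪x, y⟫ : ℝ) := by rw [hM]; exact R.prod_inner l hl'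
  have hM2 : ∀ γ ∈ Φ, M γ ∈ Φ := by rw [hM]; exact fun γ h => R.prod_mem l hl' h
  have hMinner : ∀ k x y, ⟪(M ^ k) x, (M ^ k) y⟫ = (⟪x, y⟫ : ℝ) := by
    intro k
    induction k with
    | zero => simp
    | succ k ih =>
      intro x y
      rw [pow_succ', Module.End.mul_apply, Module.End.mul_apply, hM1, ih]
  have hMmem : ∀ k, ∀ α ∈ Φ, (M ^ k) α ∈ Φ := by
    intro k α hα
    induction k with
    | zero => simpa using hα
    | succ k ih =>
      rw [pow_succ', Module.End.mul_apply]
      exact hM2 _ ih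
  have hinj' : ∀ i < N, ∀ j < N, ∀ k < H, β i = (M ^ k) (β j) → i = j ∧ k = 0 := by
    intro i hi j hj k hk h
    have h1 := hG i hi j hj k hk
    rw [← h, R.norm _ (hβΦ i hi)] at h1
    exact hG2 i hi j hj k hk (by exact_mod_cast h1.symm)
  have hord : orderOf M = H := by
    rw [orderOf_eq_iff hH]
    refine ⟨hMH, fun k hk hk0 h1 => ?_⟩
    have := hinj' 0 hN 0 hN k hk (by rw [h1]; rfl)
    omega
  have hinj2 : ∀ i < N, ∀ j < N, ∀ a < H, ∀ b < H, a ≤ b → (M ^ a) (β i) = (M ^ b) (β j) →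
      i = j ∧ a = b := by
    intro i hi j hj a ha b hb hab h
    have h1 : β i = (M ^ (b - a)) (β j) := by
      have h2 : (M ^ (H - a)) ((M ^ a) (β i)) = (M ^ (H - a)) ((M ^ b) (β j)) := by rw [h]
      rw [← Module.End.mul_apply, ← Module.End.mul_apply, ← pow_add, ← pow_add,
        Nat.sub_add_cancel ha.le, show H - a + b = H + (b - a) by omega, pow_add, hMH, one_mul,
        Module.End.one_apply] at h2
      exact h2
    have := hinj' i hi j hj (b - a) (by omega) h1
    omega
  have hΦ : Φ = (range N ×ˢ range H).image fun q => (M ^ q.2) (β q.1) := by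
    ext α
    simp only [mem_image, mem_product, mem_range, Prod.exists]
    constructor
    · intro hα
      obtain ⟨l1, δ, l2, h1, k, hk, h2⟩ := R.exists_orbit l hnd hl hM hH hMH hα
      obtain ⟨i, hi, h3⟩ := hβ l1 δ l2 h1
      exact ⟨i, k, ⟨hi, hk⟩, by rw [h2, h3]⟩
    · rintro ⟨i, k, ⟨hi, -⟩, rfl⟩
      exact hMmem k _ (hβΦ i hi)
  intro n hn
  rw [hord]
  have hn' : ∀ i < N, ∀ a < H, ∀ k < H, n ((M ^ a) (β i)) k = G i i k := by
    intro i hi a _ k hk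
    have h1 := hn _ (hMmem a _ (hβΦ i hi)) k
    rw [← Module.End.mul_apply, ← pow_add, add_comm, pow_add, Module.End.mul_apply, hMinner,
      hG i hi i hi k hk] at h1
    exact_mod_cast h1
  conv_lhs => rw [hΦ]
  rw [Finset.sum_image, Finset.sum_product]
  · have h1 : ∀ i ∈ range N, ∑ a ∈ range H, ∏ k ∈ Finset.Icc 1 (H - 1),
        ((1 : ℂ) - Complex.exp (2 * Real.pi * Complex.I / H) ^ k) ^ (n ((M ^ a) (β i)) k)
        = H * ∏ k ∈ Finset.Icc 1 (H - 1),
        ((1 : ℂ) - Complex.exp (2 * Real.pi * Complex.I / H) ^ k) ^ (G i i k) := by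
      intro i hi
      rw [mem_range] at hi
      rw [Finset.sum_congr rfl (g := fun _ => ∏ k ∈ Finset.Icc 1 (H - 1),
        ((1 : ℂ) - Complex.exp (2 * Real.pi * Complex.I / H) ^ k) ^ (G i i k))]
      · simp
      · intro a ha
        refine Finset.prod_congr rfl fun k hk => ?_
        rw [hn' i hi a (mem_range.1 ha) k (by rw [mem_Icc] at hk; omega)]
    rw [Finset.sum_congr rfl h1, ← Finset.mul_sum, hsum]
    ring
  · rintro ⟨i, a⟩ h1 ⟨j, b⟩ h2 h
    simp only [coe_product, coe_range, Set.mem_prod, Set.mem_Iio] at h1 h2 h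
    rcases le_total a b with hab | hab
    · obtain ⟨rfl, rfl⟩ := hinj2 i h1.1 j h2.1 a h1.2 b h2.2 hab h
      rfl
    · obtain ⟨rfl, rfl⟩ := hinj2 j h2.1 i h1.1 b h2.2 a h1.2 hab h.symm
      rfl

end

/-! ### Sums and products over roots of unity -/

lemma prod_zpow_single (w : ℕ → ℂ) (s : Finset ℕ) {a : ℕ} (ha : a ∈ s) (c : ℤ) :
    ∏ k ∈ s, w k ^ (if k = a then c else 0) = w a ^ c := by
  rw [Finset.prod_eq_single a]
  · simp
  · intro b _ hb; simp [hb]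
  · exact fun h => absurd ha h

lemma sum_mul_pow {x : ℂ} {H : ℕ} (hxH : x ^ H = 1) (hx1 : x ≠ 1) :
    (1 - x) ^ 2 * ∑ a ∈ range H, (a : ℂ) * (H - a) * x ^ a = 2 * H * x := by
  have key : ∀ n : ℕ, (1 - x) ^ 3 * ∑ a ∈ range n, (a : ℂ) * (H - a) * x ^ a
      = ((1 - x) ^ 2 * (n ^ 2 - n * H) + 2 * x * (1 - x) * n + (x * (1 - x) * (1 - H) + 2 * x ^ 2))
        * x ^ n - (x * (1 - x) * (1 - H) + 2 * x ^ 2) := by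
    intro n
    induction n with
    | zero => simp
    | succ n ih =>
      rw [Finset.sum_range_succ, mul_add, ih]
      push_cast
      ring
  have h1 := key H
  rw [hxH] at h1
  have h2 : (1 - x) ≠ 0 := sub_ne_zero.2 (Ne.symm hx1)
  apply mul_left_cancel₀ h2
  linear_combination h1

/-- `∑ 1 / ((1 - x) (1 - x⁻¹)) = (H² - 1) / 12`, the sum over the nontrivial `H`-th roots of
unity `x`; on these, `1 / ((1 - x) (1 - x⁻¹)) = -(2H)⁻¹ ∑ a (H - a) xᵃ`. -/
lemma sum_inv_one_sub {ζ : ℂ} {n : ℕ} (hζ : IsPrimitiveRoot ζ (n + 1)) :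
    ∑ j ∈ range n, ((1 - ζ ^ (j + 1)) * (1 - ζ ^ (n - j)))⁻¹ = (n : ℂ) * (n + 2) / 12 := by
  have hH : ((n : ℂ) + 1) ≠ 0 := by exact_mod_cast n.succ_ne_zero
  have h1 : ∀ j ∈ range n, ((1 - ζ ^ (j + 1)) * (1 - ζ ^ (n - j)))⁻¹
      = -(2 * ((n : ℂ) + 1))⁻¹ *
        ∑ a ∈ range (n + 1), (a : ℂ) * ((n + 1 : ℕ) - a) * (ζ ^ (j + 1)) ^ a := by
    intro j hj
    rw [mem_range] at hj
    have hx1 : ζ ^ (j + 1) ≠ 1 := hζ.pow_ne_one_of_pos_of_lt (by omega) (by omega)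
    have hxy : ζ ^ (j + 1) * ζ ^ (n - j) = 1 := by
      rw [← pow_add, show j + 1 + (n - j) = n + 1 by omega, hζ.pow_eq_one]
    have h := sum_mul_pow (x := ζ ^ (j + 1)) (H := n + 1)
      (by rw [← pow_mul, mul_comm, pow_mul, hζ.pow_eq_one, one_pow]) hx1
    set x := ζ ^ (j + 1)
    set y := ζ ^ (n - j)
    set S := ∑ a ∈ range (n + 1), (a : ℂ) * ((n + 1 : ℕ) - a) * x ^ a
    have hx0 : x ≠ 0 := left_ne_zero_of_mul_eq_one hxy
    have hy : y = x⁻¹ := eq_inv_of_mul_eq_one_right hxy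
    have h2 : (1 - x) ≠ 0 := sub_ne_zero.2 (Ne.symm hx1)
    have h3 : (1 - x) * (1 - y) = -(1 - x) ^ 2 / x := by rw [hy]; field_simp; ring
    rw [h3]
    push_cast at h
    field_simp
    linear_combination h
  rw [Finset.sum_congr rfl h1, ← Finset.mul_sum, Finset.sum_comm]
  have h2 : ∀ a ∈ range (n + 1), ∑ j ∈ range n,
      (a : ℂ) * ((n + 1 : ℕ) - a) * (ζ ^ (j + 1)) ^ a = -((a : ℂ) * (n + 1 - a)) := by
    intro a ha
    rw [mem_range] at ha
    rw [← Finset.mul_sum]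
    rcases Nat.eq_zero_or_pos a with rfl | ha0
    · simp
    · have hx1 : ζ ^ a ≠ 1 := hζ.pow_ne_one_of_pos_of_lt (by omega) ha
      have h3 : ∑ j ∈ range (n + 1), (ζ ^ a) ^ j = 0 := by
        rw [geom_sum_eq hx1, ← pow_mul, mul_comm, pow_mul, hζ.pow_eq_one, one_pow, sub_self,
          zero_div]
      rw [Finset.sum_range_succ', pow_zero] at h3
      have h4 : ∑ j ∈ range n, (ζ ^ (j + 1)) ^ a = ∑ j ∈ range n, (ζ ^ a) ^ (j + 1) :=
        Finset.sum_congr rfl fun j _ => by rw [← pow_mul, ← pow_mul, mul_comm]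
      rw [h4, eq_neg_of_add_eq_zero_left h3]
      push_cast
      ring
  rw [Finset.sum_congr rfl h2]
  have h5 : ∀ k : ℕ, ∑ a ∈ range (k + 1), -((a : ℂ) * (n + 1 - a))
      = -((k : ℂ) * (k + 1) * (3 * n + 2 - 2 * k) / 6) := by
    intro k
    induction k with
    | zero => simp
    | succ k ih => rw [Finset.sum_range_succ, ih]; push_cast; ring
  rw [h5]
  field_simp
  ring

lemma prod_range_odd_even (f : ℕ → ℂ) (n : ℕ) :
    ∏ k ∈ range (2 * n + 1), f k = (∏ k ∈ range (n + 1), f (2 * k)) * ∏ k ∈ range n, f (2 * k + 1) := by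
  induction n with
  | zero => simp
  | succ n ih =>
    rw [show 2 * (n + 1) + 1 = (2 * n + 1) + 1 + 1 by ring, Finset.prod_range_succ f (2 * n + 1 + 1),
      Finset.prod_range_succ f (2 * n + 1), ih, Finset.prod_range_succ (fun k => f (2 * k)) (n + 1),
      Finset.prod_range_succ (fun k => f (2 * k + 1)) n, show 2 * (n + 1) = 2 * n + 1 + 1 by ring]
    ring

lemma prod_Icc_eq_range (f : ℕ → ℂ) (n : ℕ) :
    ∏ k ∈ Finset.Icc 1 n, f k = ∏ k ∈ range n, f (k + 1) := by
  rw [Finset.range_eq_Ico, Finset.prod_Ico_add' f 0 n 1]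
  rfl

/-- The alternating product of the `1 - ζᵏ` over the nontrivial roots of unity of even
order `2 (n + 1)`. -/
lemma prod_one_sub_alternating {ζ : ℂ} {n : ℕ} (hζ : IsPrimitiveRoot ζ (2 * (n + 1))) :
    ∏ k ∈ Finset.Icc 1 (2 * (n + 1) - 1), (1 - ζ ^ k) ^ (if k % 2 = 0 then (1 : ℤ) else -1)
      = ((n : ℂ) + 1) / 2 := by
  have h1 : ∏ k ∈ range n, (1 - ζ ^ (2 * k + 1 + 1)) = (n : ℂ) + 1 := by
    have h := (hζ.pow (by omega) rfl : IsPrimitiveRoot (ζ ^ 2) (n + 1)).prod_one_sub_pow_eq_order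
    rw [← h]
    refine Finset.prod_congr rfl fun k _ => ?_
    rw [← pow_mul]; ring
  have h2 : ∏ k ∈ range (n + 1), (1 - ζ ^ (2 * k + 1)) = 2 := by
    have hζ' : IsPrimitiveRoot ζ (2 * n + 1 + 1) := hζ
    have h := hζ'.prod_one_sub_pow_eq_order
    rw [prod_range_odd_even, h1] at h
    have hn : (n : ℂ) + 1 ≠ 0 := by exact_mod_cast n.succ_ne_zero
    apply mul_right_cancel₀ hn
    rw [h]; push_cast; ring
  rw [prod_Icc_eq_range, show 2 * (n + 1) - 1 = 2 * n + 1 by omega, prod_range_odd_even]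
  have h3 : ∀ k ∈ range (n + 1), (1 - ζ ^ (2 * k + 1)) ^ (if (2 * k + 1) % 2 = 0 then (1 : ℤ) else -1)
      = (1 - ζ ^ (2 * k + 1))⁻¹ := fun k _ => by
    rw [if_neg (by omega), zpow_neg_one]
  have h4 : ∀ k ∈ range n, (1 - ζ ^ (2 * k + 1 + 1)) ^ (if (2 * k + 1 + 1) % 2 = 0 then (1 : ℤ) else -1)
      = (1 - ζ ^ (2 * k + 1 + 1)) := fun k _ => by
    rw [if_pos (by omega), zpow_one]
  rw [Finset.prod_congr rfl h3, Finset.prod_congr rfl h4, h1, Finset.prod_inv_distrib, h2]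
  ring

/-- With `ζ ^ (n + 1) = -1` and `y = -ζ ^ a`, each summand is
`1 / ((1 - y) (1 - y⁻¹)) - 1 / 4`. -/
lemma sum_one_add_div {ζ : ℂ} {n : ℕ} (hζ : IsPrimitiveRoot ζ (2 * (n + 1))) :
    ∑ a ∈ range n, (1 / 4 : ℂ) * ((1 - ζ ^ (a + 1)) * (1 - ζ ^ (2 * (n + 1) - (a + 1))) *
      ((1 - ζ ^ (n + 1 - (a + 1))) * (1 - ζ ^ (n + 1 + (a + 1))))⁻¹)
      = (n : ℂ) * (n + 2) / 6 - n / 4 := by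
  have hm1 : ζ ^ (n + 1) = -1 := by
    have h1 : (ζ ^ (n + 1)) ^ 2 = 1 := by rw [← pow_mul, mul_comm, hζ.pow_eq_one]
    rw [sq, mul_self_eq_one_iff] at h1
    rcases h1 with h | h
    · exact absurd h (hζ.pow_ne_one_of_pos_of_lt (by omega) (by omega))
    · exact h
  set F : ℕ → ℂ := fun j => ((1 - ζ ^ (j + 1)) * (1 - ζ ^ (2 * n + 1 - j)))⁻¹ with hF
  have hsum : ∑ j ∈ range (2 * n + 1), F j = ((2 * n + 1 : ℕ) : ℂ) * ((2 * n + 1 : ℕ) + 2) / 12 :=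
    sum_inv_one_sub (n := 2 * n + 1) hζ
  have hsym : ∀ j ≤ 2 * n, F (2 * n - j) = F j := by
    intro j hj
    simp only [hF]
    rw [mul_comm, show 2 * n + 1 - (2 * n - j) = j + 1 by omega,
      show 2 * n - j + 1 = 2 * n + 1 - j by omega]
  have hsplit : ∑ j ∈ range (2 * n + 1), F j = 2 * ∑ a ∈ range n, F (n + 1 + a) + 1 / 4 := by
    rw [show 2 * n + 1 = n + 1 + n by ring, Finset.sum_range_add, Finset.sum_range_succ,
      ← Finset.sum_range_reflect F n]
    have h1 : ∑ j ∈ range n, F (n - 1 - j) = ∑ a ∈ range n, F (n + 1 + a) := by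
      refine Finset.sum_congr rfl fun j hj => ?_
      rw [mem_range] at hj
      rw [← hsym (n - 1 - j) (by omega)]
      congr 1; omega
    have h2 : F n = 1 / 4 := by
      simp only [hF]
      rw [show 2 * n + 1 - n = n + 1 by omega, hm1]; norm_num
    rw [h1, h2]; ring
  have hterm : ∀ a ∈ range n, (1 / 4 : ℂ) * ((1 - ζ ^ (a + 1)) * (1 - ζ ^ (2 * (n + 1) - (a + 1))) *
      ((1 - ζ ^ (n + 1 - (a + 1))) * (1 - ζ ^ (n + 1 + (a + 1))))⁻¹) = F (n + 1 + a) - 1 / 4 := by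
    intro a ha
    rw [mem_range] at ha
    simp only [hF]
    have e1 : ζ ^ (2 * (n + 1) - (a + 1)) = -ζ ^ (n - a) := by
      rw [show 2 * (n + 1) - (a + 1) = n + 1 + (n - a) by omega, pow_add, hm1]; ring
    have e2 : ζ ^ (n + 1 + (a + 1)) = -ζ ^ (a + 1) := by rw [pow_add, hm1]; ring
    have hxy : ζ ^ (a + 1) * ζ ^ (n - a) = -1 := by
      rw [← pow_add, show a + 1 + (n - a) = n + 1 by omega, hm1]
    have hx : ζ ^ (n - a) ≠ 1 := hζ.pow_ne_one_of_pos_of_lt (by omega) (by omega)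
    have hy : ζ ^ (n + 1 + (a + 1)) ≠ 1 := hζ.pow_ne_one_of_pos_of_lt (by omega) (by omega)
    rw [e2] at hy
    rw [show n + 1 - (a + 1) = n - a by omega, e1, e2, show n + 1 + a + 1 = n + 1 + (a + 1) by ring,
      e2, show 2 * n + 1 - (n + 1 + a) = n - a by omega]
    have h1 : 1 - ζ ^ (n - a) ≠ 0 := sub_ne_zero.2 (Ne.symm hx)
    have h2 : 1 - -ζ ^ (a + 1) ≠ 0 := sub_ne_zero.2 (Ne.symm hy)
    generalize ζ ^ (n - a) = y at *
    generalize ζ ^ (a + 1) = x at *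
    field_simp
    linear_combination -2 * hxy
  rw [Finset.sum_congr rfl hterm, Finset.sum_sub_distrib]
  have h6 : ∑ a ∈ range n, F (n + 1 + a) = (n : ℂ) * (n + 2) / 6 := by
    rw [hsplit] at hsum
    push_cast at hsum
    linear_combination hsum / 2
  rw [h6]
  simp only [sum_const, card_range, nsmul_eq_mul]
  ring

/-! ### Types A and D -/

/-- The word of the vertices of a path. -/
def pathWord (p : ℕ → V) (m : ℕ) : List V := (List.range m).map p

/-- The product of the reflections along a path. -/
noncomputable def pathProd (p : ℕ → V) (m : ℕ) : V →ₗ[ℝ] V :=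
  ((pathWord p m).map rootReflection).prod

lemma mem_pathWord {p : ℕ → V} {m : ℕ} {y : V} : y ∈ pathWord p m ↔ ∃ i < m, p i = y := by
  simp [pathWord]

lemma pathProd_succ (p : ℕ → V) (m : ℕ) (x : V) :
    pathProd p (m + 1) x = pathProd p m (rootReflection (p m) x) := by
  simp [pathProd, pathWord, List.range_succ]

lemma pathWord_split {p : ℕ → V} {m : ℕ} {l1 l2 : List V} {δ : V}
    (h : pathWord p m = l1 ++ δ :: l2) : ∃ i < m, δ = p i ∧ l1 = pathWord p i := by
  have hlen : m = l1.length + (l2.length + 1) := by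
    have := congrArg List.length h
    simpa [pathWord] using this
  have h1 := congrArg (List.take l1.length) h
  have h2 := congrArg (fun l => l[l1.length]?) h
  refine ⟨l1.length, by omega, ?_, ?_⟩
  · simp only [pathWord, List.getElem?_map] at h2
    rw [List.getElem?_range (by omega)] at h2
    simpa using h2.symm
  · rw [List.take_left, pathWord, ← List.map_take, List.take_range, min_eq_left (by omega)] at h1
    exact h1.symm

section

variable {Δ : Finset V}

/-- If `p j = e j - e (j + 1)` with `e` an orthonormal family up to a common translation, the
product of the reflections along the path permutes the `e i` cyclically. -/
lemma pathProd_apply {p e : ℕ → V} {m : ℕ}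
    (he : ∀ i ≤ m, ∀ j < m, ⟪e i, p j⟫ = (if i = j then (1 : ℝ) else 0) - if i = j + 1 then 1 else 0)
    (hs : ∀ j < m, e (j + 1) = e j - p j) (k : ℕ) (hk : k ≤ m) :
    pathProd p k (e k) = e 0 ∧ (∀ i < k, pathProd p k (e i) = e (i + 1)) ∧
      ∀ i, k < i → i ≤ m → pathProd p k (e i) = e i := by
  induction k with
  | zero => simp [pathProd, pathWord]
  | succ k ih =>
    obtain ⟨h1, h2, h3⟩ := ih (by omega)
    have s1 : rootReflection (p k) (e (k + 1)) = e k := by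
      rw [rootReflection_apply, he (k + 1) hk k (by omega), hs k (by omega)]
      simp
    have s2 : rootReflection (p k) (e k) = e (k + 1) := by
      rw [rootReflection_apply, he k (by omega) k (by omega), hs k (by omega)]
      simp
    have s3 : ∀ i ≤ m, i ≠ k → i ≠ k + 1 → rootReflection (p k) (e i) = e i := by
      intro i hi h1 h2
      rw [rootReflection_apply, he i hi k (by omega), if_neg h1, if_neg h2]
      simp
    refine ⟨?_, fun i hi => ?_, fun i hi him => ?_⟩
    · rw [pathProd_succ, s1, h1]
    · rw [pathProd_succ]
      rcases Nat.lt_succ_iff_lt_or_eq.1 hi with hi | rfl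
      · rw [s3 i (by omega) (by omega) (by omega), h2 i hi]
      · rw [s2, h3 (i + 1) (by omega) (by omega)]
    · rw [pathProd_succ, s3 i him (by omega) (by omega), h3 i (by omega) him]

lemma pathProd_simple {p e : ℕ → V} {m : ℕ}
    (he : ∀ i ≤ m, ∀ j < m, ⟪e i, p j⟫ = (if i = j then (1 : ℝ) else 0) - if i = j + 1 then 1 else 0)
    (hs : ∀ j < m, e (j + 1) = e j - p j) (k : ℕ) (hk : k < m) :
    pathProd p k (p k) = e 0 - e (k + 1) := by
  obtain ⟨h1, -, h3⟩ := pathProd_apply he hs k hk.le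
  have : p k = e k - e (k + 1) := by rw [hs k hk]; abel
  rw [this, map_sub, h1, h3 (k + 1) (by omega) (by omega)]

/-- Vectors `e i` with differences the given path. -/
def pathVec (p : ℕ → V) (e₀ : V) (i : ℕ) : V := e₀ - ∑ j ∈ range i, p j

lemma pathVec_succ (p : ℕ → V) (e₀ : V) (i : ℕ) : pathVec p e₀ (i + 1) = pathVec p e₀ i - p i := by
  simp only [pathVec, Finset.sum_range_succ]; abel

lemma pathVec_inner {p : ℕ → V} {m : ℕ} (hp : IsPath Δ p m) {e₀ : V}
    (he₀ : ∀ j < m, ⟪e₀, p j⟫ = if j = 0 then (1 : ℝ) else 0) :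
    ∀ i ≤ m, ∀ j < m, ⟪pathVec p e₀ i, p j⟫
      = (if i = j then (1 : ℝ) else 0) - if i = j + 1 then 1 else 0 := by
  intro i hi j hj
  induction i with
  | zero =>
    simp only [pathVec, range_zero, sum_empty, sub_zero]
    rw [he₀ j hj]
    simp [eq_comm]
  | succ i ih =>
    rw [pathVec_succ, inner_sub_left, ih (by omega), hp.inner i (by omega) j hj]
    split_ifs <;> first | omega | norm_num

lemma pathVec_inner_self {p : ℕ → V} {m : ℕ} (hp : IsPath Δ p m) {e₀ : V}
    (he₀ : ∀ j < m, ⟪e₀, p j⟫ = if j = 0 then (1 : ℝ) else 0) :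
    ∀ i ≤ m, ∀ j ≤ m, ⟪pathVec p e₀ i, pathVec p e₀ j⟫
      = (if i = j then (1 : ℝ) else 0) + (⟪e₀, e₀⟫ - 1) := by
  have h0 : ∀ i ≤ m, ∀ j ≤ m, ⟪pathVec p e₀ i, pathVec p e₀ j⟫
      = ⟪pathVec p e₀ i, e₀⟫ - (if i = 0 then (1 : ℝ) else 0) + if i = j then 1 else 0 := by
    intro i hi j hj
    induction j with
    | zero => simp [pathVec]
    | succ j ih =>
      rw [pathVec_succ, inner_sub_right, ih (by omega), pathVec_inner hp he₀ i hi j (by omega)]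
      ring
  intro i hi j hj
  rw [h0 i hi j hj, real_inner_comm]
  have h1 := h0 0 (by omega) i hi
  have h2 : pathVec p e₀ 0 = e₀ := by simp [pathVec]
  rw [h2] at h1
  rw [h1]
  simp only [eq_comm (a := i) (b := 0)]
  simp only [if_true]
  ring

/-- The Gram numbers `⟪E a, E b⟫` of a negacyclic orthonormal sequence, `a < m`, `b < 3 m`. -/
def negShift (m a b : ℕ) : ℤ :=
  if b = a ∨ b = a + 2 * m then 1 else if b = a + m then -1 else 0

/-- The coefficient of `e 0` in the `i`-th orbit representative in type D. -/
def dEps (i : ℕ) : ℤ := if i = 0 then -1 else if i = 1 then 1 else 0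

/-- The coefficient of `-E (i - 1)` in the `i`-th orbit representative in type D. -/
def dTau (i : ℕ) : ℤ := if i ≤ 1 then 0 else 1

/-- The Gram numbers `⟪β i, M ^ k (β j)⟫` in type D, where
`β i = dEps i • e 0 - E 0 - dTau i • E (i - 1)`. -/
def typeDGram (m i j k : ℕ) : ℤ :=
  dEps i * dEps j * (if k % 2 = 0 then 1 else -1) + negShift m 0 k
    + dTau j * negShift m 0 (j - 1 + k) + dTau i * negShift m (i - 1) k
    + dTau i * dTau j * negShift m (i - 1) (j - 1 + k)

lemma typeDGram_eq_two {m : ℕ} (hm : 3 ≤ m) : ∀ i < m + 1, ∀ j < m + 1, ∀ k < 2 * m,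
    typeDGram m i j k = 2 → i = j ∧ k = 0 := by
  intro i hi j hj k hk
  simp only [typeDGram, dEps, dTau, negShift]
  rcases Nat.lt_or_ge 1 i with h1 | h1 <;> rcases Nat.lt_or_ge 1 j with h2 | h2
  · rw [if_neg (by omega), if_neg (by omega), if_neg (by omega), if_neg (by omega),
      if_neg (c := i ≤ 1) (by omega), if_neg (c := j ≤ 1) (by omega)]
    simp only [zero_mul, one_mul]
    split_ifs <;> intro h <;> omega
  · rw [if_neg (by omega), if_neg (by omega), if_neg (c := i ≤ 1) (by omega), if_pos h2]
    simp only [zero_mul, one_mul, mul_zero]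
    split_ifs <;> intro h <;> omega
  · rw [if_neg (c := j = 0) (by omega), if_neg (c := j = 1) (by omega), if_pos h1,
      if_neg (c := j ≤ 1) (by omega)]
    simp only [zero_mul, one_mul, mul_zero]
    split_ifs <;> intro h <;> omega
  · rw [if_pos h1, if_pos h2]
    simp only [zero_mul]
    split_ifs <;> intro h <;> omega

/-- The diagonal sum in type D: the two representatives involving `e 0` contribute `m / 4` each,
the others the summands of `sum_one_add_div`. -/
lemma sum_typeDGram {m : ℕ} (hm : 3 ≤ m) :
    ∑ i ∈ range (m + 1), ∏ k ∈ Finset.Icc 1 (2 * m - 1),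
      ((1 : ℂ) - Complex.exp (2 * Real.pi * Complex.I / (2 * m : ℕ)) ^ k) ^ (typeDGram m i i k)
      = ((m + 1 : ℕ) : ℂ) * ((2 * m : ℕ) + 1) / 12 := by
  obtain ⟨n, rfl⟩ : ∃ n, m = n + 1 := ⟨m - 1, by omega⟩
  have hζ : IsPrimitiveRoot (Complex.exp (2 * Real.pi * Complex.I / (2 * (n + 1) : ℕ)))
      (2 * (n + 1)) := Complex.isPrimitiveRoot_exp _ (by omega)
  generalize Complex.exp (2 * Real.pi * Complex.I / (2 * (n + 1) : ℕ)) = ζ at hζ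
  have h0 : ∀ k ∈ Finset.Icc 1 (2 * (n + 1) - 1), (1 - ζ ^ k) ≠ 0 := by
    intro k hk
    rw [mem_Icc] at hk
    exact sub_ne_zero.2 (Ne.symm (hζ.pow_ne_one_of_pos_of_lt (by omega) (by omega)))
  have hm1 : 1 - ζ ^ (n + 1) = 2 := by
    have h1 : (ζ ^ (n + 1)) ^ 2 = 1 := by rw [← pow_mul, mul_comm, hζ.pow_eq_one]
    rw [sq, mul_self_eq_one_iff] at h1
    rcases h1 with h | h
    · exact absurd h (hζ.pow_ne_one_of_pos_of_lt (by omega) (by omega))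
    · rw [h]; norm_num
  have hS : ∀ b, 1 ≤ b → b ≤ 2 * n + 1 → ∀ c : ℤ, (1 - ζ ^ b) ^ c
      = ∏ k ∈ Finset.Icc 1 (2 * (n + 1) - 1), (1 - ζ ^ k) ^ (if k = b then c else 0) :=
    fun b hb1 hb2 c => (prod_zpow_single (fun k => 1 - ζ ^ k) _ (by rw [mem_Icc]; omega) c).symm
  have hshort : ∀ i, i ≤ 1 → ∏ k ∈ Finset.Icc 1 (2 * (n + 1) - 1),
      (1 - ζ ^ k) ^ (typeDGram (n + 1) i i k) = ((n : ℂ) + 1) / 4 := by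
    intro i hi
    have h1 : dTau i = 0 := if_pos hi
    have h2 : dEps i * dEps i = 1 := by
      simp only [dEps]; split_ifs <;> omega
    have h3 : ((n : ℂ) + 1) / 4 = ((n : ℂ) + 1) / 2 * (1 - ζ ^ (n + 1)) ^ (-1 : ℤ) := by
      rw [hm1]; norm_num; ring
    rw [h3, ← prod_one_sub_alternating hζ, hS (n + 1) (by omega) (by omega),
      ← Finset.prod_mul_distrib]
    refine Finset.prod_congr rfl fun k hk => ?_
    rw [← zpow_add₀ (h0 k hk)]
    rw [mem_Icc] at hk
    congr 1
    simp only [typeDGram, h1, h2, negShift, zero_mul, one_mul, add_zero, zero_add]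
    split_ifs <;> omega
  have hlong : ∀ a < n, ∏ k ∈ Finset.Icc 1 (2 * (n + 1) - 1),
      (1 - ζ ^ k) ^ (typeDGram (n + 1) (2 + a) (2 + a) k)
      = (1 / 4 : ℂ) * ((1 - ζ ^ (a + 1)) * (1 - ζ ^ (2 * (n + 1) - (a + 1))) *
        ((1 - ζ ^ (n + 1 - (a + 1))) * (1 - ζ ^ (n + 1 + (a + 1))))⁻¹) := by
    intro a ha
    have h1 : dTau (2 + a) = 1 := if_neg (by omega)
    have h2 : dEps (2 + a) = 0 := by
      simp only [dEps]; rw [if_neg (by omega), if_neg (by omega)]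
    have h3 : (1 / 4 : ℂ) = (1 - ζ ^ (n + 1)) ^ (-1 : ℤ) * (1 - ζ ^ (n + 1)) ^ (-1 : ℤ) := by
      rw [hm1]; norm_num
    have e1 := hS (a + 1) (by omega) (by omega) 1
    have e2 := hS (2 * (n + 1) - (a + 1)) (by omega) (by omega) 1
    have e3 := hS (n + 1 - (a + 1)) (by omega) (by omega) (-1)
    have e4 := hS (n + 1 + (a + 1)) (by omega) (by omega) (-1)
    rw [zpow_one] at e1 e2
    rw [zpow_neg_one] at e3 e4
    rw [h3, mul_inv, hS (n + 1) (by omega) (by omega), e1, e2, e3, e4]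
    simp only [← Finset.prod_mul_distrib]
    refine Finset.prod_congr rfl fun k hk => ?_
    have hk0 := h0 k hk
    simp only [← zpow_add₀ hk0]
    rw [mem_Icc] at hk
    have g1 : negShift (n + 1) 0 k = if k = n + 1 then -1 else 0 := by
      simp only [negShift]; split_ifs <;> omega
    have g2 : negShift (n + 1) 0 (2 + a - 1 + k) = (if k = n + 1 - (a + 1) then -1 else 0)
        + if k = 2 * (n + 1) - (a + 1) then 1 else 0 := by
      simp only [negShift]; split_ifs <;> omega
    have g3 : negShift (n + 1) (2 + a - 1) k = (if k = a + 1 then 1 else 0)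
        + if k = n + 1 + (a + 1) then -1 else 0 := by
      simp only [negShift]; split_ifs <;> omega
    have g4 : negShift (n + 1) (2 + a - 1) (2 + a - 1 + k) = if k = n + 1 then -1 else 0 := by
      simp only [negShift]; split_ifs <;> omega
    congr 1
    rw [typeDGram, h1, h2, g1, g2, g3, g4]
    ring
  rw [show n + 1 + 1 = 2 + n by ring, Finset.sum_range_add, Finset.sum_range_succ,
    Finset.sum_range_one, hshort 0 (by omega), hshort 1 (by omega)]
  rw [Finset.sum_congr rfl fun a ha => hlong a (mem_range.1 ha), sum_one_add_div hζ]
  push_cast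
  ring

section

variable [DecidableEq V] [FiniteDimensional ℝ V] {Φ : Finset V}

/-- Type A: `M` cyclically permutes `e 0, …, e m`, and the roots are the `e i - e j`. -/
theorem kwSum_typeA (R : IsRootBase Φ Δ) {p : ℕ → V} {m : ℕ} (hm : 0 < m) (hp : IsPath Δ p m)
    (hΔ : Δ = (range m).image p) :
    KWSum Φ m ((pathWord p m).map rootReflection).prod := by
  obtain ⟨e₀, he₀'⟩ := exists_dual R.ind (fun y => if y = p 0 then (1 : ℝ) else 0)
  have he₀ : ∀ j < m, ⟪e₀, p j⟫ = if j = 0 then (1 : ℝ) else 0 := by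
    intro j hj
    rw [he₀' _ (hp.mem j hj)]
    by_cases h : j = 0
    · simp [h]
    · rw [if_neg h, if_neg fun h' => h (hp.injOn hj hm h')]
  set e := pathVec p e₀ with he
  have hin := pathVec_inner hp he₀
  have hself := pathVec_inner_self hp he₀
  have hs : ∀ j < m, e (j + 1) = e j - p j := fun j _ => pathVec_succ p e₀ j
  rw [← he] at hin hself
  obtain ⟨hM1, hM2, -⟩ := pathProd_apply hin hs m le_rfl
  set M := ((pathWord p m).map rootReflection).prod with hM
  change M (e m) = e 0 at hM1
  change ∀ i < m, M (e i) = e (i + 1) at hM2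
  -- the sequence `e`, extended with period `m + 1`
  set E : ℕ → V := fun a => if a ≤ m then e a else e (a - (m + 1)) with hE
  have hME : ∀ a, a < 2 * m + 1 → M (E a) = E (a + 1) := by
    intro a ha
    simp only [hE]
    rcases lt_trichotomy a m with h | h | h
    · rw [if_pos h.le, if_pos (by omega), hM2 a h]
    · rw [if_pos h.le, if_neg (by omega), h, hM1, Nat.sub_self]
    · rw [if_neg (by omega), if_neg (by omega), hM2 _ (by omega)]
      congr 1; omega
  have hMkE : ∀ k a, a + k ≤ 2 * m + 1 → (M ^ k) (E a) = E (a + k) := by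
    intro k
    induction k with
    | zero => intro a _; simp
    | succ k ih =>
      intro a ha
      rw [pow_succ', Module.End.mul_apply, ih a (by omega), hME _ (by omega), add_assoc]
  have hmem : ∀ y, y ∈ pathWord p m ↔ y ∈ Δ := by
    intro y; rw [hΔ, mem_pathWord]; simp
  have hMH : M ^ (m + 1) = 1 := by
    refine LinearMap.ext_on R.span fun y hy => ?_
    obtain ⟨j, hj, rfl⟩ := mem_pathWord.1 ((hmem y).2 hy)
    have h1 : ∀ a ≤ m, (M ^ (m + 1)) (e a) = e a := by
      intro a ha
      have h2 := hMkE (m + 1) a (by omega)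
      simp only [hE] at h2
      rwa [if_pos ha, if_neg (by omega), Nat.add_sub_cancel] at h2
    have h3 : p j = e j - e (j + 1) := by rw [hs j hj]; abel
    rw [h3, map_sub, h1 j (by omega), h1 (j + 1) (by omega), Module.End.one_apply]
  have hEE : ∀ a ≤ m, ∀ b, b ≤ 2 * m + 1 → ⟪E a, E b⟫
      = (((if b = a ∨ b = a + (m + 1) then 1 else 0 : ℤ)) : ℝ) + (⟪e₀, e₀⟫ - 1) := by
    intro a ha b hb
    simp only [hE]
    rw [if_pos ha]
    split_ifs with h1 h2 h2 <;> rw [hself _ (by omega) _ (by omega)] <;> congr 1 <;>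
      push_cast <;> first | exact if_pos (by omega) | exact if_neg (by omega)
  have hnd : (pathWord p m).Nodup := by
    refine List.Nodup.map_on (fun i hi j hj h => ?_) List.nodup_range
    exact hp.injOn (List.mem_range.1 hi) (List.mem_range.1 hj) h
  have hβE : ∀ i < m, pathProd p i (p i) = E 0 - E (i + 1) := by
    intro i hi
    rw [pathProd_simple hin hs i hi]
    simp only [hE]
    rw [if_pos (by omega), if_pos (by omega)]
  refine R.kwSum_of_gram (pathWord p m) hnd hmem hM (H := m + 1) (by omega) hm hMH
    (fun i => E 0 - E (i + 1)) ?_ ?_ (fun i j k =>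
      (if k = 0 ∨ k = 0 + (m + 1) then 1 else 0)
      - (if j + 1 + k = 0 ∨ j + 1 + k = 0 + (m + 1) then 1 else 0)
      - (if k = i + 1 ∨ k = i + 1 + (m + 1) then 1 else 0)
      + (if j + 1 + k = i + 1 ∨ j + 1 + k = i + 1 + (m + 1) then 1 else 0)) ?_ ?_ ?_
  · intro l1 δ l2 h
    obtain ⟨i, hi, rfl, rfl⟩ := pathWord_split h
    exact ⟨i, hi, hβE i hi⟩
  · intro i hi
    rw [← hβE i hi]
    exact R.prod_mem _ (fun y hy => by
      obtain ⟨j, hj, rfl⟩ := mem_pathWord.1 hy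
      exact hp.mem j (by omega)) (R.sub (hp.mem i hi))
  · intro i hi j hj k hk
    rw [map_sub, hMkE k 0 (by omega), hMkE k (j + 1) (by omega), inner_sub_left, inner_sub_right,
      inner_sub_right, zero_add, hEE 0 (by omega) k (by omega),
      hEE 0 (by omega) (j + 1 + k) (by omega), hEE (i + 1) (by omega) k (by omega),
      hEE (i + 1) (by omega) (j + 1 + k) (by omega)]
    push_cast
    ring
  · intro i hi j hj k hk
    split_ifs <;> intro h <;> omega
  · have hζ : IsPrimitiveRoot (Complex.exp (2 * Real.pi * Complex.I / (m + 1 : ℕ))) (m + 1) :=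
      Complex.isPrimitiveRoot_exp (m + 1) (by omega)
    generalize Complex.exp (2 * Real.pi * Complex.I / (m + 1 : ℕ)) = ζ at hζ
    rw [show (m : ℂ) * ((m + 1 : ℕ) + 1) / 12 = m * (m + 2) / 12 by push_cast; ring,
      ← sum_inv_one_sub hζ]
    refine Finset.sum_congr rfl fun i hi => ?_
    rw [mem_range] at hi
    have h0 : ∀ k ∈ Finset.Icc 1 m, (1 - ζ ^ k) ≠ 0 := by
      intro k hk
      rw [mem_Icc] at hk
      exact sub_ne_zero.2 (Ne.symm (hζ.pow_ne_one_of_pos_of_lt (by omega) (by omega)))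
    rw [Nat.add_sub_cancel, mul_inv, ← zpow_neg_one, ← zpow_neg_one (1 - ζ ^ (m - i)),
      ← prod_zpow_single (fun k => 1 - ζ ^ k) (Finset.Icc 1 m) (a := i + 1)
        (by rw [mem_Icc]; omega),
      ← prod_zpow_single (fun k => 1 - ζ ^ k) (Finset.Icc 1 m) (a := m - i)
        (by rw [mem_Icc]; omega), ← Finset.prod_mul_distrib]
    refine Finset.prod_congr rfl fun k hk => ?_
    rw [← zpow_add₀ (h0 k hk)]
    rw [mem_Icc] at hk
    congr 1
    split_ifs <;> omega

/-- Type D: with `f i = -e i` orthonormal, `p j = f (j + 1) - f j` and `v = f 0 + f 1`; the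
Coxeter element negates `e 0` and permutes `e 1, …, e m` as a negacyclic shift. -/
theorem kwSum_typeD (R : IsRootBase Φ Δ) {p : ℕ → V} {m : ℕ} (hm : 3 ≤ m) (hp : IsPath Δ p m)
    {v : V} (hv : v ∈ Δ) (hvp : ∀ i < m, v ≠ p i) (hΔ : Δ = insert v ((range m).image p))
    (hvi : ∀ i < m, ⟪v, p i⟫ = if i = 1 then (-1 : ℝ) else 0) :
    KWSum Φ (m + 1) ((v :: pathWord p m).map rootReflection).prod := by
  have hv2 := R.norm_Δ hv
  obtain ⟨e₀, he₀v⟩ : ∃ e₀ : V, v = -(e₀ + (e₀ - p 0)) :=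
    ⟨(2 : ℝ)⁻¹ • (p 0 - v), by module⟩
  have he₀h : e₀ = (2 : ℝ)⁻¹ • (p 0 - v) := by rw [he₀v]; module
  have he₀ : ∀ j < m, ⟪e₀, p j⟫ = if j = 0 then (1 : ℝ) else 0 := by
    intro j hj
    rw [he₀h, real_inner_smul_left, inner_sub_left, hp.inner 0 (by omega) j hj, hvi j hj]
    simp only [Nat.add_eq_zero_iff, one_ne_zero, and_false, or_false, zero_add]
    split_ifs <;> first | omega | norm_num
  have he₀s : ⟪e₀, e₀⟫ = (1 : ℝ) := by
    conv_lhs => rw [he₀h]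
    simp only [real_inner_smul_left, real_inner_smul_right, inner_sub_left, inner_sub_right,
      hv2, hvi 0 (by omega), real_inner_comm v (p 0), hp.inner 0 (by omega) 0 (by omega)]
    norm_num
  set e := pathVec p e₀ with he
  have hin := pathVec_inner hp he₀
  have hself := pathVec_inner_self hp he₀
  have hs : ∀ j < m, e (j + 1) = e j - p j := fun j _ => pathVec_succ p e₀ j
  rw [← he] at hin hself
  have hself' : ∀ i ≤ m, ∀ j ≤ m, ⟪e i, e j⟫ = if i = j then (1 : ℝ) else 0 := by
    intro i hi j hj
    rw [hself i hi j hj, he₀s]; ring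
  have he0 : e 0 = e₀ := by simp [he, pathVec]
  have hve : v = -(e 0 + e 1) := by rw [hs 0 (by omega), he0]; exact he₀v
  obtain ⟨hM1, hM2, -⟩ := pathProd_apply hin hs m le_rfl
  set s := rootReflection v with hsv
  have hs0 : s (e 0) = -e 1 := by
    rw [hsv, rootReflection_apply, hve, inner_neg_right, inner_add_right,
      hself' 0 (by omega) 0 (by omega), hself' 0 (by omega) 1 (by omega)]
    simp
  have hs1 : s (e 1) = -e 0 := by
    rw [hsv, rootReflection_apply, hve, inner_neg_right, inner_add_right,
      hself' 1 (by omega) 0 (by omega), hself' 1 (by omega) 1 (by omega)]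
    simp
  have hs2 : ∀ i, 2 ≤ i → i ≤ m → s (e i) = e i := by
    intro i h2 hi
    rw [hsv, rootReflection_apply, hve, inner_neg_right, inner_add_right,
      hself' i hi 0 (by omega), hself' i hi 1 (by omega), if_neg (by omega), if_neg (by omega)]
    simp
  set M := ((v :: pathWord p m).map rootReflection).prod with hM
  have hMs : ∀ x, M x = s (pathProd p m x) := fun x => by
    simp only [hM, List.map_cons, List.prod_cons, Module.End.mul_apply]; rfl
  -- the sequence `e 1, …, e m`, extended antiperiodically with antiperiod `m`
  set E : ℕ → V := fun a => if a < m then e (a + 1) else if a < 2 * m then -e (a - m + 1)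
    else e (a - 2 * m + 1) with hE
  have hM3 : ∀ i, 1 ≤ i → i < m → M (e i) = e (i + 1) := fun i h1 hi => by
    rw [hMs, hM2 i hi, hs2 (i + 1) (by omega) (by omega)]
  have hMm : M (e m) = -e 1 := by rw [hMs, hM1, hs0]
  have hM0 : M (e 0) = -e 0 := by rw [hMs, hM2 0 (by omega), hs1]
  have hME : ∀ a, a + 1 < 3 * m → M (E a) = E (a + 1) := by
    intro a ha
    simp only [hE]
    rcases lt_trichotomy (a + 1) m with h | h | h
    · rw [if_pos (by omega), if_pos (by omega), hM3 _ (by omega) (by omega)]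
    · rw [if_pos (by omega), if_neg (by omega), if_pos (by omega), h, hMm, Nat.sub_self]
    · rw [if_neg (by omega), if_neg (c := a + 1 < m) (by omega)]
      rcases lt_trichotomy (a + 1) (2 * m) with h | h | h
      · rw [if_pos (by omega), if_pos (by omega), map_neg, hM3 _ (by omega) (by omega)]
        congr 2; omega
      · rw [if_pos (by omega), if_neg (by omega), map_neg, show a - m + 1 = m by omega, hMm,
          neg_neg]
        congr 1; omega
      · rw [if_neg (by omega), if_neg (by omega), hM3 _ (by omega) (by omega)]
        congr 1; omega
  have hMkE : ∀ k a, a + k < 3 * m → (M ^ k) (E a) = E (a + k) := by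
    intro k
    induction k with
    | zero => intro a _; simp
    | succ k ih =>
      intro a ha
      rw [pow_succ', Module.End.mul_apply, ih a (by omega), hME _ (by omega), add_assoc]
  have hMk0 : ∀ k, (M ^ k) (e 0) = (if k % 2 = 0 then (1 : ℝ) else -1) • e 0 := by
    intro k
    induction k with
    | zero => simp
    | succ k ih =>
      rw [pow_succ', Module.End.mul_apply, ih, map_smul, hM0, smul_neg, ← neg_smul]
      congr 1
      split_ifs <;> first | omega | norm_num
  have hmem : ∀ y, y ∈ v :: pathWord p m ↔ y ∈ Δ := by
    intro y; rw [hΔ, List.mem_cons, mem_pathWord]; simp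
  have hMH : M ^ (2 * m) = 1 := by
    have h1 : ∀ a ≤ m, (M ^ (2 * m)) (e a) = e a := by
      intro a ha
      rcases Nat.eq_zero_or_pos a with rfl | h0
      · rw [hMk0, if_pos (by omega), one_smul]
      · have h2 := hMkE (2 * m) (a - 1) (by omega)
        simp only [hE] at h2
        rwa [if_pos (by omega), if_neg (by omega), if_neg (by omega), Nat.add_sub_cancel,
          Nat.sub_add_cancel h0] at h2
    refine LinearMap.ext_on R.span fun y hy => ?_
    rcases List.mem_cons.1 ((hmem y).2 hy) with rfl | h2
    · rw [hve, map_neg, map_add, h1 0 (by omega), h1 1 (by omega), Module.End.one_apply]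
    · obtain ⟨j, hj, rfl⟩ := mem_pathWord.1 h2
      have h3 : p j = e j - e (j + 1) := by rw [hs j hj]; abel
      rw [h3, map_sub, h1 j (by omega), h1 (j + 1) (by omega), Module.End.one_apply]
  have hEE : ∀ a < m, ∀ b < 3 * m, ⟪E a, E b⟫
      = (((if b = a ∨ b = a + 2 * m then 1 else if b = a + m then -1 else 0 : ℤ)) : ℝ) := by
    intro a ha b hb
    simp only [hE]
    rw [if_pos ha]
    by_cases h1 : b < m
    · rw [if_pos h1, hself' _ (by omega) _ (by omega)]
      split_ifs <;> first | omega | norm_num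
    · rw [if_neg h1]
      by_cases h2 : b < 2 * m
      · rw [if_pos h2, inner_neg_right, hself' _ (by omega) _ (by omega)]
        split_ifs <;> first | omega | norm_num
      · rw [if_neg h2, hself' _ (by omega) _ (by omega)]
        split_ifs <;> first | omega | norm_num
  have h0E : ∀ b < 3 * m, ⟪e 0, E b⟫ = (0 : ℝ) ∧ ⟪E b, e 0⟫ = (0 : ℝ) := by
    intro b hb
    rw [real_inner_comm (e 0), and_self]
    simp only [hE]
    split_ifs <;> (try rw [inner_neg_right]) <;> rw [hself' _ (by omega) _ (by omega)] <;> simp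
  have hnd : (v :: pathWord p m).Nodup := by
    refine List.nodup_cons.2 ⟨fun h => ?_, List.Nodup.map_on (fun i hi j hj h => ?_) List.nodup_range⟩
    · obtain ⟨i, hi, h⟩ := mem_pathWord.1 h
      exact hvp i hi h.symm
    · exact hp.injOn (List.mem_range.1 hi) (List.mem_range.1 hj) h
  have hE0 : E 0 = e 1 := by simp only [hE]; rw [if_pos (by omega)]
  set β : ℕ → V := fun i => (dEps i : ℝ) • e 0 - E 0 - (dTau i : ℝ) • E (i - 1) with hβ
  have hβv : v = β 0 := by
    simp only [hβ, dEps, dTau, hE0]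
    rw [hve]; simp; abel
  have hβp : ∀ i < m, s (pathProd p i (p i)) = β (i + 1) := by
    intro i hi
    rw [pathProd_simple hin hs i hi, map_sub, hs0]
    rcases Nat.eq_zero_or_pos i with rfl | h0
    · rw [hs1]
      simp only [hβ, dEps, dTau, hE0]; simp; abel
    · rw [hs2 _ (by omega) (by omega)]
      simp only [hβ, dEps, dTau, hE0]
      rw [if_neg (by omega), if_neg (by omega), if_neg (by omega)]
      simp only [hE]
      rw [if_pos (by omega)]
      simp
  refine R.kwSum_of_gram (v :: pathWord p m) hnd hmem hM (H := 2 * m) (by omega) (by omega) hMH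
    β ?_ ?_ (typeDGram m) ?_ ?_ ?_
  · intro l1 δ l2 h
    rcases l1 with - | ⟨a, l1⟩
    · simp only [List.nil_append, List.cons.injEq] at h
      exact ⟨0, by omega, by rw [← h.1]; simpa using hβv⟩
    · simp only [List.cons_append, List.cons.injEq] at h
      obtain ⟨i, hi, rfl, rfl⟩ := pathWord_split h.2
      refine ⟨i + 1, by omega, ?_⟩
      rw [← hβp i hi, ← h.1]
      simp only [List.map_cons, List.prod_cons, Module.End.mul_apply]
      rfl
  · intro i hi
    rcases i with - | i
    · rw [← hβv]; exact R.sub hv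
    · rw [← hβp i (by omega)]
      exact R.refl _ (R.sub hv) _ (R.prod_mem _ (fun y hy => by
        obtain ⟨j, hj, rfl⟩ := mem_pathWord.1 hy
        exact hp.mem j (by omega)) (R.sub (hp.mem i (by omega))))
  · intro i hi j hj k hk
    simp only [hβ]
    rw [map_sub, map_sub, map_smul, map_smul, hMkE k 0 (by omega), hMkE k (j - 1) (by omega), hMk0,
      zero_add]
    simp only [inner_sub_left, inner_sub_right, real_inner_smul_left, real_inner_smul_right]
    rw [hEE 0 (by omega) k (by omega), hEE 0 (by omega) (j - 1 + k) (by omega),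
      hEE (i - 1) (by omega) k (by omega), hEE (i - 1) (by omega) (j - 1 + k) (by omega),
      (h0E k (by omega)).1, (h0E (j - 1 + k) (by omega)).1, (h0E (i - 1) (by omega)).2,
      (h0E 0 (by omega)).2, hself' 0 (by omega) 0 (by omega), if_pos rfl]
    simp only [typeDGram, negShift]
    push_cast
    ring
  · exact typeDGram_eq_two hm
  · exact sum_typeDGram hm

end

end

/-! ### Integer coordinates in type E -/

/-- The vector with integer coordinates `L` with respect to the family `w`. -/
def listVec (w : ℕ → V) : List ℤ → V
  | [] => 0
  | x :: xs => (x : ℝ) • w 0 + listVec (fun i => w (i + 1)) xs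

/-- The dot product of two coordinate lists, the longer one being truncated. -/
def listDot : List ℤ → List ℤ → ℤ
  | x :: xs, y :: ys => x * y + listDot xs ys
  | _, _ => 0

/-- Adds `a` to the entry of index `k`. -/
def listAdd : ℕ → ℤ → List ℤ → List ℤ
  | _, _, [] => []
  | 0, a, x :: xs => (x + a) :: xs
  | k + 1, a, x :: xs => x :: listAdd k a xs

/-- The coordinates of the basis vector of index `j`. -/
def listUnit (n j : ℕ) : List ℤ := listAdd j 1 (List.replicate n 0)

/-- `f x`, organised such that evaluation of the application first brings the list `x` into
normal form; this keeps evaluation by the kernel from repeating work. -/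
def forced {α : Type*} : List ℤ → (List ℤ → α) → α
  | [], f => f []
  | .ofNat 0 :: xs, f => forced xs fun ys => f (.ofNat 0 :: ys)
  | .ofNat (n + 1) :: xs, f => forced xs fun ys => f (.ofNat (n + 1) :: ys)
  | .negSucc 0 :: xs, f => forced xs fun ys => f (.negSucc 0 :: ys)
  | .negSucc (n + 1) :: xs, f => forced xs fun ys => f (.negSucc (n + 1) :: ys)

lemma forced_eq {α : Type*} (x : List ℤ) (f : List ℤ → α) : forced x f = f x := by
  induction x generalizing f with
  | nil => rfl
  | cons a x ih => rcases a with (- | n) | (- | n) <;> simp only [forced, ih]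

/-- As `forced`, for a list of lists. -/
def forcedAll {α : Type*} : List (List ℤ) → (List (List ℤ) → α) → α
  | [], f => f []
  | x :: xs, f => forced x fun y => forcedAll xs fun ys => f (y :: ys)

lemma forcedAll_eq {α : Type*} (x : List (List ℤ)) (f : List (List ℤ) → α) :
    forcedAll x f = f x := by
  induction x generalizing f with
  | nil => rfl
  | cons a x ih => simp only [forcedAll, ih, forced_eq]

/-- The rows of the Gram matrix of `E₈`; its leading blocks of sizes `6` and `7` are the Gram
matrices of `E₆` and `E₇`. Index `0` is the branch of length one, attached to index `3`. -/
def gramRows : List (List ℤ) :=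
  [[2, 0, 0, -1, 0, 0, 0, 0],
   [0, 2, -1, 0, 0, 0, 0, 0],
   [0, -1, 2, -1, 0, 0, 0, 0],
   [-1, 0, -1, 2, -1, 0, 0, 0],
   [0, 0, 0, -1, 2, -1, 0, 0],
   [0, 0, 0, 0, -1, 2, -1, 0],
   [0, 0, 0, 0, 0, -1, 2, -1],
   [0, 0, 0, 0, 0, 0, -1, 2]]

lemma gramRows_eq : ∀ i < 8, ∀ j < 8, (gramRows.getD j []).getD i 0 = treeGram 2 i j := by
  decide

/-- The product of the first `k` simple reflections in coordinates. -/
def listProd : ℕ → List ℤ → List ℤ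
  | 0, c => c
  | k + 1, c => forced (listAdd k (-listDot c (gramRows.getD k [])) c) (listProd k)

/-- The coordinates of the orbit representative `s₀ ⋯ s_{j-1} (w j)`. -/
def listRep (n j : ℕ) : List ℤ := listProd j (listUnit n j)

/-- The inner products of the orbit representative of index `i` with the basis. -/
def listRow (n i : ℕ) : List ℤ := (gramRows.take n).map (listDot (listRep n i))

/-- `⟪β i, M ^ k (β j)⟫` in coordinates. -/
def listGram (n i j k : ℕ) : ℤ := listDot ((listProd n)^[k] (listRep n j)) (listRow n i)

/-- The check, for the `f` consecutive vectors of an orbit starting with `M ^ k (β j) = c`, that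
their inner products with `β i` for `i ≠ j` differ from `2`, and for `i = j` are as tabulated;
the table covers half a period. -/
def checkOrbit (n H j : ℕ) (T : List ℤ) (rows : List (List ℤ)) : ℕ → ℕ → List ℤ → Bool
  | 0, _, _ => true
  | f + 1, k, c =>
    decide (∀ i < n, if i = j then listDot c (rows.getD i []) = T.getD (min k (H - k)) 0
      else listDot c (rows.getD i []) ≠ 2) &&
    forced (listProd n c) (checkOrbit n H j T rows f (k + 1))

lemma checkOrbit_spec {n H j : ℕ} {T : List ℤ} {rows : List (List ℤ)} {f k : ℕ} {c : List ℤ}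
    (h : checkOrbit n H j T rows f k c = true) : ∀ a < f, ∀ i < n,
      if i = j then listDot ((listProd n)^[a] c) (rows.getD i [])
        = T.getD (min (k + a) (H - (k + a))) 0
      else listDot ((listProd n)^[a] c) (rows.getD i []) ≠ 2 := by
  induction f generalizing k c with
  | zero => intro a ha; omega
  | succ f ih =>
    simp only [checkOrbit, forced_eq, Bool.and_eq_true, decide_eq_true_eq] at h
    intro a ha
    rcases a with - | a
    · exact h.1
    · have := ih h.2 a (by omega)
      rw [Function.iterate_succ_apply]
      rwa [show k + 1 + a = k + (a + 1) by ring] at this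

/-- The iterate `M ^ f` in coordinates. -/
def listIter (n : ℕ) : ℕ → List ℤ → List ℤ
  | 0, c => c
  | f + 1, c => forced (listProd n c) (listIter n f)

lemma listIter_eq (n f : ℕ) (c : List ℤ) : listIter n f c = (listProd n)^[f] c := by
  induction f generalizing c with
  | zero => rfl
  | succ f ih => rw [listIter, forced_eq, ih, Function.iterate_succ_apply]

/-- The check that `M ^ H = 1` and that all orbits pass `checkOrbit`. -/
def checkAll (n H : ℕ) (T : List (List ℤ)) : Bool :=
  decide (∀ j < n, listIter n H (listUnit n j) = listUnit n j) &&
  forcedAll ((List.range n).map (listRow n)) fun rows =>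
    decide (∀ j < n, checkOrbit n H j (T.getD j []) rows H 0 (listRep n j) = true)

lemma checkAll_spec {n H : ℕ} {T : List (List ℤ)} (h : checkAll n H T = true) :
    (∀ j < n, (listProd n)^[H] (listUnit n j) = listUnit n j) ∧
    ∀ i < n, ∀ j < n, ∀ k < H, if i = j
      then listGram n i j k = (T.getD j []).getD (min k (H - k)) 0 else listGram n i j k ≠ 2 := by
  simp only [checkAll, forcedAll_eq, Bool.and_eq_true, decide_eq_true_eq, listIter_eq] at h
  refine ⟨h.1, fun i hi j hj k hk => ?_⟩
  have h1 := checkOrbit_spec (h.2 j hj) k hk i hi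
  have h2 : ((List.range n).map (listRow n)).getD i [] = listRow n i := by
    simp [List.getD, hi]
  rw [h2, zero_add] at h1
  exact h1

/-! ### Type E -/

lemma length_listAdd (k : ℕ) (a : ℤ) (L : List ℤ) : (listAdd k a L).length = L.length := by
  induction L generalizing k with
  | nil => cases k <;> rfl
  | cons x L ih => cases k <;> simp [listAdd, ih]

lemma length_listUnit (n j : ℕ) : (listUnit n j).length = n := by
  rw [listUnit, length_listAdd, List.length_replicate]

lemma length_listProd (k : ℕ) (c : List ℤ) : (listProd k c).length = c.length := by
  induction k generalizing c with
  | zero => rfl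
  | succ k ih => rw [listProd, forced_eq, ih, length_listAdd]

lemma length_iterate (n k : ℕ) (c : List ℤ) : ((listProd n)^[k] c).length = c.length := by
  induction k with
  | zero => rfl
  | succ k ih => rw [Function.iterate_succ_apply', length_listProd, ih]

lemma listVec_add (w : ℕ → V) (k : ℕ) (a : ℤ) (L : List ℤ) (hk : k < L.length) :
    listVec w (listAdd k a L) = listVec w L + (a : ℝ) • w k := by
  induction L generalizing k w with
  | nil => simp at hk
  | cons x L ih =>
    cases k with
    | zero => simp only [listAdd, listVec]; push_cast; module
    | succ k =>
      simp only [listAdd, listVec]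
      rw [ih _ k (by simpa using hk)]
      abel

lemma listVec_unit (w : ℕ → V) (n j : ℕ) (hj : j < n) : listVec w (listUnit n j) = w j := by
  have h0 : ∀ (n : ℕ) (w : ℕ → V), listVec w (List.replicate n 0) = 0 := by
    intro n
    induction n with
    | zero => intro w; rfl
    | succ n ih => intro w; simp [List.replicate_succ, listVec, ih]
  rw [listUnit, listVec_add _ _ _ _ (by simpa using hj), h0]
  simp

lemma listVec_inner (w : ℕ → V) (y : V) (L row : List ℤ)
    (h : ∀ i < L.length, ⟪w i, y⟫ = ((row.getD i 0 : ℤ) : ℝ)) :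
    ⟪listVec w L, y⟫ = (listDot L row : ℝ) := by
  induction L generalizing w row with
  | nil => simp [listVec, listDot]
  | cons x L ih =>
    have h0 := h 0 (by simp)
    rw [listVec, inner_add_left, real_inner_smul_left, h0]
    cases row with
    | nil =>
      rw [ih (fun i => w (i + 1)) [] fun i hi => by
        have := h (i + 1) (by simpa using hi)
        simpa using this]
      have : listDot L [] = 0 := by cases L <;> rfl
      simp [listDot, this]
    | cons r row =>
      rw [ih (fun i => w (i + 1)) row fun i hi => by
        have := h (i + 1) (by simpa using hi)
        simpa using this]
      simp [listDot]

section

variable {w : ℕ → V} {n : ℕ}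

lemma pathProd_listVec (hn : n ≤ 8)
    (hw : ∀ i < n, ∀ j < n, ⟪w i, w j⟫ = ((treeGram 2 i j : ℤ) : ℝ)) (k : ℕ) (hk : k ≤ n)
    (L : List ℤ) (hL : L.length = n) :
    pathProd w k (listVec w L) = listVec w (listProd k L) := by
  induction k generalizing L with
  | zero => simp [pathProd, pathWord, listProd]
  | succ k ih =>
    rw [pathProd_succ, listProd, forced_eq, ← ih (by omega) _ (by rw [length_listAdd, hL]),
      listVec_add _ _ _ _ (by omega), rootReflection_apply,
      listVec_inner w (w k) L (gramRows.getD k []) fun i hi => by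
        rw [hw i (by omega) k (by omega), gramRows_eq i (by omega) k (by omega)]]
    congr 1
    push_cast
    module

variable [DecidableEq V] [FiniteDimensional ℝ V] {Φ Δ : Finset V}

/-- Type E: the identity follows from the numerical check and an evaluation of the sum for the
tabulated exponents. -/
theorem kwSum_typeE (R : IsRootBase Φ Δ) (hn : n ≤ 8) (hn0 : 0 < n)
    (hw : ∀ i < n, ∀ j < n, ⟪w i, w j⟫ = ((treeGram 2 i j : ℤ) : ℝ))
    (hnd : (pathWord w n).Nodup) (hmem : ∀ y, y ∈ pathWord w n ↔ y ∈ Δ) {H : ℕ} (hH : 0 < H)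
    (T : List (List ℤ)) (hT : checkAll n H T = true)
    (hT2 : ∀ i < n, ∀ k < H, (T.getD i []).getD (min k (H - k)) 0 = 2 → k = 0)
    (hsum : ∑ i ∈ range n, ∏ k ∈ Finset.Icc 1 (H - 1),
      ((1 : ℂ) - Complex.exp (2 * Real.pi * Complex.I / H) ^ k) ^
        ((T.getD i []).getD (min k (H - k)) 0) = (n : ℂ) * (H + 1) / 12) :
    KWSum Φ n ((pathWord w n).map rootReflection).prod := by
  obtain ⟨hper, hgram⟩ := checkAll_spec hT
  have hlen : ∀ j, (listRep n j).length = n := fun j => by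
    rw [listRep, length_listProd, length_listUnit]
  have hpow : ∀ k (L : List ℤ), L.length = n →
      ((pathProd w n) ^ k) (listVec w L) = listVec w ((listProd n)^[k] L) := by
    intro k L hL
    induction k with
    | zero => simp
    | succ k ih =>
      rw [pow_succ', Module.End.mul_apply, ih, Function.iterate_succ_apply',
        pathProd_listVec hn hw n le_rfl _ (by rw [length_iterate, hL])]
  have hrep : ∀ j < n, pathProd w j (w j) = listVec w (listRep n j) := by
    intro j hj
    rw [listRep, ← pathProd_listVec hn hw j hj.le _ (length_listUnit n j), listVec_unit _ _ _ hj]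
  have hMH : (pathProd w n) ^ H = 1 := by
    refine LinearMap.ext_on R.span fun y hy => ?_
    obtain ⟨j, hj, rfl⟩ := mem_pathWord.1 ((hmem y).2 hy)
    have h1 := hpow H (listUnit n j) (length_listUnit n j)
    rwa [hper j hj, listVec_unit _ _ _ hj] at h1
  refine R.kwSum_of_gram (pathWord w n) hnd hmem rfl hH hn0 hMH (fun j => listVec w (listRep n j))
    ?_ ?_ (listGram n) ?_ ?_ ?_
  · intro l1 δ l2 h
    obtain ⟨i, hi, rfl, rfl⟩ := pathWord_split h
    exact ⟨i, hi, hrep i hi⟩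
  · intro i hi
    rw [← hrep i hi]
    exact R.prod_mem _ (fun y hy => by
      obtain ⟨j, hj, rfl⟩ := mem_pathWord.1 hy
      exact (hmem _).1 (mem_pathWord.2 ⟨j, by omega, rfl⟩))
      (R.sub ((hmem _).1 (mem_pathWord.2 ⟨i, hi, rfl⟩)))
  · intro i hi j hj k hk
    have h1 := hpow k (listRep n j) (hlen j)
    change ⟪_, ((pathProd w n) ^ k) _⟫ = _
    rw [h1, real_inner_comm, listGram]
    refine listVec_inner w _ _ _ fun a ha => ?_
    rw [length_iterate, hlen] at ha
    have h2 : (listRow n i).getD a 0 = listDot (listRep n i) (gramRows.getD a []) := by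
      have h3 : a < gramRows.length := lt_of_lt_of_le ha hn
      simp [listRow, List.getD, ha, h3]
    rw [h2, real_inner_comm]
    refine listVec_inner w _ _ _ fun b hb => ?_
    rw [hlen] at hb
    rw [hw b hb a ha, gramRows_eq b (by omega) a (by omega)]
  · intro i hi j hj k hk h2
    have h1 := hgram i hi j hj k hk
    by_cases hij : i = j
    · rw [if_pos hij] at h1
      exact ⟨hij, hT2 j hj k hk (by rw [← h1, h2])⟩
    · rw [if_neg hij] at h1
      exact absurd h2 h1
  · rw [← hsum]
    refine Finset.sum_congr rfl fun i hi => Finset.prod_congr rfl fun k hk => ?_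
    rw [mem_range] at hi
    rw [mem_Icc] at hk
    have h1 := hgram i hi i hi k (by omega)
    rw [if_pos rfl] at h1
    rw [h1]

end

/-- The inner products `⟪β i, M ^ k (β i)⟫` for `0 ≤ k ≤ 6` in type `E₆`. -/
def tableE6 : List (List ℤ) :=
  [[2, -1, 1, 0, -1, 1, -2], [2, -1, 0, 1, -1, 0, 0], [2, 0, 0, 1, -1, -1, 0],
   [2, 1, 1, 0, -1, -1, -2], [2, 0, 0, 1, -1, -1, 0], [2, -1, 0, 1, -1, 0, 0]]

/-- The inner products `⟪β i, M ^ k (β i)⟫` for `0 ≤ k ≤ 9` in type `E₇`. -/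
def tableE7 : List (List ℤ) :=
  [[2, -1, 1, 0, 0, 0, 0, -1, 1, -2], [2, -1, 0, 1, -1, 1, -1, 0, 1, -2],
   [2, 0, 0, 1, 0, 0, -1, 0, 0, -2], [2, 1, 1, 1, 0, 0, -1, -1, -1, -2],
   [2, 0, 1, 0, 1, -1, 0, -1, 0, -2], [2, 0, -1, 1, 1, -1, -1, 1, 0, -2],
   [2, -1, 0, 0, 1, -1, 0, 0, 1, -2]]

/-- The inner products `⟪β i, M ^ k (β i)⟫` for `0 ≤ k ≤ 15` in type `E₈`. -/
def tableE8 : List (List ℤ) :=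
  [[2, -1, 1, 0, 0, 1, -1, 1, -1, 1, -1, 0, 0, -1, 1, -2],
   [2, -1, 0, 1, -1, 1, 0, -1, 1, 0, -1, 1, -1, 0, 1, -2],
   [2, 0, 0, 1, 0, 1, 0, -1, 1, 0, -1, 0, -1, 0, 0, -2],
   [2, 1, 1, 1, 1, 1, 0, 0, 0, 0, -1, -1, -1, -1, -1, -2],
   [2, 0, 1, 1, 0, 1, 0, 0, 0, 0, -1, 0, -1, -1, 0, -2],
   [2, 0, 0, 0, 1, 1, -1, 0, 0, 1, -1, -1, 0, 0, 0, -2],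
   [2, 0, -1, 0, 1, 1, -1, -1, 1, 1, -1, -1, 0, 1, 0, -2],
   [2, -1, 0, 0, 0, 1, -1, 0, 0, 1, -1, 0, 0, 0, 1, -2]]

lemma checkAll_E6 : checkAll 6 12 tableE6 = true := by decide +kernel

lemma checkAll_E7 : checkAll 7 18 tableE7 = true := by decide +kernel

lemma checkAll_E8 : checkAll 8 30 tableE8 = true := by decide +kernel

/-! ### The sums in type E -/

/-- The sum over the orbit representatives in type `E₆`, with `w k` standing for
`(1 - η ^ k) * (1 - η⁻¹ ^ k)`: every product is a polynomial in `c = η + η⁻¹`, a root of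
`x² - 3`. -/
lemma sum_E6 {c : ℂ} {w : ℕ → ℂ} (h0 : w 0 = 0) (h1 : w 1 = 2 - c)
    (hw : ∀ k, w (k + 2) = c * w (k + 1) - w k + 4 - 2 * c) (hne : ∀ k, 0 < k → k < 6 → w k ≠ 0)
    (hc : c ^ 2 - 3 = 0) :
    ∑ i ∈ range 6, (∏ k ∈ Icc 1 5, w k ^ ((tableE6.getD i []).getD k 0)) *
      2 ^ ((tableE6.getD i []).getD 6 0) = (6 : ℂ) * (12 + 1) / 12 := by
  have h2 : w 2 = 1 := by
    linear_combination hw 0 + c * h1 - h0 + (-1) * hc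
  have h3 : w 3 = 2 := by
    linear_combination hw 1 + c * h2 - h1
  have h4 : w 4 = 3 := by
    linear_combination hw 2 + c * h3 - h2
  have h5 : w 5 = c + 2 := by
    linear_combination hw 3 + c * h4 - h3
  have n1 := hne 1 (by norm_num) (by norm_num)
  have n2 := hne 2 (by norm_num) (by norm_num)
  have n3 := hne 3 (by norm_num) (by norm_num)
  have n4 := hne 4 (by norm_num) (by norm_num)
  have n5 := hne 5 (by norm_num) (by norm_num)
  have e : ∀ f : ℕ → ℂ, ∏ k ∈ Icc 1 5, f k =
      f 1 * f 2 * f 3 * f 4 * f 5 := by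
    intro f
    rw [prod_Icc_eq_range]
    simp only [prod_range_succ, prod_range_zero, one_mul, zero_add, Nat.reduceAdd]
  have r0 : (∏ k ∈ Icc 1 5, w k ^ ((tableE6.getD 0 []).getD k 0)) *
      2 ^ ((tableE6.getD 0 []).getD 6 0) = 1 / 3 * c + 7 / 12 := by
    rw [e]
    change w 1 ^ (-1 : ℤ) * w 2 ^ (1 : ℤ) * w 3 ^ (0 : ℤ) * w 4 ^ (-1 : ℤ) * w 5 ^ (1 : ℤ)
        * 2 ^ (-2 : ℤ) = _
    have : (w 2 * w 5 * (1 / 4)) / (w 1 * w 4) = 1 / 3 * c + 7 / 12 := by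
      rw [div_eq_iff (mul_ne_zero n1 n4), h1, h2, h4, h5]
      linear_combination 1 * hc
    rw [← this]
    simp only [zpow_neg, zpow_ofNat]
    ring
  have r1 : (∏ k ∈ Icc 1 5, w k ^ ((tableE6.getD 1 []).getD k 0)) *
      2 ^ ((tableE6.getD 1 []).getD 6 0) = 2 / 3 * c + 4 / 3 := by
    rw [e]
    change w 1 ^ (-1 : ℤ) * w 2 ^ (0 : ℤ) * w 3 ^ (1 : ℤ) * w 4 ^ (-1 : ℤ) * w 5 ^ (0 : ℤ)
        * 2 ^ (0 : ℤ) = _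
    have : (w 3) / (w 1 * w 4) = 2 / 3 * c + 4 / 3 := by
      rw [div_eq_iff (mul_ne_zero n1 n4), h1, h3, h4]
      linear_combination 2 * hc
    rw [← this]
    simp only [zpow_neg, zpow_ofNat]
    ring
  have r2 : (∏ k ∈ Icc 1 5, w k ^ ((tableE6.getD 2 []).getD k 0)) *
      2 ^ ((tableE6.getD 2 []).getD 6 0) = -2 / 3 * c + 4 / 3 := by
    rw [e]
    change w 1 ^ (0 : ℤ) * w 2 ^ (0 : ℤ) * w 3 ^ (1 : ℤ) * w 4 ^ (-1 : ℤ) * w 5 ^ (-1 : ℤ)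
        * 2 ^ (0 : ℤ) = _
    have : (w 3) / (w 4 * w 5) = -2 / 3 * c + 4 / 3 := by
      rw [div_eq_iff (mul_ne_zero n4 n5), h3, h4, h5]
      linear_combination 2 * hc
    rw [← this]
    simp only [zpow_neg, zpow_ofNat]
    ring
  have r3 : (∏ k ∈ Icc 1 5, w k ^ ((tableE6.getD 3 []).getD k 0)) *
      2 ^ ((tableE6.getD 3 []).getD 6 0) = -1 / 3 * c + 7 / 12 := by
    rw [e]
    change w 1 ^ (1 : ℤ) * w 2 ^ (1 : ℤ) * w 3 ^ (0 : ℤ) * w 4 ^ (-1 : ℤ) * w 5 ^ (-1 : ℤ)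
        * 2 ^ (-2 : ℤ) = _
    have : (w 1 * w 2 * (1 / 4)) / (w 4 * w 5) = -1 / 3 * c + 7 / 12 := by
      rw [div_eq_iff (mul_ne_zero n4 n5), h1, h2, h4, h5]
      linear_combination 1 * hc
    rw [← this]
    simp only [zpow_neg, zpow_ofNat]
    ring
  have r4 : (∏ k ∈ Icc 1 5, w k ^ ((tableE6.getD 4 []).getD k 0)) *
      2 ^ ((tableE6.getD 4 []).getD 6 0) = -2 / 3 * c + 4 / 3 := by
    rw [e]
    change w 1 ^ (0 : ℤ) * w 2 ^ (0 : ℤ) * w 3 ^ (1 : ℤ) * w 4 ^ (-1 : ℤ) * w 5 ^ (-1 : ℤ)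
        * 2 ^ (0 : ℤ) = _
    have : (w 3) / (w 4 * w 5) = -2 / 3 * c + 4 / 3 := by
      rw [div_eq_iff (mul_ne_zero n4 n5), h3, h4, h5]
      linear_combination 2 * hc
    rw [← this]
    simp only [zpow_neg, zpow_ofNat]
    ring
  have r5 : (∏ k ∈ Icc 1 5, w k ^ ((tableE6.getD 5 []).getD k 0)) *
      2 ^ ((tableE6.getD 5 []).getD 6 0) = 2 / 3 * c + 4 / 3 := by
    rw [e]
    change w 1 ^ (-1 : ℤ) * w 2 ^ (0 : ℤ) * w 3 ^ (1 : ℤ) * w 4 ^ (-1 : ℤ) * w 5 ^ (0 : ℤ)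
        * 2 ^ (0 : ℤ) = _
    have : (w 3) / (w 1 * w 4) = 2 / 3 * c + 4 / 3 := by
      rw [div_eq_iff (mul_ne_zero n1 n4), h1, h3, h4]
      linear_combination 2 * hc
    rw [← this]
    simp only [zpow_neg, zpow_ofNat]
    ring
  simp only [sum_range_succ, sum_range_zero, r0, r1, r2, r3, r4, r5]
  ring

/-- The sum over the orbit representatives in type `E₇`, with `w k` standing for
`(1 - η ^ k) * (1 - η⁻¹ ^ k)`: every product is a polynomial in `c = η + η⁻¹`, a root of
`x³ - 3x - 1`. -/
lemma sum_E7 {c : ℂ} {w : ℕ → ℂ} (h0 : w 0 = 0) (h1 : w 1 = 2 - c)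
    (hw : ∀ k, w (k + 2) = c * w (k + 1) - w k + 4 - 2 * c) (hne : ∀ k, 0 < k → k < 9 → w k ≠ 0)
    (hc : c ^ 3 - 3 * c - 1 = 0) :
    ∑ i ∈ range 7, (∏ k ∈ Icc 1 8, w k ^ ((tableE7.getD i []).getD k 0)) *
      2 ^ ((tableE7.getD i []).getD 9 0) = (7 : ℂ) * (18 + 1) / 12 := by
  have h2 : w 2 = -c ^ 2 + 4 := by
    linear_combination hw 0 + c * h1 - h0
  have h3 : w 3 = 1 := by
    linear_combination hw 1 + c * h2 - h1 + (-1) * hc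
  have h4 : w 4 = c ^ 2 - c := by
    linear_combination hw 2 + c * h3 - h2
  have h5 : w 5 = -c ^ 2 + c + 4 := by
    linear_combination hw 3 + c * h4 - h3 + 1 * hc
  have h6 : w 6 = 3 := by
    linear_combination hw 4 + c * h5 - h4 + (-1) * hc
  have h7 : w 7 = c ^ 2 := by
    linear_combination hw 5 + c * h6 - h5
  have h8 : w 8 = c + 2 := by
    linear_combination hw 6 + c * h7 - h6 + 1 * hc
  have n1 := hne 1 (by norm_num) (by norm_num)
  have n2 := hne 2 (by norm_num) (by norm_num)
  have n3 := hne 3 (by norm_num) (by norm_num)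
  have n4 := hne 4 (by norm_num) (by norm_num)
  have n5 := hne 5 (by norm_num) (by norm_num)
  have n6 := hne 6 (by norm_num) (by norm_num)
  have n7 := hne 7 (by norm_num) (by norm_num)
  have n8 := hne 8 (by norm_num) (by norm_num)
  have e : ∀ f : ℕ → ℂ, ∏ k ∈ Icc 1 8, f k =
      f 1 * f 2 * f 3 * f 4 * f 5 * f 6 * f 7 * f 8 := by
    intro f
    rw [prod_Icc_eq_range]
    simp only [prod_range_succ, prod_range_zero, one_mul, zero_add, Nat.reduceAdd]
  have r0 : (∏ k ∈ Icc 1 8, w k ^ ((tableE7.getD 0 []).getD k 0)) *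
      2 ^ ((tableE7.getD 0 []).getD 9 0) = -2 * c ^ 2 + c + 25 / 4 := by
    rw [e]
    change w 1 ^ (-1 : ℤ) * w 2 ^ (1 : ℤ) * w 3 ^ (0 : ℤ) * w 4 ^ (0 : ℤ) * w 5 ^ (0 : ℤ)
        * w 6 ^ (0 : ℤ) * w 7 ^ (-1 : ℤ) * w 8 ^ (1 : ℤ) * 2 ^ (-2 : ℤ) = _
    have : (w 2 * w 8 * (1 / 4)) / (w 1 * w 7) = -2 * c ^ 2 + c + 25 / 4 := by
      rw [div_eq_iff (mul_ne_zero n1 n7), h1, h2, h7, h8]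
      linear_combination (-2 * c ^ 2 + 5 * c - 2) * hc
    rw [← this]
    simp only [zpow_neg, zpow_ofNat]
    ring
  have r1 : (∏ k ∈ Icc 1 8, w k ^ ((tableE7.getD 1 []).getD k 0)) *
      2 ^ ((tableE7.getD 1 []).getD 9 0) = 1 / 3 * c ^ 2 + c + 3 / 4 := by
    rw [e]
    change w 1 ^ (-1 : ℤ) * w 2 ^ (0 : ℤ) * w 3 ^ (1 : ℤ) * w 4 ^ (-1 : ℤ) * w 5 ^ (1 : ℤ)
        * w 6 ^ (-1 : ℤ) * w 7 ^ (0 : ℤ) * w 8 ^ (1 : ℤ) * 2 ^ (-2 : ℤ) = _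
    have : (w 3 * w 5 * w 8 * (1 / 4)) / (w 1 * w 4 * w 6) = 1 / 3 * c ^ 2 + c + 3 / 4 := by
      rw [div_eq_iff (mul_ne_zero (mul_ne_zero n1 n4) n6), h1, h3, h4, h5, h6, h8]
      linear_combination (c ^ 2 - 2) * hc
    rw [← this]
    simp only [zpow_neg, zpow_ofNat]
    ring
  have r2 : (∏ k ∈ Icc 1 8, w k ^ ((tableE7.getD 2 []).getD k 0)) *
      2 ^ ((tableE7.getD 2 []).getD 9 0) = 1 / 12 := by
    rw [e]
    change w 1 ^ (0 : ℤ) * w 2 ^ (0 : ℤ) * w 3 ^ (1 : ℤ) * w 4 ^ (0 : ℤ) * w 5 ^ (0 : ℤ)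
        * w 6 ^ (-1 : ℤ) * w 7 ^ (0 : ℤ) * w 8 ^ (0 : ℤ) * 2 ^ (-2 : ℤ) = _
    have : (w 3 * (1 / 4)) / (w 6) = 1 / 12 := by
      rw [div_eq_iff n6, h3, h6]
      linear_combination 0 * hc
    rw [← this]
    simp only [zpow_neg, zpow_ofNat]
    ring
  have r3 : (∏ k ∈ Icc 1 8, w k ^ ((tableE7.getD 3 []).getD k 0)) *
      2 ^ ((tableE7.getD 3 []).getD 9 0) = -4 / 3 * c ^ 2 + 1 / 3 * c + 49 / 12 := by
    rw [e]
    change w 1 ^ (1 : ℤ) * w 2 ^ (1 : ℤ) * w 3 ^ (1 : ℤ) * w 4 ^ (0 : ℤ) * w 5 ^ (0 : ℤ)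
        * w 6 ^ (-1 : ℤ) * w 7 ^ (-1 : ℤ) * w 8 ^ (-1 : ℤ) * 2 ^ (-2 : ℤ) = _
    have : (w 1 * w 2 * w 3 * (1 / 4)) / (w 6 * w 7 * w 8) = -4 / 3 * c ^ 2 + 1 / 3 * c
        + 49 / 12 := by
      rw [div_eq_iff (mul_ne_zero (mul_ne_zero n6 n7) n8), h1, h2, h3, h6, h7, h8]
      linear_combination (4 * c ^ 2 + 7 * c - 2) * hc
    rw [← this]
    simp only [zpow_neg, zpow_ofNat]
    ring
  have r4 : (∏ k ∈ Icc 1 8, w k ^ ((tableE7.getD 4 []).getD k 0)) *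
      2 ^ ((tableE7.getD 4 []).getD 9 0) = c ^ 2 - 2 * c + 1 / 4 := by
    rw [e]
    change w 1 ^ (0 : ℤ) * w 2 ^ (1 : ℤ) * w 3 ^ (0 : ℤ) * w 4 ^ (1 : ℤ) * w 5 ^ (-1 : ℤ)
        * w 6 ^ (0 : ℤ) * w 7 ^ (-1 : ℤ) * w 8 ^ (0 : ℤ) * 2 ^ (-2 : ℤ) = _
    have : (w 2 * w 4 * (1 / 4)) / (w 5 * w 7) = c ^ 2 - 2 * c + 1 / 4 := by
      rw [div_eq_iff (mul_ne_zero n5 n7), h2, h4, h5, h7]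
      linear_combination (c ^ 3 - 3 * c ^ 2 + c) * hc
    rw [← this]
    simp only [zpow_neg, zpow_ofNat]
    ring
  have r5 : (∏ k ∈ Icc 1 8, w k ^ ((tableE7.getD 5 []).getD k 0)) *
      2 ^ ((tableE7.getD 5 []).getD 9 0) = c ^ 2 - 4 / 3 * c - 7 / 12 := by
    rw [e]
    change w 1 ^ (0 : ℤ) * w 2 ^ (-1 : ℤ) * w 3 ^ (1 : ℤ) * w 4 ^ (1 : ℤ) * w 5 ^ (-1 : ℤ)
        * w 6 ^ (-1 : ℤ) * w 7 ^ (1 : ℤ) * w 8 ^ (0 : ℤ) * 2 ^ (-2 : ℤ) = _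
    have : (w 3 * w 4 * w 7 * (1 / 4)) / (w 2 * w 5 * w 6) = c ^ 2 - 4 / 3 * c - 7 / 12 := by
      rw [div_eq_iff (mul_ne_zero (mul_ne_zero n2 n5) n6), h2, h3, h4, h5, h6, h7]
      linear_combination (-3 * c ^ 3 + 7 * c ^ 2 + 13 * c - 28) * hc
    rw [← this]
    simp only [zpow_neg, zpow_ofNat]
    ring
  have r6 : (∏ k ∈ Icc 1 8, w k ^ ((tableE7.getD 6 []).getD k 0)) *
      2 ^ ((tableE7.getD 6 []).getD 9 0) = c ^ 2 + c + 1 / 4 := by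
    rw [e]
    change w 1 ^ (-1 : ℤ) * w 2 ^ (0 : ℤ) * w 3 ^ (0 : ℤ) * w 4 ^ (1 : ℤ) * w 5 ^ (-1 : ℤ)
        * w 6 ^ (0 : ℤ) * w 7 ^ (0 : ℤ) * w 8 ^ (1 : ℤ) * 2 ^ (-2 : ℤ) = _
    have : (w 4 * w 8 * (1 / 4)) / (w 1 * w 5) = c ^ 2 + c + 1 / 4 := by
      rw [div_eq_iff (mul_ne_zero n1 n5), h1, h4, h5, h8]
      linear_combination (-c ^ 2 + 2 * c + 2) * hc
    rw [← this]
    simp only [zpow_neg, zpow_ofNat]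
    ring
  simp only [sum_range_succ, sum_range_zero, r0, r1, r2, r3, r4, r5, r6]
  ring

/-- The sum over the orbit representatives in type `E₈`, with `w k` standing for
`(1 - η ^ k) * (1 - η⁻¹ ^ k)`: every product is a polynomial in `c = η + η⁻¹`, a root of
`x⁴ + x³ - 4x² - 4x + 1`. -/
lemma sum_E8 {c : ℂ} {w : ℕ → ℂ} (h0 : w 0 = 0) (h1 : w 1 = 2 - c)
    (hw : ∀ k, w (k + 2) = c * w (k + 1) - w k + 4 - 2 * c) (hne : ∀ k, 0 < k → k < 15 → w k ≠ 0)
    (hc : c ^ 4 + c ^ 3 - 4 * c ^ 2 - 4 * c + 1 = 0) :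
    ∑ i ∈ range 8, (∏ k ∈ Icc 1 14, w k ^ ((tableE8.getD i []).getD k 0)) *
      2 ^ ((tableE8.getD i []).getD 15 0) = (8 : ℂ) * (30 + 1) / 12 := by
  have h2 : w 2 = -c ^ 2 + 4 := by
    linear_combination hw 0 + c * h1 - h0
  have h3 : w 3 = -c ^ 3 + 3 * c + 2 := by
    linear_combination hw 1 + c * h2 - h1
  have h4 : w 4 = c ^ 3 - 4 * c + 1 := by
    linear_combination hw 2 + c * h3 - h2 + (-1) * hc
  have h5 : w 5 = 1 := by
    linear_combination hw 3 + c * h4 - h3 + 1 * hc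
  have h6 : w 6 = -c ^ 3 + 3 * c + 3 := by
    linear_combination hw 4 + c * h5 - h4
  have h7 : w 7 = c ^ 3 - c ^ 2 - 3 * c + 4 := by
    linear_combination hw 5 + c * h6 - h5 + (-1) * hc
  have h8 : w 8 = -c ^ 3 + c ^ 2 + 3 * c := by
    linear_combination hw 6 + c * h7 - h6 + 1 * hc
  have h9 : w 9 = c ^ 3 - 3 * c + 1 := by
    linear_combination hw 7 + c * h8 - h7 + (-1) * hc
  have h10 : w 10 = 3 := by
    linear_combination hw 8 + c * h9 - h8 + 1 * hc
  have h11 : w 11 = -c ^ 3 + 4 * c + 3 := by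
    linear_combination hw 9 + c * h10 - h9
  have h12 : w 12 = c ^ 3 - 3 * c + 2 := by
    linear_combination hw 10 + c * h11 - h10 + (-1) * hc
  have h13 : w 13 = c ^ 2 := by
    linear_combination hw 11 + c * h12 - h11 + 1 * hc
  have h14 : w 14 = c + 2 := by
    linear_combination hw 12 + c * h13 - h12
  have n1 := hne 1 (by norm_num) (by norm_num)
  have n2 := hne 2 (by norm_num) (by norm_num)
  have n3 := hne 3 (by norm_num) (by norm_num)
  have n4 := hne 4 (by norm_num) (by norm_num)
  have n5 := hne 5 (by norm_num) (by norm_num)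
  have n6 := hne 6 (by norm_num) (by norm_num)
  have n7 := hne 7 (by norm_num) (by norm_num)
  have n8 := hne 8 (by norm_num) (by norm_num)
  have n9 := hne 9 (by norm_num) (by norm_num)
  have n10 := hne 10 (by norm_num) (by norm_num)
  have n11 := hne 11 (by norm_num) (by norm_num)
  have n12 := hne 12 (by norm_num) (by norm_num)
  have n13 := hne 13 (by norm_num) (by norm_num)
  have n14 := hne 14 (by norm_num) (by norm_num)
  have e : ∀ f : ℕ → ℂ, ∏ k ∈ Icc 1 14, f k =
      f 1 * f 2 * f 3 * f 4 * f 5 * f 6 * f 7 * f 8 * f 9 * f 10 * f 11 * f 12 * f 13 * f 14 := by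
    intro f
    rw [prod_Icc_eq_range]
    simp only [prod_range_succ, prod_range_zero, one_mul, zero_add, Nat.reduceAdd]
  have r0 : (∏ k ∈ Icc 1 14, w k ^ ((tableE8.getD 0 []).getD k 0)) *
      2 ^ ((tableE8.getD 0 []).getD 15 0) = -8 / 15 * c ^ 3 - 17 / 15 * c ^ 2 + 11 / 5 * c
          + 91 / 20 := by
    rw [e]
    change w 1 ^ (-1 : ℤ) * w 2 ^ (1 : ℤ) * w 3 ^ (0 : ℤ) * w 4 ^ (0 : ℤ) * w 5 ^ (1 : ℤ)
        * w 6 ^ (-1 : ℤ) * w 7 ^ (1 : ℤ) * w 8 ^ (-1 : ℤ) * w 9 ^ (1 : ℤ) * w 10 ^ (-1 : ℤ)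
        * w 11 ^ (0 : ℤ) * w 12 ^ (0 : ℤ) * w 13 ^ (-1 : ℤ) * w 14 ^ (1 : ℤ) * 2 ^ (-2 : ℤ) = _
    have : (w 2 * w 5 * w 7 * w 9 * w 14 * (1 / 4)) / (w 1 * w 6 * w 8 * w 10 * w 13) = -8 / 15
        * c ^ 3 - 17 / 15 * c ^ 2 + 11 / 5 * c + 91 / 20 := by
      rw [div_eq_iff (mul_ne_zero (mul_ne_zero (mul_ne_zero (mul_ne_zero n1 n6) n8) n10) n13), h1,
          h2, h5, h6, h7, h8, h9, h10, h13, h14]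
      linear_combination (-8 / 5 * c ^ 8 + 3 * c ^ 7 + 69 / 5 * c ^ 6 - 101 / 5 * c ^ 5 - 193 / 5
          * c ^ 4 + 104 / 5 * c ^ 3 + 55 * c ^ 2 + 6 * c + 8) * hc
    rw [← this]
    simp only [zpow_neg, zpow_ofNat]
    ring
  have r1 : (∏ k ∈ Icc 1 14, w k ^ ((tableE8.getD 1 []).getD k 0)) *
      2 ^ ((tableE8.getD 1 []).getD 15 0) = -1 / 15 * c ^ 3 + 3 / 5 * c ^ 2 + 4 / 3 * c
          + 11 / 20 := by
    rw [e]
    change w 1 ^ (-1 : ℤ) * w 2 ^ (0 : ℤ) * w 3 ^ (1 : ℤ) * w 4 ^ (-1 : ℤ) * w 5 ^ (1 : ℤ)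
        * w 6 ^ (0 : ℤ) * w 7 ^ (-1 : ℤ) * w 8 ^ (1 : ℤ) * w 9 ^ (0 : ℤ) * w 10 ^ (-1 : ℤ)
        * w 11 ^ (1 : ℤ) * w 12 ^ (-1 : ℤ) * w 13 ^ (0 : ℤ) * w 14 ^ (1 : ℤ) * 2 ^ (-2 : ℤ) = _
    have : (w 3 * w 5 * w 8 * w 11 * w 14 * (1 / 4)) / (w 1 * w 4 * w 7 * w 10 * w 12) = -1 / 15
        * c ^ 3 + 3 / 5 * c ^ 2 + 4 / 3 * c + 11 / 20 := by
      rw [div_eq_iff (mul_ne_zero (mul_ne_zero (mul_ne_zero (mul_ne_zero n1 n4) n7) n10) n12), h1,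
          h3, h4, h5, h7, h8, h10, h11, h12, h14]
      linear_combination (-1 / 5 * c ^ 9 + 13 / 5 * c ^ 8 - 16 / 5 * c ^ 7 - 19 * c ^ 6 + 202 / 5
          * c ^ 5 + 108 / 5 * c ^ 4 - 102 * c ^ 3 + 289 / 5 * c ^ 2 + 88 / 5 * c - 132 / 5) * hc
    rw [← this]
    simp only [zpow_neg, zpow_ofNat]
    ring
  have r2 : (∏ k ∈ Icc 1 14, w k ^ ((tableE8.getD 2 []).getD k 0)) *
      2 ^ ((tableE8.getD 2 []).getD 15 0) = -19 / 5 * c ^ 3 + 47 / 15 * c ^ 2 + 142 / 15 * c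
          - 41 / 20 := by
    rw [e]
    change w 1 ^ (0 : ℤ) * w 2 ^ (0 : ℤ) * w 3 ^ (1 : ℤ) * w 4 ^ (0 : ℤ) * w 5 ^ (1 : ℤ)
        * w 6 ^ (0 : ℤ) * w 7 ^ (-1 : ℤ) * w 8 ^ (1 : ℤ) * w 9 ^ (0 : ℤ) * w 10 ^ (-1 : ℤ)
        * w 11 ^ (0 : ℤ) * w 12 ^ (-1 : ℤ) * w 13 ^ (0 : ℤ) * w 14 ^ (0 : ℤ) * 2 ^ (-2 : ℤ) = _
    have : (w 3 * w 5 * w 8 * (1 / 4)) / (w 7 * w 10 * w 12) = -19 / 5 * c ^ 3 + 47 / 15 * c ^ 2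
        + 142 / 15 * c - 41 / 20 := by
      rw [div_eq_iff (mul_ne_zero (mul_ne_zero n7 n10) n12), h3, h5, h7, h8, h10, h12]
      linear_combination (57 / 5 * c ^ 5 - 161 / 5 * c ^ 4 - 48 / 5 * c ^ 3 + 601 / 5 * c ^ 2
          - 698 / 5 * c + 246 / 5) * hc
    rw [← this]
    simp only [zpow_neg, zpow_ofNat]
    ring
  have r3 : (∏ k ∈ Icc 1 14, w k ^ ((tableE8.getD 3 []).getD k 0)) *
      2 ^ ((tableE8.getD 3 []).getD 15 0) = 5 / 3 * c ^ 3 - 3 / 5 * c ^ 2 - 92 / 15 * c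
          + 109 / 60 := by
    rw [e]
    change w 1 ^ (1 : ℤ) * w 2 ^ (1 : ℤ) * w 3 ^ (1 : ℤ) * w 4 ^ (1 : ℤ) * w 5 ^ (1 : ℤ)
        * w 6 ^ (0 : ℤ) * w 7 ^ (0 : ℤ) * w 8 ^ (0 : ℤ) * w 9 ^ (0 : ℤ) * w 10 ^ (-1 : ℤ)
        * w 11 ^ (-1 : ℤ) * w 12 ^ (-1 : ℤ) * w 13 ^ (-1 : ℤ) * w 14 ^ (-1 : ℤ) * 2 ^ (-2 : ℤ) = _
    have : (w 1 * w 2 * w 3 * w 4 * w 5 * (1 / 4)) / (w 10 * w 11 * w 12 * w 13 * w 14) = 5 / 3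
        * c ^ 3 - 3 / 5 * c ^ 2 - 92 / 15 * c + 109 / 60 := by
      rw [div_eq_iff (mul_ne_zero (mul_ne_zero (mul_ne_zero (mul_ne_zero n10 n11) n12) n13) n14),
          h1, h2, h3, h4, h5, h10, h11, h12, h13, h14]
      linear_combination (5 * c ^ 8 + 16 / 5 * c ^ 7 - 201 / 5 * c ^ 6 - 21 * c ^ 5 + 426 / 5
          * c ^ 4 + 72 / 5 * c ^ 3 - 267 / 5 * c ^ 2 + 4 * c + 4) * hc
    rw [← this]
    simp only [zpow_neg, zpow_ofNat]
    ring
  have r4 : (∏ k ∈ Icc 1 14, w k ^ ((tableE8.getD 4 []).getD k 0)) *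
      2 ^ ((tableE8.getD 4 []).getD 15 0) = -13 / 5 * c ^ 3 - 47 / 15 * c ^ 2 + 146 / 15 * c
          + 149 / 12 := by
    rw [e]
    change w 1 ^ (0 : ℤ) * w 2 ^ (1 : ℤ) * w 3 ^ (1 : ℤ) * w 4 ^ (0 : ℤ) * w 5 ^ (1 : ℤ)
        * w 6 ^ (0 : ℤ) * w 7 ^ (0 : ℤ) * w 8 ^ (0 : ℤ) * w 9 ^ (0 : ℤ) * w 10 ^ (-1 : ℤ)
        * w 11 ^ (0 : ℤ) * w 12 ^ (-1 : ℤ) * w 13 ^ (-1 : ℤ) * w 14 ^ (0 : ℤ) * 2 ^ (-2 : ℤ) = _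
    have : (w 2 * w 3 * w 5 * (1 / 4)) / (w 10 * w 12 * w 13) = -13 / 5 * c ^ 3 - 47 / 15 * c ^ 2
        + 146 / 15 * c + 149 / 12 := by
      rw [div_eq_iff (mul_ne_zero (mul_ne_zero n10 n12) n13), h2, h3, h5, h10, h12, h13]
      linear_combination (39 / 5 * c ^ 4 + 8 / 5 * c ^ 3 - 23 * c ^ 2 + 11 * c + 2) * hc
    rw [← this]
    simp only [zpow_neg, zpow_ofNat]
    ring
  have r5 : (∏ k ∈ Icc 1 14, w k ^ ((tableE8.getD 5 []).getD k 0)) *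
      2 ^ ((tableE8.getD 5 []).getD 15 0) = 86 / 15 * c ^ 3 - 29 / 15 * c ^ 2 - 61 / 3 * c
          + 257 / 60 := by
    rw [e]
    change w 1 ^ (0 : ℤ) * w 2 ^ (0 : ℤ) * w 3 ^ (0 : ℤ) * w 4 ^ (1 : ℤ) * w 5 ^ (1 : ℤ)
        * w 6 ^ (-1 : ℤ) * w 7 ^ (0 : ℤ) * w 8 ^ (0 : ℤ) * w 9 ^ (1 : ℤ) * w 10 ^ (-1 : ℤ)
        * w 11 ^ (-1 : ℤ) * w 12 ^ (0 : ℤ) * w 13 ^ (0 : ℤ) * w 14 ^ (0 : ℤ) * 2 ^ (-2 : ℤ) = _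
    have : (w 4 * w 5 * w 9 * (1 / 4)) / (w 6 * w 10 * w 11) = 86 / 15 * c ^ 3 - 29 / 15 * c ^ 2
        - 61 / 3 * c + 257 / 60 := by
      rw [div_eq_iff (mul_ne_zero (mul_ne_zero n6 n10) n11), h4, h5, h6, h9, h10, h11]
      linear_combination (-86 / 5 * c ^ 5 + 23 * c ^ 4 + 448 / 5 * c ^ 3 - 82 / 5 * c ^ 2 - 921 / 5
          * c - 577 / 5) * hc
    rw [← this]
    simp only [zpow_neg, zpow_ofNat]
    ring
  have r6 : (∏ k ∈ Icc 1 14, w k ^ ((tableE8.getD 6 []).getD k 0)) *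
      2 ^ ((tableE8.getD 6 []).getD 15 0) = -16 / 15 * c ^ 3 + 17 / 15 * c ^ 2 + 13 / 5 * c
          - 7 / 12 := by
    rw [e]
    change w 1 ^ (0 : ℤ) * w 2 ^ (-1 : ℤ) * w 3 ^ (0 : ℤ) * w 4 ^ (1 : ℤ) * w 5 ^ (1 : ℤ)
        * w 6 ^ (-1 : ℤ) * w 7 ^ (-1 : ℤ) * w 8 ^ (1 : ℤ) * w 9 ^ (1 : ℤ) * w 10 ^ (-1 : ℤ)
        * w 11 ^ (-1 : ℤ) * w 12 ^ (0 : ℤ) * w 13 ^ (1 : ℤ) * w 14 ^ (0 : ℤ) * 2 ^ (-2 : ℤ) = _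
    have : (w 4 * w 5 * w 8 * w 9 * w 13 * (1 / 4)) / (w 2 * w 6 * w 7 * w 10 * w 11) = -16 / 15
        * c ^ 3 + 17 / 15 * c ^ 2 + 13 / 5 * c - 7 / 12 := by
      rw [div_eq_iff (mul_ne_zero (mul_ne_zero (mul_ne_zero (mul_ne_zero n2 n6) n7) n10) n11), h2,
          h4, h5, h6, h7, h8, h9, h10, h11, h13]
      linear_combination (-16 / 5 * c ^ 10 + 49 / 5 * c ^ 9 + 133 / 5 * c ^ 8 - 432 / 5 * c ^ 7
          - 471 / 5 * c ^ 6 + 1391 / 5 * c ^ 5 + 1146 / 5 * c ^ 4 - 2139 / 5 * c ^ 3 - 1779 / 5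
          * c ^ 2 + 1419 / 5 * c + 252) * hc
    rw [← this]
    simp only [zpow_neg, zpow_ofNat]
    ring
  have r7 : (∏ k ∈ Icc 1 14, w k ^ ((tableE8.getD 7 []).getD k 0)) *
      2 ^ ((tableE8.getD 7 []).getD 15 0) = 2 / 3 * c ^ 3 + 29 / 15 * c ^ 2 + 17 / 15 * c
          - 19 / 60 := by
    rw [e]
    change w 1 ^ (-1 : ℤ) * w 2 ^ (0 : ℤ) * w 3 ^ (0 : ℤ) * w 4 ^ (0 : ℤ) * w 5 ^ (1 : ℤ)
        * w 6 ^ (-1 : ℤ) * w 7 ^ (0 : ℤ) * w 8 ^ (0 : ℤ) * w 9 ^ (1 : ℤ) * w 10 ^ (-1 : ℤ)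
        * w 11 ^ (0 : ℤ) * w 12 ^ (0 : ℤ) * w 13 ^ (0 : ℤ) * w 14 ^ (1 : ℤ) * 2 ^ (-2 : ℤ) = _
    have : (w 5 * w 9 * w 14 * (1 / 4)) / (w 1 * w 6 * w 10) = 2 / 3 * c ^ 3 + 29 / 15 * c ^ 2
        + 17 / 15 * c - 19 / 60 := by
      rw [div_eq_iff (mul_ne_zero (mul_ne_zero n1 n6) n10), h1, h5, h6, h9, h10, h14]
      linear_combination (-2 * c ^ 3 + 1 / 5 * c ^ 2 + 6 * c + 31 / 5) * hc
    rw [← this]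
    simp only [zpow_neg, zpow_ofNat]
    ring
  simp only [sum_range_succ, sum_range_zero, r0, r1, r2, r3, r4, r5, r6, r7]
  ring

lemma pow_eq_neg_one {q : ℕ} (hq : 0 < q) {z : ℂ} (hz : IsPrimitiveRoot z (2 * q)) :
    z ^ q = -1 := by
  have h1 : z ^ q * z ^ q = 1 := by rw [← pow_add, ← two_mul, hz.pow_eq_one]
  rcases mul_self_eq_one_iff.mp h1 with h2 | h2
  · exact absurd h2 (hz.pow_ne_one_of_pos_of_lt hq.ne' (by omega))
  · exact h2

/-- Folding the product over nontrivial `2q`-th roots of unity: the factors at `k` and `2q - k`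
carry the same exponent, and the factor at `q` is `1 - (-1) = 2`. -/
lemma prod_fold {q : ℕ} (hq : 0 < q) {z y : ℂ} (hz : IsPrimitiveRoot z (2 * q)) (hzy : z * y = 1)
    (g : ℕ → ℤ) :
    ∏ k ∈ Icc 1 (2 * q - 1), ((1 : ℂ) - z ^ k) ^ g (min k (2 * q - k)) =
      (∏ k ∈ Icc 1 (q - 1), ((1 - z ^ k) * (1 - y ^ k)) ^ g k) * 2 ^ g q := by
  have hzq := pow_eq_neg_one hq hz
  have hy : ∀ k ≤ 2 * q, z ^ (2 * q - k) = y ^ k := fun k hk => by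
    have h1 : z ^ (2 * q - k) * z ^ k = 1 := by
      rw [← pow_add, Nat.sub_add_cancel hk, hz.pow_eq_one]
    calc z ^ (2 * q - k) = z ^ (2 * q - k) * (z * y) ^ k := by rw [hzy, one_pow, mul_one]
      _ = (z ^ (2 * q - k) * z ^ k) * y ^ k := by rw [mul_pow]; ring
      _ = y ^ k := by rw [h1, one_mul]
  set f : ℕ → ℂ := fun k => ((1 : ℂ) - z ^ k) ^ g (min k (2 * q - k)) with hf
  have hI : ∀ a, 0 < a → Icc 1 (a - 1) = Ico 1 a := fun a ha => by ext x; simp; omega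
  rw [hI _ hq, hI _ (by omega), ← prod_Ico_consecutive f (show 1 ≤ q by omega) (by omega),
    prod_eq_prod_Ico_succ_bot (show q < 2 * q by omega)]
  have h2 : ∏ k ∈ Ico (q + 1) (2 * q), f k = ∏ k ∈ Ico 1 q, f (2 * q - k) := by
    rw [prod_Ico_reflect f 1 (by omega)]
    congr 2
    omega
  have h3 : f q = 2 ^ g q := by
    simp only [hf, hzq]
    rw [show min q (2 * q - q) = q by omega]
    norm_num
  rw [h2, h3, mul_left_comm, ← prod_mul_distrib, mul_comm]
  congr 1
  refine prod_congr rfl fun k hk => ?_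
  rw [mem_Ico] at hk
  simp only [hf]
  rw [show min k (2 * q - k) = k by omega, show min (2 * q - k) (2 * q - (2 * q - k)) = k by omega,
    hy k (by omega), mul_zpow]

/-- The evaluation of the sum over orbit representatives, reduced to a statement about the numbers
`w k = (1 - z ^ k) * (1 - z⁻¹ ^ k) = 2 - (z ^ k + z⁻¹ ^ k)`, which satisfy a recurrence with
parameter `c = z + z⁻¹`. -/
lemma sum_fold {q N : ℕ} (hq : 0 < q) (T : List (List ℤ)) {P : ℂ → Prop} {S : ℂ}
    (hP : ∀ z y : ℂ, IsPrimitiveRoot z (2 * q) → z * y = 1 → P (z + y))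
    (hS : ∀ (c : ℂ) (w : ℕ → ℂ), w 0 = 0 → w 1 = 2 - c →
      (∀ k, w (k + 2) = c * w (k + 1) - w k + 4 - 2 * c) → (∀ k, 0 < k → k < q → w k ≠ 0) → P c →
      ∑ i ∈ range N, (∏ k ∈ Icc 1 (q - 1), w k ^ ((T.getD i []).getD k 0)) *
        2 ^ ((T.getD i []).getD q 0) = S) :
    ∑ i ∈ range N, ∏ k ∈ Finset.Icc 1 (2 * q - 1),
      ((1 : ℂ) - Complex.exp (2 * Real.pi * Complex.I / (2 * q : ℕ)) ^ k) ^
        ((T.getD i []).getD (min k (2 * q - k)) 0) = S := by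
  have hz := Complex.isPrimitiveRoot_exp (2 * q) (by omega)
  set z := Complex.exp (2 * Real.pi * Complex.I / (2 * q : ℕ)) with hzd
  have hz0 : z ≠ 0 := hz.ne_zero (by omega)
  have hzy : z * z⁻¹ = 1 := mul_inv_cancel₀ hz0
  have hzy' : ∀ k, z ^ k * z⁻¹ ^ k = 1 := fun k => by rw [← mul_pow, hzy, one_pow]
  rw [← hS (z + z⁻¹) (fun k => (1 - z ^ k) * (1 - z⁻¹ ^ k)) (by simp)
    (by linear_combination hzy) (fun k => ?_) (fun k h0 hk => ?_) (hP z z⁻¹ hz hzy)]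
  · exact sum_congr rfl fun i _ => prod_fold hq hz hzy fun k => (T.getD i []).getD k 0
  · linear_combination hzy' (k + 2) - (z + z⁻¹) * hzy' (k + 1) + hzy' k
      + (z ^ k + z⁻¹ ^ k) * hzy
  · have h1 : z ^ k ≠ 1 := hz.pow_ne_one_of_pos_of_lt h0.ne' (by omega)
    refine mul_ne_zero (sub_ne_zero.mpr h1.symm) (sub_ne_zero.mpr fun h2 => h1 ?_)
    rw [inv_pow] at h2
    exact inv_eq_one.mp h2.symm

/-- For a primitive `12`-th root of unity `z`, the number `z + z⁻¹` is a square root of `3`. -/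
lemma trace_E6 (z y : ℂ) (hz : IsPrimitiveRoot z (2 * 6)) (hzy : z * y = 1) :
    (z + y) ^ 2 - 3 = 0 := by
  have h1 := pow_eq_neg_one (by norm_num) hz
  have h2 : z ^ 2 + 1 ≠ 0 := fun h => hz.pow_ne_one_of_pos_of_lt (l := 4) (by norm_num)
    (by norm_num) (by linear_combination (z ^ 2 - 1) * h)
  have h3 : z ^ 4 - z ^ 2 + 1 = 0 :=
    (mul_eq_zero.mp (show (z ^ 2 + 1) * (z ^ 4 - z ^ 2 + 1) = 0 by
      linear_combination h1)).resolve_left h2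
  have h4 : z ^ 2 * ((z + y) ^ 2 - 3) = 0 := by
    linear_combination h3 + (2 * z ^ 2 + z * y + 1) * hzy
  exact (mul_eq_zero.mp h4).resolve_left (pow_ne_zero _ (left_ne_zero_of_mul_eq_one hzy))

/-- For a primitive `18`-th root of unity `z`, the number `z + z⁻¹` is a root of `x³ - 3x - 1`. -/
lemma trace_E7 (z y : ℂ) (hz : IsPrimitiveRoot z (2 * 9)) (hzy : z * y = 1) :
    (z + y) ^ 3 - 3 * (z + y) - 1 = 0 := by
  have h1 := pow_eq_neg_one (by norm_num) hz
  have h2 : z ^ 3 + 1 ≠ 0 := fun h => hz.pow_ne_one_of_pos_of_lt (l := 6) (by norm_num)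
    (by norm_num) (by linear_combination (z ^ 3 - 1) * h)
  have h3 : z ^ 6 - z ^ 3 + 1 = 0 :=
    (mul_eq_zero.mp (show (z ^ 3 + 1) * (z ^ 6 - z ^ 3 + 1) = 0 by
      linear_combination h1)).resolve_left h2
  have h5 : (z + y) ^ 3 - 3 * (z + y) = z ^ 3 + y ^ 3 := by
    linear_combination (3 * z + 3 * y) * hzy
  have h6 : z ^ 3 * y ^ 3 = 1 := by rw [← mul_pow, hzy, one_pow]
  have h4 : z ^ 3 * ((z + y) ^ 3 - 3 * (z + y) - 1) = 0 := by
    linear_combination z ^ 3 * h5 + h3 + h6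
  exact (mul_eq_zero.mp h4).resolve_left (pow_ne_zero _ (left_ne_zero_of_mul_eq_one hzy))

/-- For a primitive `30`-th root of unity `z`, the number `z + z⁻¹` is a root of
`x⁴ + x³ - 4x² - 4x + 1`. -/
lemma trace_E8 (z y : ℂ) (hz : IsPrimitiveRoot z (2 * 15)) (hzy : z * y = 1) :
    (z + y) ^ 4 + (z + y) ^ 3 - 4 * (z + y) ^ 2 - 4 * (z + y) + 1 = 0 := by
  have h1 := pow_eq_neg_one (by norm_num) hz
  have h2 : z ^ 5 + 1 ≠ 0 := fun h => hz.pow_ne_one_of_pos_of_lt (l := 10) (by norm_num)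
    (by norm_num) (by linear_combination (z ^ 5 - 1) * h)
  have h2' : z ^ 2 - z + 1 ≠ 0 := fun h => hz.pow_ne_one_of_pos_of_lt (l := 6) (by norm_num)
    (by norm_num) (by linear_combination (z ^ 3 - 1) * (z + 1) * h)
  -- the cyclotomic polynomial of order `30` is `(x¹⁵ + 1) / ((x⁵ + 1) * (x² - x + 1))`
  have h3 : z ^ 8 + z ^ 7 - z ^ 5 - z ^ 4 - z ^ 3 + z + 1 = 0 :=
    (mul_eq_zero.mp (show ((z ^ 5 + 1) * (z ^ 2 - z + 1)) *
      (z ^ 8 + z ^ 7 - z ^ 5 - z ^ 4 - z ^ 3 + z + 1) = 0 by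
      linear_combination h1)).resolve_left (mul_ne_zero h2 h2')
  have h5 : (z + y) ^ 4 + (z + y) ^ 3 - 4 * (z + y) ^ 2 - 4 * (z + y) + 1 =
      z ^ 4 + y ^ 4 + z ^ 3 + y ^ 3 - z - y - 1 := by
    linear_combination (4 * z ^ 2 + 4 * y ^ 2 + 6 * (z * y + 1) - 8 + 3 * (z + y)) * hzy
  have hk : ∀ k, z ^ k * y ^ k = 1 := fun k => by rw [← mul_pow, hzy, one_pow]
  have h4 : z ^ 4 * ((z + y) ^ 4 + (z + y) ^ 3 - 4 * (z + y) ^ 2 - 4 * (z + y) + 1) = 0 := by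
    linear_combination z ^ 4 * h5 + h3 + hk 4 + z * hk 3 - z ^ 3 * hzy
  exact (mul_eq_zero.mp h4).resolve_left (pow_ne_zero _ (left_ne_zero_of_mul_eq_one hzy))

section

variable [DecidableEq V] [FiniteDimensional ℝ V] {Φ Δ : Finset V} {w : ℕ → V}

lemma kwSum_E6 (R : IsRootBase Φ Δ)
    (hw : ∀ i < 6, ∀ j < 6, ⟪w i, w j⟫ = ((treeGram 2 i j : ℤ) : ℝ))
    (hnd : (pathWord w 6).Nodup) (hmem : ∀ y, y ∈ pathWord w 6 ↔ y ∈ Δ) :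
    KWSum Φ 6 ((pathWord w 6).map rootReflection).prod := by
  refine kwSum_typeE R (by norm_num) (by norm_num) hw hnd hmem (H := 12) (by norm_num) tableE6
    checkAll_E6 (by decide) ?_
  exact sum_fold (q := 6) (by norm_num) tableE6 (P := fun c => c ^ 2 - 3 = 0) trace_E6
    fun c w h0 h1 hr hne hc => by
      push_cast
      exact sum_E6 h0 h1 hr hne hc

lemma kwSum_E7 (R : IsRootBase Φ Δ)
    (hw : ∀ i < 7, ∀ j < 7, ⟪w i, w j⟫ = ((treeGram 2 i j : ℤ) : ℝ))
    (hnd : (pathWord w 7).Nodup) (hmem : ∀ y, y ∈ pathWord w 7 ↔ y ∈ Δ) :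
    KWSum Φ 7 ((pathWord w 7).map rootReflection).prod := by
  refine kwSum_typeE R (by norm_num) (by norm_num) hw hnd hmem (H := 18) (by norm_num) tableE7
    checkAll_E7 (by decide) ?_
  exact sum_fold (q := 9) (by norm_num) tableE7 (P := fun c => c ^ 3 - 3 * c - 1 = 0) trace_E7
    fun c w h0 h1 hr hne hc => by
      push_cast
      exact sum_E7 h0 h1 hr hne hc

lemma kwSum_E8 (R : IsRootBase Φ Δ)
    (hw : ∀ i < 8, ∀ j < 8, ⟪w i, w j⟫ = ((treeGram 2 i j : ℤ) : ℝ))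
    (hnd : (pathWord w 8).Nodup) (hmem : ∀ y, y ∈ pathWord w 8 ↔ y ∈ Δ) :
    KWSum Φ 8 ((pathWord w 8).map rootReflection).prod := by
  refine kwSum_typeE R (by norm_num) (by norm_num) hw hnd hmem (H := 30) (by norm_num) tableE8
    checkAll_E8 (by decide) ?_
  exact sum_fold (q := 15) (by norm_num) tableE8
    (P := fun c => c ^ 4 + c ^ 3 - 4 * c ^ 2 - 4 * c + 1 = 0) trace_E8
    fun c w h0 h1 hr hne hc => by
      push_cast
      exact sum_E8 h0 h1 hr hne hc

end

/-! ### The general Coxeter element -/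

lemma nodup_pathWord {p : ℕ → V} {m : ℕ} (h : ∀ i < m, ∀ j < m, p i = p j → i = j) :
    (pathWord p m).Nodup :=
  List.Nodup.map_on (fun i hi j hj hij => h i (List.mem_range.1 hi) j (List.mem_range.1 hj) hij)
    List.nodup_range

lemma pathWord_succ' (p : ℕ → V) (m : ℕ) :
    pathWord p (m + 1) = p 0 :: pathWord (fun i => p (i + 1)) m := by
  simp [pathWord, List.range_succ_eq_map, Function.comp_def]

lemma isForestWord_pathWord {p : ℕ → V} {m : ℕ}
    (h : ∀ i < m, ∀ j < m, i + 1 < j → ⟪p i, p j⟫ = (0 : ℝ)) : IsForestWord (pathWord p m) := by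
  induction m generalizing p with
  | zero => trivial
  | succ m ih =>
    rw [pathWord_succ']
    refine ⟨⟨p 1, fun x hx hne => ?_⟩, ih fun i hi j hj hij => h _ (by omega) _ (by omega) (by omega)⟩
    obtain ⟨i, hi, rfl⟩ := mem_pathWord.1 hx
    refine h 0 (by omega) _ (by omega) ?_
    rcases i with _ | i
    · exact absurd rfl hne
    · omega

section

variable [DecidableEq V] [FiniteDimensional ℝ V] {Φ Δ : Finset V}

lemma IsPath.isForestWord {p : ℕ → V} {m : ℕ} (hp : IsPath Δ p m) :
    IsForestWord (pathWord p m) :=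
  isForestWord_pathWord fun i hi j hj hij => by
    rw [hp.inner i hi j hj, if_neg (by omega), if_neg (by omega)]

/-- Every Coxeter element of a nonempty irreducible simply-laced root system has the asserted
sum: it may be replaced by the Coxeter element of a word adapted to the Dynkin diagram. -/
lemma IsRootBase.kwSum (R : IsRootBase Φ Δ) (hne : Δ.Nonempty) (l : List V) (hnd : l.Nodup)
    (hl : l.toFinset = Δ) : KWSum Φ Δ.card (l.map rootReflection).prod := by
  have key : ∀ r : List V, IsForestWord r → r.Nodup → (∀ y, y ∈ r ↔ y ∈ Δ) →
      KWSum Φ r.length (r.map rootReflection).prod →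
      KWSum Φ Δ.card (l.map rootReflection).prod := by
    intro r hr hrnd hrm hk
    have hp : l.Perm r := by
      rw [List.perm_ext_iff_of_nodup hnd hrnd]
      intro y
      rw [hrm, ← hl, List.mem_toFinset]
    have hcard : Δ.card = r.length := by
      rw [← hl, List.toFinset_card_of_nodup hnd, hp.length_eq]
    rw [hcard]
    exact ((hr.coxEq hrnd hp).kwSum_iff R fun x hx => by
      rw [← hl, List.mem_toFinset]; exact hx).2 hk
  obtain ⟨p, m, hm, hp, hΔ | ⟨v, t, hv, hvp, hΔ, hvi, ht⟩⟩ := R.classification hne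
  · refine key (pathWord p m) hp.isForestWord (nodup_pathWord fun i hi j hj => hp.injOn hi hj)
      (fun y => by rw [hΔ, mem_pathWord]; simp) ?_
    have h1 : (pathWord p m).length = m := by simp [pathWord]
    rw [h1]
    exact kwSum_typeA R hm hp hΔ
  · have hmem : ∀ y, y ∈ v :: pathWord p m ↔ y ∈ Δ := fun y => by
      rw [hΔ, List.mem_cons, mem_pathWord]; simp
    have hnd' : (v :: pathWord p m).Nodup := by
      refine List.nodup_cons.2 ⟨fun h => ?_, nodup_pathWord fun i hi j hj => hp.injOn hi hj⟩
      obtain ⟨i, hi, h⟩ := mem_pathWord.1 h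
      exact hvp i hi h.symm
    have hfor : IsForestWord (v :: pathWord p m) := by
      refine ⟨⟨p t, fun x hx hne => ?_⟩, hp.isForestWord⟩
      obtain ⟨i, hi, rfl⟩ := mem_pathWord.1 hx
      rw [hvi i hi, if_neg fun h => hne (by rw [h])]
    refine key _ hfor hnd' hmem ?_
    have h1 : (v :: pathWord p m).length = m + 1 := by simp [pathWord]
    rw [h1]
    rcases ht with ⟨rfl, hm3⟩ | ⟨rfl, hm⟩
    · exact kwSum_typeD R hm3 hp hv hvp hΔ hvi
    · have h2 : v :: pathWord p m = pathWord (treeVec v p) (m + 1) := by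
        rw [pathWord_succ']
        rfl
      have hw := hp.tree_inner (R.norm_Δ hv) hvi
      rw [h2] at hnd' hmem ⊢
      rcases hm with rfl | rfl | rfl
      · exact kwSum_E6 R hw hnd' hmem
      · exact kwSum_E7 R hw hnd' hmem
      · exact kwSum_E8 R hw hnd' hmem

end

/-- **Sum of the Kac–Wakimoto coefficients over the root system (formula (1.4) and
the first hierarchy equation).**  Let `Φ` be an irreducible, reduced,
crystallographic, simply-laced root system spanning an `N`-dimensional real inner
product space, normalized so `(α|α) = 2`; let `M` be a Coxeter element (a product
of the simple reflections of a base `Δ`, each occurring exactly once), `h` its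
order and `η = exp(2πi/h)`.  Then
`∑_{α ∈ Φ} ∏_{k=1}^{h-1} (1-η^k)^{(α|M^k α)} = N·h·(h+1)/12`. -/
theorem sum_kw_coefficients
    [DecidableEq V] [FiniteDimensional ℝ V] (N : ℕ) (hdim : Module.finrank ℝ V = N)
    (Φ : Finset V)
    (hspan : Submodule.span ℝ (Φ : Set V) = ⊤)
    (hzero : (0 : V) ∉ Φ)
    (hnorm : ∀ α ∈ Φ, ⟪α, α⟫ = (2 : ℝ))
    (hcrys : ∀ α ∈ Φ, ∀ β ∈ Φ, ∃ n : ℤ, ⟪α, β⟫ = (n : ℝ))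
    (hrefl : ∀ α ∈ Φ, ∀ β ∈ Φ, rootReflection α β ∈ Φ)
    (hred : ∀ α ∈ Φ, ∀ t : ℝ, t • α ∈ Φ → t = 1 ∨ t = -1)
    (hirr : ∀ Φ₁ Φ₂ : Finset V, Φ₁ ∪ Φ₂ = Φ →
      (∀ α ∈ Φ₁, ∀ β ∈ Φ₂, ⟪α, β⟫ = (0 : ℝ)) → Φ₁ = ∅ ∨ Φ₂ = ∅)
    -- a base of `Φ`:
    (Δ : Finset V) (hΔΦ : Δ ⊆ Φ)
    (hΔind : LinearIndependent ℝ (fun x : (Δ : Set V) => (x : V)))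
    (hΔspan : Submodule.span ℝ (Δ : Set V) = ⊤)
    (hbase : ∀ α ∈ Φ, ∃ c : V → ℤ,
      α = ∑ δ ∈ Δ, (c δ : ℝ) • δ ∧ ((∀ δ ∈ Δ, 0 ≤ c δ) ∨ (∀ δ ∈ Δ, c δ ≤ 0)))
    -- the Coxeter element `M`, its order `h`, and `η = exp(2πi/h)`:
    (M : V →ₗ[ℝ] V) (l : List V) (hlnd : l.Nodup) (hlΔ : l.toFinset = Δ)
    (hM : M = (l.map rootReflection).prod)
    (h : ℕ) (hh : h = orderOf M)
    (η : ℂ) (hη : η = Complex.exp (2 * Real.pi * Complex.I / h))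
    -- the integer exponents `(α | M^k α)`:
    (n : V → ℕ → ℤ) (hn : ∀ α ∈ Φ, ∀ k : ℕ, (n α k : ℝ) = ⟪α, (M ^ k) α⟫) :
    ∑ α ∈ Φ, ∏ k ∈ Finset.Icc 1 (h - 1), ((1 : ℂ) - η ^ k) ^ (n α k)
      = (N : ℂ) * h * (h + 1) / 12 := by
  have R : IsRootBase Φ Δ := ⟨hnorm, hcrys, hrefl, hirr, hΔΦ, hΔind, hΔspan, hbase⟩
  have hN : Δ.card = N := by
    have h1 := finrank_span_set_eq_card (s := (Δ : Set V)) hΔind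
    rw [hΔspan, finrank_top, hdim] at h1
    simpa using h1.symm
  subst hM hh hη
  rcases Δ.eq_empty_or_nonempty with h0 | hne
  · -- an empty base spans only the zero space, in which there are no roots
    have hΦ : Φ = ∅ := by
      refine Finset.eq_empty_of_forall_notMem fun α hα => hzero ?_
      have h1 : α ∈ Submodule.span ℝ (Δ : Set V) := hΔspan ▸ Submodule.mem_top
      rw [h0, coe_empty, Submodule.span_empty, Submodule.mem_bot] at h1
      exact h1 ▸ hα
    rw [← hN, h0, hΦ]
    simp
  · rw [← hN]
    exact R.kwSum hne l hlnd hlΔ n hn
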